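/- arXiv:1907.02710 — 3 statements merged into one kernel-verified Lean document; each statement's English description precedes it below -/
import Mathlib

section
/- Let θ = 1, α > 0, t₀ > 0 and 1 ≤ γ ≤ 2. Let x : [t₀, ∞) → ℝⁿ be a solution of the perturbed inertial ODE with damping α/t. Assume that ∫_{t₀}^∞ t^{γα/(γ+2)} ‖g(t)‖ dt < ∞, that F satisfies hypotheses H1(γ) and H2(2), that F has a unique minimizer, and that α > 1 + 2/γ. Then there exist C > 0 and t₁ ≥ t₀ such that for all t ≥ t₁, F(x(t)) − F* ≤ C · t^{−2γα/(γ+2)}. -/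
open MeasureTheory
open scoped RealInnerProductSpace

/-!
The mechanical energy `W + ‖x'‖² / 2`, with `W = F(x) - F*`, decreases up to an integrable error, so
it converges, and by convexity the trajectory stays bounded. Its limit is zero: the derivative of
the virial `⟪x - x*, x'⟫ / t`, suitably corrected, is at most minus the energy over `t` up to an
integrable error, while `1 / t` is not integrable. Hence `x → x*`, and the local hypotheses apply
from some time on.

Split `α = p + l` with `p = γα / (γ + 2)` and `l = 2α / (γ + 2)`, so that the flatness hypothesis
reads `2pW ≤ l⟪∇F(x), x - x*⟫`. Multiplied by `t ^ (2(p - 1))`, the Lyapunov function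
`t²W + ‖l(x - x*) + t x'‖² / 2 + l(1 - p) / 2 * ‖x - x*‖²` has derivative at most a forcing term
plus a multiple of `t ^ (2p - 3) * ‖x - x*‖²`. Quadratic growth makes the latter `O(t⁻³)` relative
to the weighted function, so Grönwall's inequality bounds that function, which dominates
`t ^ (2p) * W / 2`.
-/

section AsymptoticCalculus

open Filter Topology Set Asymptotics

variable {f k : ℝ → ℝ}

theorem eventually_antitoneOn_Ici_of_deriv_nonpos
    (hf : ∀ᶠ t in atTop, ∃ d ≤ 0, HasDerivAt f d t) :
    ∀ᶠ T in atTop, AntitoneOn f (Ici T) := by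
  filter_upwards [eventually_forall_ge_atTop.mpr hf] with T hT
  choose! f' hf'_le hf' using hT
  refine antitoneOn_of_hasDerivWithinAt_nonpos (f' := f') (convex_Ici T)
    (fun t ht ↦ (hf' t ht).continuousAt.continuousWithinAt) ?_ ?_ <;> rw [interior_Ici]
  · exact fun t ht ↦ (hf' t ht.le).hasDerivWithinAt
  · exact fun t ht ↦ hf'_le t ht.le

theorem eventually_hasDerivAt_integral_Ioi (hk : ∀ᶠ t in atTop, ContinuousAt k t)
    (hki : IntegrableAtFilter k atTop) :
    ∀ᶠ t in atTop, HasDerivAt (fun s ↦ ∫ r in Ioi s, k r) (-k t) t := by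
  obtain ⟨a, ha⟩ := integrableAtFilter_atTop_iff.mp hki
  obtain ⟨b, hb⟩ := eventually_atTop.mp hk
  have hint : IntegrableOn k (Ioi a) := ha.mono_set Ioi_subset_Ici_self
  filter_upwards [eventually_gt_atTop a, eventually_gt_atTop b] with t hat hbt
  have hmeas : StronglyMeasurableAtFilter k (𝓝 t) :=
    ContinuousAt.stronglyMeasurableAtFilter isOpen_Ioi (fun s hs ↦ hb s (le_of_lt hs)) t hbt
  have hprim : HasDerivAt (fun s ↦ ∫ r in a..s, k r) (k t) t :=
    intervalIntegral.integral_hasDerivAt_right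
      ((intervalIntegrable_iff_integrableOn_Ioc_of_le hat.le).mpr
        (hint.mono_set Ioc_subset_Ioi_self)) hmeas (hb t hbt.le)
  refine (hprim.const_sub (∫ r in Ioi a, k r)).congr_of_eventuallyEq ?_
  filter_upwards [Ioi_mem_nhds hat] with s hs
  rw [eq_sub_iff_add_eq', intervalIntegral.integral_interval_add_Ioi hint
    (hint.mono_set (Ioi_subset_Ioi (le_of_lt hs)))]

-- Grönwall's inequality: `f t * exp (∫ r in Ioi t, k r)` is eventually antitone.
theorem isBoundedUnder_le_of_deriv_le_mul (hk : ∀ᶠ t in atTop, ContinuousAt k t)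
    (hki : IntegrableAtFilter k atTop)
    (hf : ∀ᶠ t in atTop, ∃ d ≤ k t * f t, HasDerivAt f d t) :
    IsBoundedUnder (· ≤ ·) atTop f := by
  set Q : ℝ → ℝ := fun s ↦ ∫ r in Ioi s, k r
  have hanti : ∀ᶠ T in atTop, AntitoneOn (fun t ↦ f t * Real.exp (Q t)) (Ici T) := by
    refine eventually_antitoneOn_Ici_of_deriv_nonpos ?_
    filter_upwards [hf, eventually_hasDerivAt_integral_Ioi hk hki] with t ⟨d, hd, hft⟩ hQt
    refine ⟨_, ?_, hft.mul hQt.exp⟩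
    nlinarith [mul_nonneg (sub_nonneg.mpr hd) (Real.exp_pos (Q t)).le]
  obtain ⟨T, hT⟩ := hanti.exists
  have hQ : Tendsto Q atTop (𝓝 0) := tendsto_integral_Ioi_zero tendsto_id
  have hlim : Tendsto (fun t ↦ f T * Real.exp (Q T) * Real.exp (-Q t)) atTop
      (𝓝 (f T * Real.exp (Q T) * Real.exp (-0))) :=
    (Real.continuous_exp.tendsto _ |>.comp hQ.neg).const_mul _
  refine hlim.isBoundedUnder_le.mono_le ?_
  filter_upwards [eventually_ge_atTop T] with t ht
  calc f t = f t * Real.exp (Q t) * Real.exp (-Q t) := by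
        rw [mul_assoc, ← Real.exp_add, add_neg_cancel, Real.exp_zero, mul_one]
    _ ≤ f T * Real.exp (Q T) * Real.exp (-Q t) :=
        mul_le_mul_of_nonneg_right (hT self_mem_Ici ht ht) (Real.exp_pos _).le

theorem eventually_antitoneOn_add_integral_Ioi (hk : ∀ᶠ t in atTop, ContinuousAt k t)
    (hki : IntegrableAtFilter k atTop) (hf : ∀ᶠ t in atTop, ∃ d ≤ k t, HasDerivAt f d t) :
    ∀ᶠ T in atTop, AntitoneOn (fun t ↦ f t + ∫ r in Ioi t, k r) (Ici T) := by
  refine eventually_antitoneOn_Ici_of_deriv_nonpos ?_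
  filter_upwards [hf, eventually_hasDerivAt_integral_Ioi hk hki] with t ⟨d, hd, hft⟩ hQt
  exact ⟨d + -k t, by linarith, hft.add hQt⟩

theorem tendsto_zero_of_deriv_le_of_frequently_lt (hk : ∀ᶠ t in atTop, ContinuousAt k t)
    (hki : IntegrableAtFilter k atTop) (hf₀ : ∀ᶠ t in atTop, 0 ≤ f t)
    (hf : ∀ᶠ t in atTop, ∃ d ≤ k t, HasDerivAt f d t)
    (hfreq : ∀ δ > 0, ∃ᶠ t in atTop, f t < δ) : Tendsto f atTop (𝓝 0) := by
  set Q : ℝ → ℝ := fun s ↦ ∫ r in Ioi s, k r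
  have hQ : Tendsto Q atTop (𝓝 0) := tendsto_integral_Ioi_zero tendsto_id
  refine tendsto_order.mpr ⟨fun a ha ↦ hf₀.mono fun t ht ↦ ha.trans_le ht, fun δ hδ ↦ ?_⟩
  have hQ_lt : ∀ᶠ t in atTop, Q t < δ / 4 := hQ.eventually_lt_const (by linarith)
  have hlt_Q : ∀ᶠ t in atTop, -(δ / 4) < Q t := hQ.eventually_const_lt (by linarith)
  obtain ⟨s, hs, hQs, hanti⟩ := ((hfreq (δ / 2) (half_pos hδ)).and_eventually
    (hQ_lt.and (eventually_antitoneOn_add_integral_Ioi hk hki hf))).exists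
  filter_upwards [eventually_ge_atTop s, hlt_Q] with t hst hQt
  have : f t + Q t ≤ f s + Q s := hanti self_mem_Ici hst hst
  linarith

-- Otherwise `f + δ * log` would be bounded above, although `log` is not.
theorem frequently_lt_of_deriv_le_sub_div {h : ℝ → ℝ} (hk : ∀ᶠ t in atTop, ContinuousAt k t)
    (hki : IntegrableAtFilter k atTop) (hf_bdd : IsBoundedUnder (· ≥ ·) atTop f)
    (hf : ∀ᶠ t in atTop, ∃ d ≤ k t - h t / t, HasDerivAt f d t) {δ : ℝ} (hδ : 0 < δ) :
    ∃ᶠ t in atTop, h t < δ := by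
  intro hcon
  set Q : ℝ → ℝ := fun s ↦ ∫ r in Ioi s, k r
  have hQ : Tendsto Q atTop (𝓝 0) := tendsto_integral_Ioi_zero tendsto_id
  have hanti : ∀ᶠ T in atTop, AntitoneOn (fun t ↦ f t + δ * Real.log t + Q t) (Ici T) := by
    refine eventually_antitoneOn_add_integral_Ioi hk hki ?_
    filter_upwards [hf, hcon, eventually_gt_atTop 0] with t ⟨d, hd, hft⟩ hht ht
    refine ⟨_, ?_, hft.add ((Real.hasDerivAt_log ht.ne').const_mul δ)⟩
    have : δ / t ≤ h t / t := div_le_div_of_nonneg_right (not_lt.mp hht) ht.le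
    rw [div_eq_mul_inv δ] at this
    linarith
  obtain ⟨T, hT⟩ := hanti.exists
  obtain ⟨b, hb⟩ := hf_bdd.eventually_ge
  have hunbdd : Tendsto (fun t ↦ b + δ * Real.log t + -1) atTop atTop :=
    tendsto_atTop_add_const_right _ _ (tendsto_atTop_add_const_left _ _
      (Real.tendsto_log_atTop.const_mul_atTop hδ))
  obtain ⟨t, htT, hbt, hQt, hlarge⟩ := ((eventually_ge_atTop T).and (hb.and
    ((hQ.eventually_const_lt (show (-1 : ℝ) < 0 by norm_num)).and
      (hunbdd.eventually_gt_atTop (f T + δ * Real.log T + Q T))))).exists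
  have : f t + δ * Real.log t + Q t ≤ f T + δ * Real.log T + Q T := hT self_mem_Ici htT htT
  linarith

theorem integrableAtFilter_norm_of_rpow_mul {E : Type*} [NormedAddCommGroup E] {g : ℝ → E}
    {p : ℝ} (hp : 0 ≤ p) (hg : ∀ᶠ t in atTop, ContinuousAt g t)
    (hgi : IntegrableAtFilter (fun t ↦ t ^ p * ‖g t‖) atTop) :
    IntegrableAtFilter (fun t ↦ ‖g t‖) atTop := by
  obtain ⟨T, hT⟩ := eventually_atTop.mp hg
  have hmeas : StronglyMeasurableAtFilter (fun t ↦ ‖g t‖) atTop :=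
    ⟨Ici T, Ici_mem_atTop T, ContinuousOn.aestronglyMeasurable
      (fun t ht ↦ (hT t ht).norm.continuousWithinAt) measurableSet_Ici⟩
  refine IsBigO.integrableAtFilter (.of_bound' ?_) hmeas hgi
  filter_upwards [eventually_ge_atTop 1] with t ht
  rw [norm_mul, Real.norm_of_nonneg (Real.rpow_nonneg (zero_le_one.trans ht) p)]
  exact le_mul_of_one_le_left (norm_nonneg _) (Real.one_le_rpow ht hp)

theorem eventually_le_mul_sq {K : ℝ} (hK : 0 < K) (c : ℝ) : ∀ᶠ t : ℝ in atTop, c ≤ K * t ^ 2 :=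
  ((tendsto_pow_atTop two_ne_zero).const_mul_atTop hK).eventually_ge_atTop c

theorem exists_forall_ge_le_mul_of_isBigO {g : ℝ → ℝ} (hfg : f =O[atTop] g)
    (hg : ∀ᶠ t in atTop, 0 ≤ g t) (a : ℝ) : ∃ C > 0, ∃ T ≥ a, ∀ t ≥ T, f t ≤ C * g t := by
  obtain ⟨C, hC, hbound⟩ := hfg.exists_pos
  obtain ⟨T, hT⟩ := eventually_atTop.mp (hbound.bound.and hg)
  refine ⟨C, hC, max a T, le_max_left _ _, fun t ht ↦ ?_⟩
  obtain ⟨hle, hg_nonneg⟩ := hT t (le_of_max_le_right ht)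
  rw [Real.norm_of_nonneg hg_nonneg] at hle
  exact (Real.le_norm_self _).trans hle

end AsymptoticCalculus

section ConvexGrowth

open Filter Topology Set

/-- The point `z` minimizes `F`, with `F - F z` growing at least linearly away from every ball
around `z`: a quantitative form of Tykhonov well-posedness. -/
def IsLinearlyWellPosedMin {E : Type*} [NormedAddCommGroup E] (F : E → ℝ) (z : E) : Prop :=
  ∀ r > 0, ∃ c > 0, ∀ y, ‖y - z‖ ≤ r + c * (F y - F z)

namespace IsLinearlyWellPosedMin

variable {E : Type*} [NormedAddCommGroup E] {F : E → ℝ} {z : E}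

theorem le (h : IsLinearlyWellPosedMin F z) (y : E) : F z ≤ F y := by
  by_contra! hlt
  have hle : ‖y - z‖ ≤ 0 := le_of_forall_pos_le_add fun r hr ↦ by
    obtain ⟨c, hc, hbound⟩ := h r hr
    nlinarith [hbound y]
  rw [norm_le_zero_iff, sub_eq_zero] at hle
  exact hlt.ne (congrArg F hle)

theorem tendsto_of_tendsto_comp {ι : Type*} {l : Filter ι} {u : ι → E}
    (h : IsLinearlyWellPosedMin F z) (hu : Tendsto (fun i ↦ F (u i)) l (𝓝 (F z))) :
    Tendsto u l (𝓝 z) := by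
  rw [tendsto_iff_norm_sub_tendsto_zero, tendsto_order]
  refine ⟨fun a ha ↦ .of_forall fun i ↦ ha.trans_le (norm_nonneg _), fun ε hε ↦ ?_⟩
  obtain ⟨c, -, hbound⟩ := h (ε / 2) (half_pos hε)
  have hlim : Tendsto (fun i ↦ ε / 2 + c * (F (u i) - F z)) l (𝓝 (ε / 2 + c * (F z - F z))) :=
    ((hu.sub_const _).const_mul _).const_add _
  filter_upwards [hlim.eventually_lt_const (u := ε) (by linarith)] with i hi
  exact (hbound _).trans_lt hi

end IsLinearlyWellPosedMin

theorem mul_norm_sub_le_of_convexOn_of_sphere {E : Type*} [NormedAddCommGroup E] [NormedSpace ℝ E]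
    {F : E → ℝ} (hF : ConvexOn ℝ univ F) {z : E} {r c : ℝ} (hr : 0 < r)
    (hsphere : ∀ y, ‖y - z‖ = r → c ≤ F y - F z) {y : E} (hy : r ≤ ‖y - z‖) :
    c * ‖y - z‖ ≤ r * (F y - F z) := by
  have hpos : 0 < ‖y - z‖ := hr.trans_le hy
  set s := r / ‖y - z‖ with hs
  have hs₀ : 0 < s := div_pos hr hpos
  have hs₁ : s ≤ 1 := (div_le_one hpos).mpr hy
  have hproj : c ≤ F (s • y + (1 - s) • z) - F z := by
    refine hsphere _ ?_
    rw [show s • y + (1 - s) • z - z = s • (y - z) by module, norm_smul,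
      Real.norm_of_nonneg hs₀.le, hs, div_mul_cancel₀ _ hpos.ne']
  have hconv : F (s • y + (1 - s) • z) ≤ s * F y + (1 - s) * F z :=
    hF.2 (mem_univ y) (mem_univ z) hs₀.le (sub_nonneg.mpr hs₁) (add_sub_cancel s 1)
  have hc : c ≤ r / ‖y - z‖ * (F y - F z) := by rw [← hs]; linarith
  rwa [div_mul_eq_mul_div, le_div_iff₀ hpos] at hc

theorem isLinearlyWellPosedMin_of_quadratic_growth {E : Type*} [NormedAddCommGroup E]
    [NormedSpace ℝ E] {F : E → ℝ} {z : E} {K : ℝ} (hF : ConvexOn ℝ univ F) (hK : 0 < K)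
    (hgrowth : ∀ᶠ y in 𝓝 z, K * ‖y - z‖ ^ 2 ≤ F y - F z) : IsLinearlyWellPosedMin F z := by
  have hmin : ∀ y, F z ≤ F y := by
    refine IsMinOn.of_isLocalMin_of_convex_univ ?_ hF
    filter_upwards [hgrowth] with y hy
    exact sub_nonneg.mp ((by positivity : 0 ≤ K * ‖y - z‖ ^ 2).trans hy)
  obtain ⟨ε, hε, hball⟩ := Metric.eventually_nhds_iff.mp hgrowth
  intro r hr
  obtain ⟨ρ, hρ, hρ_lt⟩ := exists_between (lt_min hr hε)
  refine ⟨1 / (K * ρ), by positivity, fun y ↦ ?_⟩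
  have hgap : 0 ≤ 1 / (K * ρ) * (F y - F z) :=
    mul_nonneg (by positivity) (sub_nonneg.mpr (hmin y))
  rcases le_total ‖y - z‖ ρ with hy | hy
  · linarith [hρ_lt.trans_le (min_le_left r ε)]
  · have hsphere (w : E) (hw : ‖w - z‖ = ρ) : K * ρ ^ 2 ≤ F w - F z := by
      have hwε : dist w z < ε := by
        rw [dist_eq_norm, hw]
        exact hρ_lt.trans_le (min_le_right r ε)
      simpa only [hw] using hball hwε
    have hfar := mul_norm_sub_le_of_convexOn_of_sphere hF hρ hsphere hy
    have : ‖y - z‖ ≤ 1 / (K * ρ) * (F y - F z) := by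
      rw [one_div_mul_eq_div, le_div_iff₀ (by positivity)]
      exact le_of_mul_le_mul_left (by linarith) hρ
    linarith

variable {E : Type*} [NormedAddCommGroup E] [InnerProductSpace ℝ E] [CompleteSpace E] {F : E → ℝ}

theorem hasDerivAt_comp_of_hasGradientAt {F' v : E} {u : ℝ → E} {t : ℝ}
    (hF : HasGradientAt F F' (u t)) (hu : HasDerivAt u v t) :
    HasDerivAt (fun s ↦ F (u s)) ⟪F', v⟫ t :=
  hF.hasFDerivAt.comp_hasDerivAt t hu

theorem sub_le_inner_of_convexOn_of_hasGradientAt {s : Set E} {F' y z : E} (hF : ConvexOn ℝ s F)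
    (hy : y ∈ s) (hz : z ∈ s) (hF' : HasGradientAt F F' y) : F y - F z ≤ ⟪F', y - z⟫ := by
  have hderiv : HasDerivAt (fun r : ℝ ↦ F (AffineMap.lineMap y z r)) ⟪F', z - y⟫ 0 :=
    hasDerivAt_comp_of_hasGradientAt (by simpa using hF') AffineMap.hasDerivAt_lineMap
  have hslope := (hF.comp_affineMap (AffineMap.lineMap y z)).le_slope_of_hasDerivAt
    (x := 0) (y := 1) (by simpa using hy) (by simpa using hz) one_pos hderiv
  simp only [slope_def_field, Function.comp_apply, AffineMap.lineMap_apply_one,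
    AffineMap.lineMap_apply_zero, sub_zero, div_one] at hslope
  rw [← neg_sub z y, inner_neg_right]
  linarith

end ConvexGrowth

section InertialDynamics

open Filter Topology Set Asymptotics

/-- The mechanical energy of the curve `x` with velocity `v` in the potential `F - F z`. -/
noncomputable def mechanicalEnergy {E : Type*} [NormedAddCommGroup E] (F : E → ℝ) (z : E)
    (x v : ℝ → E) (t : ℝ) : ℝ :=
  F (x t) - F z + ‖v t‖ ^ 2 / 2

theorem mechanicalEnergy_nonneg {E : Type*} [NormedAddCommGroup E] {F : E → ℝ} {z : E}
    {x v : ℝ → E} {t : ℝ} (hz : F z ≤ F (x t)) : 0 ≤ mechanicalEnergy F z x v t :=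
  add_nonneg (sub_nonneg.mpr hz) (by positivity)

theorem norm_velocity_le_one_add_mechanicalEnergy {E : Type*} [NormedAddCommGroup E] {F : E → ℝ}
    {z : E} {x v : ℝ → E} {t : ℝ} (hz : F z ≤ F (x t)) :
    ‖v t‖ ≤ 1 + mechanicalEnergy F z x v t := by
  unfold mechanicalEnergy
  nlinarith [sq_nonneg (‖v t‖ - 1)]

/-- The Lyapunov function for the splitting `α = p + l` of the damping coefficient. The weight of
`‖x - z‖ ^ 2` is the one that makes the velocity terms of its derivative add up to
`(1 - p) / t * ‖l • (x - z) + t • v‖ ^ 2`. -/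
noncomputable def lyapunov {E : Type*} [NormedAddCommGroup E] [NormedSpace ℝ E] (F : E → ℝ) (z : E)
    (p l : ℝ) (x v : ℝ → E) (t : ℝ) : ℝ :=
  t ^ 2 * (F (x t) - F z) + ‖l • (x t - z) + t • v t‖ ^ 2 / 2 + l * (1 - p) / 2 * ‖x t - z‖ ^ 2

theorem half_gap_add_half_norm_sq_le_lyapunov {E : Type*} [NormedAddCommGroup E] [NormedSpace ℝ E]
    {F : E → ℝ} {z : E} {p l K t : ℝ} {x v : ℝ → E} (hgrowth : K * ‖x t - z‖ ^ 2 ≤ F (x t) - F z)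
    (ht : |l * (1 - p)| ≤ K * t ^ 2) :
    t ^ 2 * (F (x t) - F z) / 2 + ‖l • (x t - z) + t • v t‖ ^ 2 / 2 ≤ lyapunov F z p l x v t := by
  have hdist : -(l * (1 - p)) * ‖x t - z‖ ^ 2 ≤ t ^ 2 * (F (x t) - F z) :=
    calc -(l * (1 - p)) * ‖x t - z‖ ^ 2 ≤ K * t ^ 2 * ‖x t - z‖ ^ 2 := by
          gcongr
          exact (neg_le_abs _).trans ht
      _ = t ^ 2 * (K * ‖x t - z‖ ^ 2) := by ring
      _ ≤ t ^ 2 * (F (x t) - F z) := by gcongr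
  unfold lyapunov
  linarith

/-- The virial `⟪x - z, v⟫ / t` plus two corrections, where `R` bounds `‖x - z‖` and `‖v‖`: the term
`(α + 1) * R ^ 2` gives the `1 / t ^ 2` part of the derivative a sign, and the multiple of the
energy is such that friction absorbs the kinetic term. -/
noncomputable def correctedVirial {E : Type*} [NormedAddCommGroup E] [InnerProductSpace ℝ E]
    (F : E → ℝ) (z : E) (α R : ℝ) (x v : ℝ → E) (t : ℝ) : ℝ :=
  (⟪x t - z, v t⟫ + (α + 1) * R ^ 2) / t + 3 / (2 * α) * mechanicalEnergy F z x v t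

theorem inner_add_sq_nonneg_of_norm_le {E : Type*} [NormedAddCommGroup E] [InnerProductSpace ℝ E]
    {y w : E} {R : ℝ} (hy : ‖y‖ ≤ R) (hw : ‖w‖ ≤ R) : 0 ≤ ⟪y, w⟫ + R ^ 2 := by
  have hle : |⟪y, w⟫| ≤ R * R := (abs_real_inner_le_norm y w).trans
    (mul_le_mul hy hw (norm_nonneg w) ((norm_nonneg y).trans hy))
  linarith [neg_le_of_abs_le hle, sq R]

theorem correctedVirial_nonneg {E : Type*} [NormedAddCommGroup E] [InnerProductSpace ℝ E]
    {F : E → ℝ} {z : E} {α R t : ℝ} {x v : ℝ → E} (hα : 0 ≤ α) (ht : 0 ≤ t)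
    (hz : F z ≤ F (x t)) (hx : ‖x t - z‖ ≤ R) (hv : ‖v t‖ ≤ R) :
    0 ≤ correctedVirial F z α R x v t := by
  have hvirial : 0 ≤ ⟪x t - z, v t⟫ + (α + 1) * R ^ 2 := by
    linarith [inner_add_sq_nonneg_of_norm_le hx hv, mul_nonneg hα (sq_nonneg R)]
  have henergy := mechanicalEnergy_nonneg (v := v) hz
  unfold correctedVirial
  positivity

variable {E : Type*} [NormedAddCommGroup E] [InnerProductSpace ℝ E] [CompleteSpace E]

/-- At time `t`, the curve `x` has velocity `v` and solves `x'' + (α / t) x' + ∇F(x) = g`, written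
as a first-order system in `(x, v)`. -/
structure InertialFlowAt (F : E → ℝ) (α : ℝ) (g x v : ℝ → E) (t : ℝ) : Prop where
  hasDerivAt_position : HasDerivAt x (v t) t
  hasDerivAt_velocity : HasDerivAt v (g t - (α / t) • v t - gradient F (x t)) t

variable {F : E → ℝ} {α p l K R t : ℝ} {g x v : ℝ → E} {z : E}

theorem inertialFlowAt_of_hasDerivAt {a : E} (hx : HasDerivAt x (v t) t) (hv : HasDerivAt v a t)
    (hode : a + (α / t) • v t + gradient F (x t) = g t) : InertialFlowAt F α g x v t := by
  refine ⟨hx, hv.congr_deriv ?_⟩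
  rw [← hode]
  abel

theorem InertialFlowAt.hasDerivAt_potential (h : InertialFlowAt F α g x v t)
    (hF : DifferentiableAt ℝ F (x t)) :
    HasDerivAt (fun s ↦ F (x s) - F z) ⟪gradient F (x t), v t⟫ t :=
  (hasDerivAt_comp_of_hasGradientAt hF.hasGradientAt h.hasDerivAt_position).sub_const (F z)

theorem InertialFlowAt.hasDerivAt_mechanicalEnergy (h : InertialFlowAt F α g x v t)
    (hF : DifferentiableAt ℝ F (x t)) :
    HasDerivAt (mechanicalEnergy F z x v) (⟪g t, v t⟫ - α / t * ‖v t‖ ^ 2) t := by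
  refine ((h.hasDerivAt_potential hF).add
    (h.hasDerivAt_velocity.norm_sq.div_const 2)).congr_deriv ?_
  simp only [inner_sub_right, inner_smul_right, real_inner_self_eq_norm_sq,
    real_inner_comm (v t)]
  ring

theorem InertialFlowAt.exists_deriv_mechanicalEnergy_le (h : InertialFlowAt F α g x v t)
    (hα : 0 ≤ α) (ht : 0 < t) (hF : DifferentiableAt ℝ F (x t)) :
    ∃ d ≤ ‖g t‖ * ‖v t‖, HasDerivAt (mechanicalEnergy F z x v) d t :=
  ⟨_, (sub_le_self _ (by positivity)).trans (real_inner_le_norm _ _),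
    h.hasDerivAt_mechanicalEnergy hF⟩

theorem InertialFlowAt.hasDerivAt_inner_sub_velocity (h : InertialFlowAt F α g x v t) :
    HasDerivAt (fun s ↦ ⟪x s - z, v s⟫)
      (‖v t‖ ^ 2 + ⟪g t, x t - z⟫ - α / t * ⟪x t - z, v t⟫ - ⟪gradient F (x t), x t - z⟫) t := by
  refine ((h.hasDerivAt_position.sub_const z).inner ℝ h.hasDerivAt_velocity).congr_deriv ?_
  rw [inner_sub_right, inner_sub_right, inner_smul_right, real_inner_self_eq_norm_sq,
    real_inner_comm (g t), real_inner_comm (gradient F (x t))]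
  ring

theorem isBoundedUnder_one_add_mechanicalEnergy (hα : 0 ≤ α) (hF : Differentiable ℝ F)
    (hz : ∀ y, F z ≤ F y) (hg : ∀ᶠ t in atTop, ContinuousAt g t)
    (hgi : IntegrableAtFilter (fun t ↦ ‖g t‖) atTop)
    (hflow : ∀ᶠ t in atTop, InertialFlowAt F α g x v t) :
    IsBoundedUnder (· ≤ ·) atTop (fun t ↦ 1 + mechanicalEnergy F z x v t) := by
  refine isBoundedUnder_le_of_deriv_le_mul (hg.mono fun t ht ↦ ht.norm) hgi ?_
  filter_upwards [hflow, eventually_gt_atTop 0] with t h ht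
  obtain ⟨d, hd, hderiv⟩ := h.exists_deriv_mechanicalEnergy_le hα ht (hF (x t))
  refine ⟨d, hd.trans ?_, hderiv.const_add 1⟩
  gcongr
  exact norm_velocity_le_one_add_mechanicalEnergy (hz _)

theorem exists_eventually_norm_position_velocity_le (hα : 0 ≤ α) (hF : Differentiable ℝ F)
    (hz : IsLinearlyWellPosedMin F z) (hg : ∀ᶠ t in atTop, ContinuousAt g t)
    (hgi : IntegrableAtFilter (fun t ↦ ‖g t‖) atTop)
    (hflow : ∀ᶠ t in atTop, InertialFlowAt F α g x v t) :
    ∃ R, ∀ᶠ t in atTop, ‖x t - z‖ ≤ R ∧ ‖v t‖ ≤ R := by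
  obtain ⟨C, hC⟩ := (isBoundedUnder_one_add_mechanicalEnergy hα hF hz.le hg hgi hflow).eventually_le
  obtain ⟨c, hc, hbound⟩ := hz 1 one_pos
  refine ⟨max (1 + c * C) C, ?_⟩
  filter_upwards [hC] with t ht
  have hgap : F (x t) - F z ≤ C := by
    unfold mechanicalEnergy at ht
    linarith [sq_nonneg ‖v t‖]
  exact ⟨(hbound (x t)).trans (le_max_of_le_left (by gcongr)),
    (norm_velocity_le_one_add_mechanicalEnergy (hz.le _)).trans (le_max_of_le_right ht)⟩

theorem InertialFlowAt.exists_deriv_correctedVirial_le (h : InertialFlowAt F α g x v t) (hα : 0 < α)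
    (ht : 1 ≤ t) (hF : DifferentiableAt ℝ F (x t))
    (hgrad : F (x t) - F z ≤ ⟪gradient F (x t), x t - z⟫)
    (hx : ‖x t - z‖ ≤ R) (hv : ‖v t‖ ≤ R) :
    ∃ d ≤ (R + 3 / (2 * α) * R) * ‖g t‖ - mechanicalEnergy F z x v t / t,
      HasDerivAt (correctedVirial F z α R x v) d t := by
  have ht₀ : 0 < t := one_pos.trans_le ht
  refine ⟨_, ?_, ((h.hasDerivAt_inner_sub_velocity.add_const _).div (hasDerivAt_id t) ht₀.ne').add
    ((h.hasDerivAt_mechanicalEnergy hF).const_mul _)⟩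
  have hgx : ⟪g t, x t - z⟫ / t ≤ R * ‖g t‖ := by
    have hR : 0 ≤ R := (norm_nonneg _).trans hx
    rw [div_le_iff₀ ht₀]
    calc ⟪g t, x t - z⟫ ≤ ‖g t‖ * R := (real_inner_le_norm _ _).trans (by gcongr)
      _ ≤ R * ‖g t‖ * t := by rw [mul_comm]; exact le_mul_of_one_le_right (by positivity) ht
  have hgv : ⟪g t, v t⟫ ≤ R * ‖g t‖ := by
    rw [mul_comm]
    exact (real_inner_le_norm _ _).trans (by gcongr)
  have hinner : 0 ≤ (α + 1) * (⟪x t - z, v t⟫ + R ^ 2) / t ^ 2 :=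
    div_nonneg (mul_nonneg (by linarith) (inner_add_sq_nonneg_of_norm_le hx hv)) (sq_nonneg t)
  have hgap : (F (x t) - F z) / t ≤ ⟪gradient F (x t), x t - z⟫ / t :=
    div_le_div_of_nonneg_right hgrad ht₀.le
  calc _ = ⟪g t, x t - z⟫ / t + 3 / (2 * α) * ⟪g t, v t⟫ - ‖v t‖ ^ 2 / 2 / t
        - ⟪gradient F (x t), x t - z⟫ / t - (α + 1) * (⟪x t - z, v t⟫ + R ^ 2) / t ^ 2 := by
        simp only [id_eq]
        field_simp
        ring
    _ ≤ R * ‖g t‖ + 3 / (2 * α) * (R * ‖g t‖) - ‖v t‖ ^ 2 / 2 / t - (F (x t) - F z) / t - 0 := by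
        gcongr
    _ = _ := by
        unfold mechanicalEnergy
        ring

theorem tendsto_mechanicalEnergy_zero (hα : 0 < α) (hconv : ConvexOn ℝ univ F)
    (hF : Differentiable ℝ F) (hz : IsLinearlyWellPosedMin F z)
    (hg : ∀ᶠ t in atTop, ContinuousAt g t) (hgi : IntegrableAtFilter (fun t ↦ ‖g t‖) atTop)
    (hflow : ∀ᶠ t in atTop, InertialFlowAt F α g x v t) :
    Tendsto (mechanicalEnergy F z x v) atTop (𝓝 0) := by
  obtain ⟨R, hR⟩ := exists_eventually_norm_position_velocity_le hα.le hF hz hg hgi hflow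
  have hcont (c : ℝ) : ∀ᶠ t in atTop, ContinuousAt (fun s ↦ c * ‖g s‖) t :=
    hg.mono fun t ht ↦ ht.norm.const_mul c
  have hint (c : ℝ) : IntegrableAtFilter (fun t ↦ c * ‖g t‖) atTop := hgi.smul c
  refine tendsto_zero_of_deriv_le_of_frequently_lt (hcont R) (hint R)
    (.of_forall fun t ↦ mechanicalEnergy_nonneg (hz.le _)) ?_ fun δ hδ ↦ ?_
  · filter_upwards [hflow, hR, eventually_gt_atTop 0] with t h ⟨_, hv⟩ ht
    obtain ⟨d, hd, hderiv⟩ := h.exists_deriv_mechanicalEnergy_le hα.le ht (hF (x t))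
    refine ⟨d, hd.trans ?_, hderiv⟩
    rw [mul_comm]
    gcongr
  · refine frequently_lt_of_deriv_le_sub_div (f := correctedVirial F z α R x v)
      (hcont (R + 3 / (2 * α) * R)) (hint _) (isBoundedUnder_of_eventually_ge (a := 0) ?_) ?_ hδ
    · filter_upwards [hR, eventually_ge_atTop 0] with t ⟨hx, hv⟩ ht
      exact correctedVirial_nonneg hα.le ht (hz.le _) hx hv
    · filter_upwards [hflow, hR, eventually_ge_atTop 1] with t h ⟨hx, hv⟩ ht
      exact h.exists_deriv_correctedVirial_le hα ht (hF _)
        (sub_le_inner_of_convexOn_of_hasGradientAt hconv (mem_univ _) (mem_univ _)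
          (hF _).hasGradientAt) hx hv

theorem tendsto_position_minimizer (hα : 0 < α) (hconv : ConvexOn ℝ univ F)
    (hF : Differentiable ℝ F) (hz : IsLinearlyWellPosedMin F z)
    (hg : ∀ᶠ t in atTop, ContinuousAt g t) (hgi : IntegrableAtFilter (fun t ↦ ‖g t‖) atTop)
    (hflow : ∀ᶠ t in atTop, InertialFlowAt F α g x v t) : Tendsto x atTop (𝓝 z) := by
  refine hz.tendsto_of_tendsto_comp (tendsto_sub_nhds_zero_iff.mp ?_)
  refine squeeze_zero (fun t ↦ sub_nonneg.mpr (hz.le _)) (fun t ↦ ?_)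
    (tendsto_mechanicalEnergy_zero hα hconv hF hz hg hgi hflow)
  exact le_add_of_nonneg_right (by positivity)

theorem InertialFlowAt.hasDerivAt_lyapunov (h : InertialFlowAt F (p + l) g x v t) (ht : t ≠ 0)
    (hF : DifferentiableAt ℝ F (x t)) :
    HasDerivAt (lyapunov F z p l x v)
      ((2 * (1 - p) * lyapunov F z p l x v t - (1 - p) * l * (1 - p + l) * ‖x t - z‖ ^ 2
        + t ^ 2 * (2 * p * (F (x t) - F z) - l * ⟪gradient F (x t), x t - z⟫
          + ⟪g t, l • (x t - z) + t • v t⟫)) / t) t := by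
  have hx := h.hasDerivAt_position.sub_const z
  have hmomentum := (hx.const_smul l).add ((hasDerivAt_id t).smul h.hasDerivAt_velocity)
  refine ((((hasDerivAt_pow 2 t).mul (h.hasDerivAt_potential hF)).add
    (hmomentum.norm_sq.div_const 2)).add (hx.norm_sq.const_mul (l * (1 - p) / 2))).congr_deriv ?_
  unfold lyapunov
  simp only [id_eq, Pi.add_apply, Pi.smul_apply, Pi.smul_apply', one_smul]
  generalize x t - z = y
  simp only [← real_inner_self_eq_norm_sq, inner_add_left, inner_add_right, inner_sub_right,
    real_inner_smul_left, real_inner_smul_right]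
  rw [real_inner_comm y (v t), real_inner_comm y (g t), real_inner_comm y (gradient F (x t)),
    real_inner_comm (v t) (g t), real_inner_comm (v t) (gradient F (x t))]
  field_simp
  ring

theorem InertialFlowAt.hasDerivAt_rpow_mul_lyapunov (h : InertialFlowAt F (p + l) g x v t)
    (ht : 0 < t) (hF : DifferentiableAt ℝ F (x t)) :
    HasDerivAt (fun s ↦ (s ^ (p - 1)) ^ 2 * lyapunov F z p l x v s)
      ((t ^ (p - 1)) ^ 2 / t * (t ^ 2 * (2 * p * (F (x t) - F z)
          - l * ⟪gradient F (x t), x t - z⟫ + ⟪g t, l • (x t - z) + t • v t⟫)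
        - (1 - p) * l * (1 - p + l) * ‖x t - z‖ ^ 2)) t := by
  have hweight : HasDerivAt (fun s ↦ (s ^ (p - 1)) ^ 2) _ t :=
    (Real.hasDerivAt_rpow_const (.inl ht.ne')).pow 2
  refine (hweight.mul (h.hasDerivAt_lyapunov ht.ne' hF)).congr_deriv ?_
  rw [Real.rpow_sub_one ht.ne' (p - 1)]
  push_cast
  field_simp
  ring

theorem InertialFlowAt.exists_deriv_one_add_rpow_mul_lyapunov_le
    (h : InertialFlowAt F (p + l) g x v t) (ht : 0 < t) (hF : DifferentiableAt ℝ F (x t))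
    (hK : 0 < K) (hgrowth : K * ‖x t - z‖ ^ 2 ≤ F (x t) - F z)
    (hgrad : 2 * p * (F (x t) - F z) ≤ l * ⟪gradient F (x t), x t - z⟫)
    (hlarge : |l * (1 - p)| ≤ K * t ^ 2) :
    ∃ d ≤ (2 * |(1 - p) * l * (1 - p + l)| / K * t ^ (-3 : ℝ) + t ^ p * ‖g t‖)
        * (1 + (t ^ (p - 1)) ^ 2 * lyapunov F z p l x v t),
      HasDerivAt (fun s ↦ 1 + (s ^ (p - 1)) ^ 2 * lyapunov F z p l x v s) d t := by
  refine ⟨_, ?_, (h.hasDerivAt_rpow_mul_lyapunov ht hF).const_add 1⟩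
  have hL := half_gap_add_half_norm_sq_le_lyapunov (v := v) hgrowth hlarge
  set c := (1 - p) * l * (1 - p + l)
  set L := lyapunov F z p l x v t
  set u := l • (x t - z) + t • v t
  set a := t ^ (p - 1) with ha
  have hdist : ‖x t - z‖ ^ 2 ≤ 2 / K * (L / t ^ 2) := by
    rw [div_mul_div_comm, le_div_iff₀ (by positivity)]
    nlinarith [mul_le_mul_of_nonneg_left hgrowth (sq_nonneg t), sq_nonneg ‖u‖]
  have hmomentum : a * ‖u‖ ≤ 1 + a ^ 2 * L := by
    have : a ^ 2 * (‖u‖ ^ 2 / 2) ≤ a ^ 2 * L := by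
      gcongr
      linarith [mul_nonneg (sq_nonneg t) ((by positivity : 0 ≤ K * ‖x t - z‖ ^ 2).trans hgrowth)]
    nlinarith [sq_nonneg (a * ‖u‖ - 1)]
  have htp : t ^ p = a * t := by rw [ha, Real.rpow_sub_one ht.ne', div_mul_cancel₀ _ ht.ne']
  have ht3 : t ^ (-3 : ℝ) = (t ^ 3)⁻¹ := by
    rw [Real.rpow_neg ht.le]
    norm_cast
  calc a ^ 2 / t * (t ^ 2 * (2 * p * (F (x t) - F z) - l * ⟪gradient F (x t), x t - z⟫ + ⟪g t, u⟫)
        - c * ‖x t - z‖ ^ 2)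
      ≤ a ^ 2 / t * (t ^ 2 * (0 + ‖g t‖ * ‖u‖) + |c| * (2 / K * (L / t ^ 2))) := by
        rw [sub_eq_add_neg (t ^ 2 * _), ← neg_mul]
        gcongr
        · linarith
        · exact real_inner_le_norm _ _
        · exact neg_le_abs c
    _ = 2 * |c| / K * t ^ (-3 : ℝ) * (a ^ 2 * L) + t ^ p * ‖g t‖ * (a * ‖u‖) := by
        rw [htp, ht3]
        field_simp
        ring
    _ ≤ 2 * |c| / K * t ^ (-3 : ℝ) * (1 + a ^ 2 * L) + t ^ p * ‖g t‖ * (1 + a ^ 2 * L) := by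
        gcongr
        linarith
    _ = _ := by ring

theorem isBoundedUnder_one_add_rpow_mul_lyapunov (hF : Differentiable ℝ F) (hK : 0 < K)
    (hgrowth : ∀ᶠ y in 𝓝 z, K * ‖y - z‖ ^ 2 ≤ F y - F z)
    (hgrad : ∀ᶠ y in 𝓝 z, 2 * p * (F y - F z) ≤ l * ⟪gradient F y, y - z⟫)
    (hg : ∀ᶠ t in atTop, ContinuousAt g t)
    (hgi : IntegrableAtFilter (fun t ↦ t ^ p * ‖g t‖) atTop)
    (hflow : ∀ᶠ t in atTop, InertialFlowAt F (p + l) g x v t) (hx : Tendsto x atTop (𝓝 z)) :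
    IsBoundedUnder (· ≤ ·) atTop (fun t ↦ 1 + (t ^ (p - 1)) ^ 2 * lyapunov F z p l x v t) := by
  refine isBoundedUnder_le_of_deriv_le_mul
    (k := fun t ↦ 2 * |(1 - p) * l * (1 - p + l)| / K * t ^ (-3 : ℝ) + t ^ p * ‖g t‖) ?_ ?_ ?_
  · filter_upwards [hg, eventually_gt_atTop 0] with t hgt ht
    exact ((Real.continuousAt_rpow_const t _ (.inl ht.ne')).const_mul _).add
      ((Real.continuousAt_rpow_const t _ (.inl ht.ne')).mul hgt.norm)
  · have hrpow : IntegrableAtFilter (fun t : ℝ ↦ t ^ (-3 : ℝ)) atTop :=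
      integrableAtFilter_rpow_atTop_iff.mpr (by norm_num)
    exact (hrpow.smul (2 * |(1 - p) * l * (1 - p + l)| / K)).add hgi
  · filter_upwards [hflow, eventually_gt_atTop 0, hx.eventually hgrowth, hx.eventually hgrad,
      eventually_le_mul_sq hK |l * (1 - p)|] with t h ht hgrowth_t hgrad_t hlarge_t
    exact h.exists_deriv_one_add_rpow_mul_lyapunov_le ht (hF _) hK hgrowth_t hgrad_t hlarge_t

theorem isBigO_sub_of_inertialFlowAt (hconv : ConvexOn ℝ univ F) (hF : Differentiable ℝ F)
    (hp : 0 ≤ p) (hα : 0 < α) (hsplit : p + l = α) (hK : 0 < K)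
    (hgrowth : ∀ᶠ y in 𝓝 z, K * ‖y - z‖ ^ 2 ≤ F y - F z)
    (hgrad : ∀ᶠ y in 𝓝 z, 2 * p * (F y - F z) ≤ l * ⟪gradient F y, y - z⟫)
    (hg : ∀ᶠ t in atTop, ContinuousAt g t)
    (hgi : IntegrableAtFilter (fun t ↦ t ^ p * ‖g t‖) atTop)
    (hflow : ∀ᶠ t in atTop, InertialFlowAt F α g x v t) :
    (fun t ↦ F (x t) - F z) =O[atTop] fun t ↦ t ^ (-(2 * p)) := by
  subst hsplit
  have hz := isLinearlyWellPosedMin_of_quadratic_growth hconv hK hgrowth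
  have hx : Tendsto x atTop (𝓝 z) := tendsto_position_minimizer hα hconv hF hz hg
    (integrableAtFilter_norm_of_rpow_mul hp hg hgi) hflow
  obtain ⟨C, hC⟩ :=
    (isBoundedUnder_one_add_rpow_mul_lyapunov hF hK hgrowth hgrad hg hgi hflow hx).eventually_le
  refine IsBigO.of_bound (2 * C) ?_
  filter_upwards [hC, eventually_le_mul_sq hK |l * (1 - p)|, hx.eventually hgrowth,
    eventually_gt_atTop 0] with t hCt hlarge_t hgrowth_t ht
  have hweight : t ^ (2 * p) = (t ^ (p - 1)) ^ 2 * t ^ 2 := by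
    rw [← mul_pow, Real.rpow_sub_one ht.ne', div_mul_cancel₀ _ ht.ne', mul_comm,
      Real.rpow_mul ht.le, Real.rpow_two]
  have hL : t ^ 2 * (F (x t) - F z) / 2 ≤ lyapunov F z p l x v t :=
    (le_add_of_nonneg_right (by positivity)).trans
      (half_gap_add_half_norm_sq_le_lyapunov hgrowth_t hlarge_t)
  rw [Real.norm_of_nonneg (sub_nonneg.mpr (hz.le _)), Real.norm_of_nonneg (by positivity),
    Real.rpow_neg ht.le, ← div_eq_mul_inv, le_div_iff₀ (by positivity), hweight]
  linarith [mul_le_mul_of_nonneg_left hL (sq_nonneg (t ^ (p - 1)))]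

end InertialDynamics

theorem stmt_1_general
    {E : Type*} [NormedAddCommGroup E] [InnerProductSpace ℝ E] [CompleteSpace E]
    {F : E → ℝ} {z : E} (hconv : ConvexOn ℝ Set.univ F) (hdiff : Differentiable ℝ F)
    {α t₀ γ : ℝ} (hα : 0 < α) (hγ : 0 < γ) {g x x' x'' : ℝ → E}
    (hg : ContinuousOn g (Set.Ici t₀))
    (hx : ∀ t ∈ Set.Ici t₀, HasDerivAt x (x' t) t)
    (hx'd : ∀ t ∈ Set.Ici t₀, HasDerivAt x' (x'' t) t)
    (hode : ∀ t ∈ Set.Ici t₀, x'' t + (α / t) • x' t + gradient F (x t) = g t)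
    (hH1 : ∃ η > 0, ∀ y, ‖y - z‖ < η → F y - F z ≤ (1 / γ) * ⟪gradient F y, y - z⟫)
    (hH2 : ∃ K > 0, ∃ ε > 0, ∀ y, ‖y - z‖ < ε → K * ‖y - z‖ ^ 2 ≤ F y - F z)
    (hint : IntegrableOn (fun t : ℝ ↦ t ^ (γ * α / (γ + 2)) * ‖g t‖) (Set.Ici t₀)) :
    ∃ C > 0, ∃ t₁ ≥ t₀, ∀ t ≥ t₁, F (x t) - F z ≤ C * t ^ (-(2 * γ * α / (γ + 2))) := by
  obtain ⟨η, hη, hflat⟩ := hH1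
  obtain ⟨K, hK, ε, hε, hgrowth⟩ := hH2
  set p := γ * α / (γ + 2) with hp
  have hsplit : p + 2 * α / (γ + 2) = α := by
    rw [hp]
    field_simp
  have hexp : 2 * γ * α / (γ + 2) = 2 * p := by ring
  have hgrad : ∀ᶠ y in nhds z, 2 * p * (F y - F z) ≤ 2 * α / (γ + 2) * ⟪gradient F y, y - z⟫ := by
    filter_upwards [eventually_norm_sub_lt z hη] with y hy
    calc 2 * p * (F y - F z) ≤ 2 * p * (1 / γ * ⟪gradient F y, y - z⟫) := by
          gcongr
          exact hflat y hy
      _ = 2 * α / (γ + 2) * ⟪gradient F y, y - z⟫ := by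
          rw [hp]
          field_simp
  have hcont : ∀ᶠ t in Filter.atTop, ContinuousAt g t :=
    (Filter.eventually_gt_atTop t₀).mono fun t ht ↦ hg.continuousAt (Ici_mem_nhds ht)
  have hflow : ∀ᶠ t in Filter.atTop, InertialFlowAt F α g x x' t :=
    (Filter.eventually_ge_atTop t₀).mono fun t ht ↦
      inertialFlowAt_of_hasDerivAt (hx t ht) (hx'd t ht) (hode t ht)
  have hrate := isBigO_sub_of_inertialFlowAt hconv hdiff (by positivity) hα hsplit hK
    ((eventually_norm_sub_lt z hε).mono hgrowth) hgrad hcont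
    ⟨_, Filter.Ici_mem_atTop t₀, hint⟩ hflow
  rw [hexp]
  exact exists_forall_ge_le_mul_of_isBigO hrate ((Filter.eventually_ge_atTop 0).mono
    fun t ht ↦ Real.rpow_nonneg ht _) t₀

theorem stmt_1
    {n : ℕ} (hn : 1 ≤ n)
    (F : EuclideanSpace ℝ (Fin n) → ℝ) (Fstar : ℝ)
    (Xstar : Set (EuclideanSpace ℝ (Fin n)))
    (hXstar : Xstar = {z | ∀ y, F z ≤ F y})
    (hne : Xstar.Nonempty)
    (hFstar : ∀ z ∈ Xstar, F z = Fstar)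
    (hconv : ConvexOn ℝ Set.univ F)
    (hdiff : Differentiable ℝ F)
    (α t₀ γ : ℝ) (hα : 0 < α) (ht₀ : 0 < t₀) (hγ : 1 ≤ γ) (hγ2 : γ ≤ 2)
    (g x x' x'' : ℝ → EuclideanSpace ℝ (Fin n))
    (hg : ContinuousOn g (Set.Ici t₀))
    (hx : ∀ t ∈ Set.Ici t₀, HasDerivAt x (x' t) t)
    (hx'd : ∀ t ∈ Set.Ici t₀, HasDerivAt x' (x'' t) t)
    (hx''c : ContinuousOn x'' (Set.Ici t₀))
    (hode : ∀ t ∈ Set.Ici t₀, x'' t + (α / t) • x' t + gradient F (x t) = g t)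
    (hH1 : ∀ z ∈ Xstar, ∃ η > 0, ∀ y : EuclideanSpace ℝ (Fin n),
      ‖y - z‖ < η → F y - Fstar ≤ (1 / γ) * ⟪gradient F y, y - z⟫)
    (hH2 : ∀ z ∈ Xstar, ∃ K > 0, ∃ ε > 0, ∀ y : EuclideanSpace ℝ (Fin n),
      ‖y - z‖ < ε → K * Metric.infDist y Xstar ^ (2 : ℝ) ≤ F y - Fstar)
    (huniq : ∃ z, Xstar = {z})
    (hint : IntegrableOn (fun t : ℝ => t ^ (γ * α / (γ + 2)) * ‖g t‖) (Set.Ici t₀))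
    (hαgt : 1 + 2 / γ < α) :
    ∃ C > 0, ∃ t₁ ≥ t₀, ∀ t ≥ t₁,
      F (x t) - Fstar ≤ C * t ^ (-(2 * γ * α / (γ + 2))) := by
  obtain ⟨z, rfl⟩ := huniq
  obtain rfl := hFstar z rfl
  exact stmt_1_general hconv hdiff hα (by linarith) hg hx hx'd hode (hH1 z rfl)
    (by simpa [Metric.infDist_singleton, dist_eq_norm] using hH2 z rfl) hint
end

section
/- Let θ ∈ (0,1), α > 0, t₀ > 0, γ ∈ [1,2] and m ∈ (0, 2γ/(γ+2)). Set Γ(t) = (α/(1−θ))(t^{1−θ} − t₀^{1−θ}) (so that Γ(t) = ∫_{t₀}^t α s^{−θ} ds). Let x : [t₀, ∞) → ℝⁿ be a solution of the perturbed inertial ODE with damping α/t^θ. Assume that ∫_{t₀}^∞ e^{mΓ(t)} ‖g(t)‖ dt < ∞ and that F satisfies hypotheses H1(γ) and H2(2) and admits a unique minimizer x*. Then there exist C > 0 and t₁ ≥ t₀ such that for all t ≥ t₁, F(x(t)) − F* ≤ C · e^{−mΓ(t)}. -/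
open MeasureTheory
open scoped RealInnerProductSpace

/-!
Fix `z`, the minimizer, and let `V = F(x) - F z + ½‖x' + μ a (x - z)‖²` with `μ = 2 / (γ + 2)`,
where `a` is the damping coefficient. Differentiating along the trajectory and using
`F - F z ≤ (1 / γ) ⟨∇F, x - z⟩`, the choice of `μ` makes `V' + m a V` at most `(1 + V) ‖g‖` minus
`a δ (F(x) - F z + ½‖x'‖²)`, where `δ = 2γ / (γ + 2) - m > 0`, up to cross terms whose
coefficients are negligible compared with `a` at infinity. Quadratic growth lets the negative
terms absorb these eventually, and Gronwall's inequality gives `V = O(exp (-m Γ))`.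

Both inequalities on `F` are only local. Convexity spreads quadratic growth to sublevel sets, and
the mechanical energy (the case `μ = 0`) keeps the trajectory in one of them. A first pass with
`γ = 1`, which convexity gives everywhere, and a small exponent shows that `x` converges to `z`;
then the local inequality holds along the trajectory and a second pass gives the sharp exponent.
-/

section ExponentialDecay

open Set Real Filter Topology

theorem hasDerivAt_integral_Ioi {h : ℝ → ℝ} {T t : ℝ} (hc : ContinuousOn h (Ioi T))
    (hi : IntegrableOn h (Ioi T)) (ht : T < t) :
    HasDerivAt (fun r => ∫ s in Ioi r, h s) (-h t) t := by
  have hTt : IntervalIntegrable h volume T t :=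
    (intervalIntegrable_iff_integrableOn_Ioc_of_le ht.le).2 (hi.mono_set Ioc_subset_Ioi_self)
  have hprim : HasDerivAt (fun r => ∫ s in T..r, h s) (h t) t :=
    intervalIntegral.integral_hasDerivAt_right hTt
      (hc.stronglyMeasurableAtFilter isOpen_Ioi t ht) (hc.continuousAt (Ioi_mem_nhds ht))
  refine (hprim.const_sub (∫ s in Ioi T, h s)).congr_of_eventuallyEq ?_
  filter_upwards [lt_mem_nhds ht] with r hr
  rw [← intervalIntegral.integral_interval_add_Ioi hi (hi.mono_set (Ioi_subset_Ioi hr.le)),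
    add_sub_cancel_left]

theorem le_mul_exp_integral_of_deriv_le_mul {u u' h : ℝ → ℝ} {T t : ℝ}
    (huc : ContinuousOn u (Ici T)) (hu : ∀ s ∈ Ioi T, HasDerivAt u (u' s) s)
    (hc : ContinuousOn h (Ioi T)) (hi : IntegrableOn h (Ioi T)) (h0 : ∀ s ∈ Ioi T, 0 ≤ h s)
    (hle : ∀ s ∈ Ioi T, u' s ≤ h s * u s) (ht : T ≤ t) (hut : 0 ≤ u t) :
    u t ≤ u T * exp (∫ s in Ioi T, h s) := by
  set R : ℝ → ℝ := fun r => ∫ s in Ioi r, h s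
  have hderiv : ∀ s ∈ Ioi T,
      HasDerivAt (fun r => u r * exp (R r)) ((u' s - h s * u s) * exp (R s)) s := fun s hs =>
    ((hu s hs).mul (hasDerivAt_integral_Ioi hc hi hs).exp).congr_deriv (by ring)
  have hanti : AntitoneOn (fun r => u r * exp (R r)) (Ici T) := by
    refine antitoneOn_of_hasDerivWithinAt_nonpos (convex_Ici T)
      (huc.mul hi.continuousOn_Ici_primitive_Ioi.rexp)
      (fun s hs => (hderiv s (interior_Ici.subset hs)).hasDerivWithinAt) fun s hs => ?_
    exact mul_nonpos_of_nonpos_of_nonneg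
      (sub_nonpos.2 (hle s (interior_Ici.subset hs))) (exp_pos _).le
  have hR : 0 ≤ R t :=
    setIntegral_nonneg measurableSet_Ioi fun s hs => h0 s (ht.trans_lt hs)
  calc u t ≤ u t * exp (R t) := le_mul_of_one_le_right hut (one_le_exp hR)
    _ ≤ u T * exp (R T) := hanti self_mem_Ici ht ht

theorem exists_le_mul_exp_neg_of_deriv_add_mul_le {V V' Λ l p : ℝ → ℝ} {T : ℝ}
    (hV : ∀ t ∈ Ici T, HasDerivAt V (V' t) t) (hV0 : ∀ t ∈ Ici T, 0 ≤ V t)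
    (hΛ : ∀ t ∈ Ici T, HasDerivAt Λ (l t) t) (hΛ0 : ∀ t ∈ Ici T, 0 ≤ Λ t)
    (hp : ContinuousOn p (Ici T)) (hp0 : ∀ t ∈ Ici T, 0 ≤ p t)
    (hint : IntegrableOn (fun t => exp (Λ t) * p t) (Ici T))
    (hle : ∀ t ∈ Ici T, V' t + l t * V t ≤ (1 + V t) * p t) :
    ∃ C > 0, ∀ t ∈ Ici T, V t ≤ C * exp (-Λ t) := by
  set u : ℝ → ℝ := fun t => 1 + exp (Λ t) * V t
  have hu1 : ∀ t ∈ Ici T, 1 ≤ u t := fun t ht =>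
    le_add_of_nonneg_right (mul_nonneg (exp_pos _).le (hV0 t ht))
  have hu : ∀ t ∈ Ici T, HasDerivAt u (exp (Λ t) * (V' t + l t * V t)) t := fun t ht =>
    (((hΛ t ht).exp.mul (hV t ht)).const_add 1).congr_deriv (by ring)
  have hu_le : ∀ t ∈ Ici T,
      exp (Λ t) * (V' t + l t * V t) ≤ exp (Λ t) * p t * u t := fun t ht => by
    have hVu : 1 + V t ≤ u t := by
      have := le_mul_of_one_le_left (hV0 t ht) (one_le_exp (hΛ0 t ht))
      exact add_le_add_right this 1
    calc exp (Λ t) * (V' t + l t * V t) ≤ exp (Λ t) * ((1 + V t) * p t) := by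
          gcongr; exact hle t ht
      _ ≤ exp (Λ t) * (u t * p t) := by
          have := hp0 t ht
          gcongr
      _ = exp (Λ t) * p t * u t := by ring
  have hΛc : ContinuousOn Λ (Ici T) := HasDerivAt.continuousOn hΛ
  have hsub : Ioi T ⊆ Ici T := Ioi_subset_Ici_self
  refine ⟨u T * exp (∫ s in Ioi T, exp (Λ s) * p s),
    mul_pos (one_pos.trans_le (hu1 T self_mem_Ici)) (exp_pos _), fun t ht => ?_⟩
  have hbound := le_mul_exp_integral_of_deriv_le_mul (HasDerivAt.continuousOn hu)
    (fun s hs => hu s (hsub hs)) ((hΛc.rexp.mul hp).mono hsub) (hint.mono_set hsub)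
    (fun s hs => mul_nonneg (exp_pos _).le (hp0 s (hsub hs))) (fun s hs => hu_le s (hsub hs))
    ht (zero_le_one.trans (hu1 t ht))
  rw [exp_neg, ← div_eq_mul_inv, le_div_iff₀' (exp_pos _)]
  exact (le_add_of_nonneg_left zero_le_one).trans hbound

end ExponentialDecay

section QuadraticGrowth

open Set Filter Topology

theorem global_growth_of_local_quadratic_growth {E : Type*} [NormedAddCommGroup E]
    [NormedSpace ℝ E] {F : E → ℝ} {z : E} {K ε : ℝ} (hF : ConvexOn ℝ univ F) (hε : 0 < ε)
    (hloc : ∀ y, ‖y - z‖ < ε → K * ‖y - z‖ ^ 2 ≤ F y - F z) (y : E) :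
    K * ε / (ε + ‖y - z‖) * ‖y - z‖ ^ 2 ≤ F y - F z := by
  set d := ‖y - z‖
  have hd : 0 ≤ d := norm_nonneg _
  set s := ε / (ε + d) with hs
  have hs0 : 0 < s := by positivity
  have hs1 : s ≤ 1 := (div_le_one (by positivity)).2 (by linarith)
  set p := AffineMap.lineMap z y s
  have hp : ‖p - z‖ = s * d := by
    rw [← dist_eq_norm, dist_lineMap_left, Real.norm_of_nonneg hs0.le, dist_comm, dist_eq_norm]
  have hpε : s * d < ε := by
    rw [hs, div_mul_eq_mul_div, div_lt_iff₀ (by positivity)]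
    nlinarith
  have hgrowth : K * (s * d) ^ 2 ≤ F p - F z := hp ▸ hloc p (hp.trans_lt hpε)
  have hconv : F p - F z ≤ s * (F y - F z) := by
    have := hF.2 (mem_univ z) (mem_univ y) (sub_nonneg.2 hs1) hs0.le (sub_add_cancel _ _)
    rw [← AffineMap.lineMap_apply_module] at this
    simp only [smul_eq_mul] at this
    linarith
  have : s * (K * s * d ^ 2) ≤ s * (F y - F z) := by linarith
  calc K * ε / (ε + d) * d ^ 2 = K * s * d ^ 2 := by rw [hs]; ring
    _ ≤ F y - F z := le_of_mul_le_mul_left this hs0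

theorem exists_quadratic_growth_on_sublevel {E : Type*} [NormedAddCommGroup E]
    [NormedSpace ℝ E] {F : E → ℝ} {z : E} {K ε : ℝ} (hF : ConvexOn ℝ univ F) (hK : 0 < K)
    (hε : 0 < ε) (hloc : ∀ y, ‖y - z‖ < ε → K * ‖y - z‖ ^ 2 ≤ F y - F z) (M : ℝ) :
    ∃ K' > 0, ∀ y, F y - F z ≤ M → K' * ‖y - z‖ ^ 2 ≤ F y - F z := by
  set R := ε + |M| / (K * ε)
  refine ⟨K * ε / (ε + R), by positivity, fun y hy => ?_⟩
  have hgrowth := global_growth_of_local_quadratic_growth hF hε hloc y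
  set d := ‖y - z‖
  have hdR : d ≤ R := by
    have hvalue : K * ε * d ^ 2 / (ε + d) ≤ |M| := by
      rw [← div_mul_eq_mul_div]
      exact hgrowth.trans (hy.trans (le_abs_self M))
    have hlinear : K * ε * (d - ε) ≤ K * ε * d ^ 2 / (ε + d) := by
      rw [le_div_iff₀ (by positivity)]
      nlinarith [show 0 ≤ K * ε * ε ^ 2 by positivity]
    have hexcess : d - ε ≤ |M| / (K * ε) :=
      (le_div_iff₀' (by positivity)).2 (hlinear.trans hvalue)
    linarith
  calc K * ε / (ε + R) * d ^ 2 ≤ K * ε / (ε + d) * d ^ 2 := by gcongr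
    _ ≤ F y - F z := hgrowth

theorem tendsto_of_quadratic_growth {ι E : Type*} [SeminormedAddCommGroup E] {l : Filter ι}
    {x : ι → E} {z : E} {f : ι → ℝ} {K : ℝ} (hK : 0 < K)
    (hgrowth : ∀ᶠ i in l, K * ‖x i - z‖ ^ 2 ≤ f i) (hf : Tendsto f l (𝓝 0)) :
    Tendsto x l (𝓝 z) := by
  rw [tendsto_iff_norm_sub_tendsto_zero]
  have hsqrt : Tendsto (fun i => √(f i / K)) l (𝓝 0) := by
    simpa using (hf.div_const K).sqrt
  refine squeeze_zero' (.of_forall fun i => norm_nonneg _) ?_ hsqrt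
  filter_upwards [hgrowth] with i hi
  exact Real.le_sqrt_of_sq_le ((le_div_iff₀' hK).2 hi)

end QuadraticGrowth

section Damping

open Set Real Filter Topology

/-- A damping coefficient `a` that is positive on `[t₀, ∞)` and tends to zero more slowly than any
exponential, with a nonnegative antiderivative `Γ` tending to infinity. The slowness is expressed
by the logarithmic derivative `b` of `a`, which must vanish at infinity. -/
structure IsVanishingDamping (a b Γ : ℝ → ℝ) (t₀ : ℝ) : Prop where
  pos : ∀ t ∈ Ici t₀, 0 < a t
  hasDerivAt : ∀ t ∈ Ici t₀, HasDerivAt a (a t * b t) t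
  hasDerivAt_antideriv : ∀ t ∈ Ici t₀, HasDerivAt Γ (a t) t
  antideriv_nonneg : ∀ t ∈ Ici t₀, 0 ≤ Γ t
  tendsto_zero : Tendsto a atTop (𝓝 0)
  tendsto_logDeriv_zero : Tendsto b atTop (𝓝 0)
  tendsto_antideriv_atTop : Tendsto Γ atTop atTop

variable {a b Γ : ℝ → ℝ} {t₀ m : ℝ}

namespace IsVanishingDamping

theorem eventually_cross_terms_small (h : IsVanishingDamping a b Γ t₀) (μ m : ℝ) {δ ε : ℝ}
    (hδ : 0 < δ) (hε : 0 < ε) : ∀ᶠ t in atTop,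
      |μ * (b t - (1 - μ) * a t + m * a t)| ≤ δ ∧
        |μ * (b t - (1 - μ) * a t + m * a t)| / 2 + μ ^ 2 * (a t * b t + m * a t ^ 2 / 2) ≤ ε := by
  have ha := h.tendsto_zero
  have hb := h.tendsto_logDeriv_zero
  have hc : Tendsto (fun t => |μ * (b t - (1 - μ) * a t + m * a t)|) atTop (𝓝 0) := by
    simpa using (((hb.sub (ha.const_mul (1 - μ))).add (ha.const_mul m)).const_mul μ).abs
  have hd : Tendsto (fun t => μ ^ 2 * (a t * b t + m * a t ^ 2 / 2)) atTop (𝓝 0) := by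
    simpa using ((ha.mul hb).add (((ha.pow 2).const_mul m).div_const 2)).const_mul (μ ^ 2)
  have hcd := (hc.div_const 2).add hd
  rw [zero_div, zero_add] at hcd
  exact (hc.eventually_le_const hδ).and (hcd.eventually_le_const hε)

theorem integrableOn_exp_mul_of_le {p : ℝ → ℝ} {k : ℝ} (h : IsVanishingDamping a b Γ t₀)
    (hk : k ≤ m) (hp : ContinuousOn p (Ici t₀))
    (hint : IntegrableOn (fun t => exp (m * Γ t) * p t) (Ici t₀)) :
    IntegrableOn (fun t => exp (k * Γ t) * p t) (Ici t₀) := by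
  have hΓ : ContinuousOn Γ (Ici t₀) := HasDerivAt.continuousOn h.hasDerivAt_antideriv
  refine Integrable.mono hint
    (((hΓ.const_mul k).rexp.mul hp).aestronglyMeasurable measurableSet_Ici) ?_
  filter_upwards [ae_restrict_mem measurableSet_Ici] with t ht
  rw [norm_mul, norm_mul, norm_of_nonneg (exp_pos _).le, norm_of_nonneg (exp_pos _).le]
  have := h.antideriv_nonneg t ht
  gcongr

theorem tendsto_mul_exp_neg (h : IsVanishingDamping a b Γ t₀) (hm : 0 < m) (C : ℝ) :
    Tendsto (fun t => C * exp (-(m * Γ t))) atTop (𝓝 0) := by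
  simpa using (tendsto_exp_neg_atTop_nhds_zero.comp
    (h.tendsto_antideriv_atTop.const_mul_atTop hm)).const_mul C

end IsVanishingDamping

theorem hasDerivAt_const_div_rpow (α θ : ℝ) {t : ℝ} (ht : 0 < t) :
    HasDerivAt (fun t => α / t ^ θ) (α / t ^ θ * (-θ / t)) t := by
  have hrpow := ((hasDerivAt_rpow_const (p := θ) (Or.inl ht.ne')).fun_inv
    (rpow_pos_of_pos ht θ).ne').const_mul α
  refine hrpow.congr_deriv ?_
  rw [rpow_sub_one ht.ne']
  field_simp

theorem isVanishingDamping_const_div_rpow {α θ : ℝ} (hα : 0 < α) (ht₀ : 0 < t₀) (hθ : 0 < θ)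
    (hθ1 : θ < 1) :
    IsVanishingDamping (fun t => α / t ^ θ) (fun t => -θ / t)
      (fun t => α / (1 - θ) * (t ^ (1 - θ) - t₀ ^ (1 - θ))) t₀ := by
  have hθ' : 0 < 1 - θ := sub_pos.2 hθ1
  have hpos : ∀ t ∈ Ici t₀, 0 < t := fun t ht => ht₀.trans_le ht
  refine ⟨fun t ht => ?_, fun t ht => hasDerivAt_const_div_rpow α θ (hpos t ht), fun t ht => ?_,
    fun t ht => ?_, ?_, ?_, ?_⟩
  · have := hpos t ht
    positivity
  · have hpow := hasDerivAt_rpow_const (p := 1 - θ) (Or.inl (hpos t ht).ne')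
    refine ((hpow.sub_const (t₀ ^ (1 - θ))).const_mul (α / (1 - θ))).congr_deriv ?_
    rw [sub_sub_cancel_left, rpow_neg (hpos t ht).le]
    field_simp
  · exact mul_nonneg (by positivity) (sub_nonneg.2 (rpow_le_rpow ht₀.le ht hθ'.le))
  · exact (tendsto_rpow_atTop hθ).const_div_atTop α
  · exact tendsto_id.const_div_atTop (-θ)
  · exact (tendsto_atTop_add_const_right _ _ (tendsto_rpow_atTop hθ')).const_mul_atTop
      (by positivity)

end Damping

section InertialDynamics

open Set Real Filter Topology

variable {E : Type*} [NormedAddCommGroup E] [InnerProductSpace ℝ E] {F : E → ℝ} {z : E}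
  {a b Γ κ : ℝ → ℝ} {t₀ γ m K : ℝ} {g x x' x'' : ℝ → E}

/-- The Lyapunov function of the trajectory `x` with velocity `x'`, anchored at `z`. For `κ = 0` it
is the mechanical energy; the decay rate comes from taking `κ` proportional to the damping. -/
noncomputable def inertialLyapunov (F : E → ℝ) (z : E) (κ : ℝ → ℝ) (x x' : ℝ → E) (t : ℝ) : ℝ :=
  F (x t) - F z + 1 / 2 * ‖x' t + κ t • (x t - z)‖ ^ 2

theorem inertialLyapunov_eq (t : ℝ) : inertialLyapunov F z κ x x' t = F (x t) - F z
    + 1 / 2 * (‖x' t‖ ^ 2 + 2 * κ t * ⟪x t - z, x' t⟫ + κ t ^ 2 * ‖x t - z‖ ^ 2) := by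
  rw [inertialLyapunov, norm_add_sq_real, inner_smul_right, norm_smul, mul_pow, norm_eq_abs,
    sq_abs, real_inner_comm]
  ring

theorem sub_le_inertialLyapunov (t : ℝ) : F (x t) - F z ≤ inertialLyapunov F z κ x x' t :=
  le_add_of_nonneg_right (by positivity)

theorem inner_le_one_add_inertialLyapunov_mul_norm {t : ℝ} (hz : F z ≤ F (x t)) (w : E) :
    ⟪x' t + κ t • (x t - z), w⟫ ≤ (1 + inertialLyapunov F z κ x x' t) * ‖w‖ := by
  have hnorm : ‖x' t + κ t • (x t - z)‖ ≤ 1 + inertialLyapunov F z κ x x' t := by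
    rw [inertialLyapunov]
    nlinarith [sq_nonneg (‖x' t + κ t • (x t - z)‖ - 1)]
  exact (real_inner_le_norm _ _).trans (mul_le_mul_of_nonneg_right hnorm (norm_nonneg w))

theorem mul_inner_add_mul_norm_sq_le {p v : E} {c d δ f K : ℝ} (hf : K * ‖p‖ ^ 2 ≤ f)
    (hc : |c| ≤ δ) (hcd : |c| / 2 + d ≤ δ * K) :
    c * ⟪p, v⟫ + d * ‖p‖ ^ 2 ≤ δ * f + δ / 2 * ‖v‖ ^ 2 := by
  have hinner : c * ⟪p, v⟫ ≤ |c| / 2 * ‖p‖ ^ 2 + |c| / 2 * ‖v‖ ^ 2 := calc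
    c * ⟪p, v⟫ ≤ |c| * |⟪p, v⟫| := (le_abs_self _).trans (abs_mul _ _).le
    _ ≤ |c| * (‖p‖ * ‖v‖) := by gcongr; exact abs_real_inner_le_norm p v
    _ ≤ |c| / 2 * ‖p‖ ^ 2 + |c| / 2 * ‖v‖ ^ 2 := by
      nlinarith [mul_nonneg (abs_nonneg c) (sq_nonneg (‖p‖ - ‖v‖))]
  have hδ : 0 ≤ δ := (abs_nonneg c).trans hc
  calc c * ⟪p, v⟫ + d * ‖p‖ ^ 2
      ≤ (|c| / 2 + d) * ‖p‖ ^ 2 + |c| / 2 * ‖v‖ ^ 2 := by linarith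
    _ ≤ δ * K * ‖p‖ ^ 2 + δ / 2 * ‖v‖ ^ 2 := by gcongr
    _ ≤ δ * f + δ / 2 * ‖v‖ ^ 2 := by
      rw [mul_assoc]
      gcongr

variable [CompleteSpace E]

theorem hasDerivAt_comp_inner_gradient {x : ℝ → E} {x' : E} {t : ℝ}
    (hF : DifferentiableAt ℝ F (x t)) (hx : HasDerivAt x x' t) :
    HasDerivAt (fun s => F (x s)) ⟪gradient F (x t), x'⟫ t := by
  rw [inner_gradient_left]
  exact hF.hasFDerivAt.comp_hasDerivAt t hx

theorem sub_le_inner_gradient {y : E} (hconv : ConvexOn ℝ univ F) (hF : DifferentiableAt ℝ F y)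
    (z : E) : F y - F z ≤ ⟪gradient F y, y - z⟫ := by
  have hline : ConvexOn ℝ univ (F ∘ AffineMap.lineMap (k := ℝ) z y) := hconv.comp_affineMap _
  have hderiv : HasDerivAt (F ∘ AffineMap.lineMap (k := ℝ) z y) ⟪gradient F y, y - z⟫ 1 := by
    have hy : AffineMap.lineMap z y (1 : ℝ) = y := AffineMap.lineMap_apply_one z y
    have := hasDerivAt_comp_inner_gradient (by rwa [hy])
      (AffineMap.hasDerivAt_lineMap (a := z) (b := y) (x := (1 : ℝ)))
    rwa [hy] at this
  simpa [slope_def_field] using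
    hline.slope_le_of_hasDerivAt (mem_univ 0) (mem_univ 1) one_pos hderiv

/-- `x`, with velocity `x'` and acceleration `x''`, solves the perturbed inertial equation
`x'' + a x' + ∇F(x) = g` on `[t₀, ∞)`. -/
structure IsInertialSolution (F : E → ℝ) (a : ℝ → ℝ) (g : ℝ → E) (t₀ : ℝ)
    (x x' x'' : ℝ → E) : Prop where
  hasDerivAt : ∀ t ∈ Ici t₀, HasDerivAt x (x' t) t
  hasDerivAt_velocity : ∀ t ∈ Ici t₀, HasDerivAt x' (x'' t) t
  ode : ∀ t ∈ Ici t₀, x'' t + a t • x' t + gradient F (x t) = g t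

namespace IsInertialSolution

theorem hasDerivAt_inertialLyapunov {κ' t : ℝ} (hsol : IsInertialSolution F a g t₀ x x' x'')
    (hF : DifferentiableAt ℝ F (x t)) (ht : t ∈ Ici t₀) (hκ : HasDerivAt κ κ' t) :
    HasDerivAt (inertialLyapunov F z κ x x')
      (⟪x' t + κ t • (x t - z), g t⟫ - κ t * ⟪gradient F (x t), x t - z⟫
        - (a t - κ t) * ‖x' t‖ ^ 2 + (κ' - κ t * (a t - κ t)) * ⟪x t - z, x' t⟫
        + κ t * κ' * ‖x t - z‖ ^ 2) t := by
  have hvalue := (hasDerivAt_comp_inner_gradient hF (hsol.hasDerivAt t ht)).sub_const (F z)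
  have hanchored := (hsol.hasDerivAt_velocity t ht).fun_add
    (hκ.fun_smul ((hsol.hasDerivAt t ht).sub_const z))
  refine (hvalue.fun_add (hanchored.norm_sq.const_mul (1 / 2))).congr_deriv ?_
  rw [← hsol.ode t ht]
  simp only [inner_add_left, inner_add_right, inner_smul_left, inner_smul_right, conj_trivial,
    ← real_inner_self_eq_norm_sq]
  rw [real_inner_comm (x t - z) (x' t), real_inner_comm (x' t) (gradient F (x t)),
    real_inner_comm (x t - z) (gradient F (x t))]
  ring

theorem exists_forall_value_le (hsol : IsInertialSolution F a g t₀ x x' x'')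
    (hF : Differentiable ℝ F) (hz : ∀ y, F z ≤ F y) (ha : ∀ t ∈ Ici t₀, 0 ≤ a t)
    (hg : ContinuousOn g (Ici t₀)) (hint : IntegrableOn (fun t => ‖g t‖) (Ici t₀)) :
    ∃ M, ∀ t ∈ Ici t₀, F (x t) - F z ≤ M := by
  have hderiv := fun t ht =>
    hsol.hasDerivAt_inertialLyapunov (z := z) (hF (x t)) ht (hasDerivAt_const t 0)
  obtain ⟨M, -, hM⟩ := exists_le_mul_exp_neg_of_deriv_add_mul_le (Λ := 0) (l := 0) hderiv
    (fun t _ => (sub_nonneg.2 (hz (x t))).trans (sub_le_inertialLyapunov t))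
    (fun t _ => hasDerivAt_const t 0) (fun _ _ => le_rfl) hg.norm (fun _ _ => norm_nonneg _)
    (by simpa using hint) fun t ht => by
      have hpower := inner_le_one_add_inertialLyapunov_mul_norm (κ := fun _ => 0) (x' := x')
        (hz (x t)) (g t)
      have hfriction := mul_nonneg (ha t ht) (sq_nonneg ‖x' t‖)
      simp only [Pi.zero_apply, zero_mul, sub_zero, add_zero]
      linarith
  exact ⟨M, fun t ht => (sub_le_inertialLyapunov t).trans (by simpa using hM t ht)⟩

theorem eventually_lyapunov_dissipation (hsol : IsInertialSolution F a g t₀ x x' x'')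
    (hdamp : IsVanishingDamping a b Γ t₀) (hF : Differentiable ℝ F) (hγ : 0 < γ)
    (hmγ : m < 2 * γ / (γ + 2)) (hK : 0 < K)
    (hgrad : ∀ᶠ t in atTop, F (x t) - F z ≤ 1 / γ * ⟪gradient F (x t), x t - z⟫)
    (hgrowth : ∀ t ∈ Ici t₀, K * ‖x t - z‖ ^ 2 ≤ F (x t) - F z) :
    ∀ᶠ t in atTop,
      deriv (inertialLyapunov F z (fun s => 2 / (γ + 2) * a s) x x') t
          + m * a t * inertialLyapunov F z (fun s => 2 / (γ + 2) * a s) x x' t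
        ≤ (1 + inertialLyapunov F z (fun s => 2 / (γ + 2) * a s) x x' t) * ‖g t‖ := by
  have hδ : 0 < 2 * γ / (γ + 2) - m := sub_pos.2 hmγ
  filter_upwards [eventually_ge_atTop t₀, hgrad,
    hdamp.eventually_cross_terms_small (2 / (γ + 2)) m hδ (mul_pos hδ hK)]
    with t ht hgrad ⟨hc, hcd⟩
  set μ := 2 / (γ + 2) with hμ
  set δ := 2 * γ / (γ + 2) - m with hδ_def
  -- This `μ` balances the two margins: `μ * γ - m` for the potential, `2 * (1 - μ) - m` for the
  -- kinetic energy.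
  have hμγ : μ * γ = m + δ := by rw [hμ, hδ_def]; ring
  have hμδ : 1 - μ = m / 2 + δ / 2 := by rw [hμ, hδ_def]; field_simp; ring
  have hμ0 : 0 < μ := by positivity
  clear_value μ δ
  have hpotential : (m + δ) * (F (x t) - F z) ≤ μ * ⟪gradient F (x t), x t - z⟫ := by
    rw [one_div, ← div_eq_inv_mul, le_div_iff₀' hγ] at hgrad
    rw [← hμγ, mul_assoc]
    gcongr
  have hz : F z ≤ F (x t) := by
    have : 0 ≤ K * ‖x t - z‖ ^ 2 := by positivity
    exact sub_nonneg.1 (this.trans (hgrowth t ht))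
  rw [(hsol.hasDerivAt_inertialLyapunov (hF (x t)) ht
    ((hdamp.hasDerivAt t ht).const_mul μ)).deriv]
  refine le_trans ?_ (inner_le_one_add_inertialLyapunov_mul_norm hz (g t))
  rw [inertialLyapunov_eq]
  have hcross := mul_inner_add_mul_norm_sq_le (v := x' t) (hgrowth t ht) hc hcd
  have hmargin :=
    mul_nonneg (hdamp.pos t ht).le (sub_nonneg.2 (add_le_add hcross hpotential))
  linear_combination hmargin - a t * ‖x' t‖ ^ 2 * hμδ

theorem exists_value_le_mul_exp_neg (hsol : IsInertialSolution F a g t₀ x x' x'')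
    (hdamp : IsVanishingDamping a b Γ t₀) (hF : Differentiable ℝ F) (hγ : 0 < γ) (hm : 0 ≤ m)
    (hmγ : m < 2 * γ / (γ + 2)) (hK : 0 < K) (hg : ContinuousOn g (Ici t₀))
    (hgrad : ∀ᶠ t in atTop, F (x t) - F z ≤ 1 / γ * ⟪gradient F (x t), x t - z⟫)
    (hgrowth : ∀ t ∈ Ici t₀, K * ‖x t - z‖ ^ 2 ≤ F (x t) - F z)
    (hint : IntegrableOn (fun t => exp (m * Γ t) * ‖g t‖) (Ici t₀)) :
    ∃ C > 0, ∃ t₁ ≥ t₀, ∀ t ≥ t₁, F (x t) - F z ≤ C * exp (-(m * Γ t)) := by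
  set V := inertialLyapunov F z (fun s => 2 / (γ + 2) * a s) x x'
  obtain ⟨t₁, ht₁⟩ := eventually_atTop.1 <| (eventually_ge_atTop t₀).and <|
    hsol.eventually_lyapunov_dissipation hdamp hF hγ hmγ hK hgrad hgrowth
  have hsub : Ici t₁ ⊆ Ici t₀ := fun t ht => (ht₁ t ht).1
  have hderiv : ∀ t ∈ Ici t₁, HasDerivAt V (deriv V t) t := fun t ht =>
    (hsol.hasDerivAt_inertialLyapunov (hF (x t)) (hsub ht)
      ((hdamp.hasDerivAt t (hsub ht)).const_mul _)).differentiableAt.hasDerivAt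
  have hV : ∀ t ∈ Ici t₀, 0 ≤ V t := fun t ht =>
    (by positivity : 0 ≤ K * ‖x t - z‖ ^ 2).trans <|
      (hgrowth t ht).trans (sub_le_inertialLyapunov t)
  obtain ⟨C, hC, hle⟩ := exists_le_mul_exp_neg_of_deriv_add_mul_le hderiv
    (fun t ht => hV t (hsub ht))
    (fun t ht => (hdamp.hasDerivAt_antideriv t (hsub ht)).const_mul m)
    (fun t ht => mul_nonneg hm (hdamp.antideriv_nonneg t (hsub ht))) (hg.norm.mono hsub)
    (fun _ _ => norm_nonneg _) (hint.mono_set hsub) (fun t ht => (ht₁ t ht).2)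
  exact ⟨C, hC, t₁, (ht₁ t₁ le_rfl).1, fun t ht => (sub_le_inertialLyapunov t).trans (hle t ht)⟩

theorem exists_quadratic_growth_along (hsol : IsInertialSolution F a g t₀ x x' x'')
    (hconv : ConvexOn ℝ univ F) (hF : Differentiable ℝ F) (ha : ∀ t ∈ Ici t₀, 0 ≤ a t)
    (hg : ContinuousOn g (Ici t₀)) (hint : IntegrableOn (fun t => ‖g t‖) (Ici t₀)) (hK : 0 < K)
    (hgrowth : ∀ᶠ y in 𝓝 z, K * ‖y - z‖ ^ 2 ≤ F y - F z) :
    ∃ K' > 0, ∀ t ∈ Ici t₀, K' * ‖x t - z‖ ^ 2 ≤ F (x t) - F z := by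
  simp only [Metric.eventually_nhds_iff, dist_eq_norm] at hgrowth
  obtain ⟨ε, hε, hloc⟩ := hgrowth
  have hmin : ∀ y, F z ≤ F y := fun y => by
    have hgrowth_y := global_growth_of_local_quadratic_growth hconv hε @hloc y
    exact sub_nonneg.1 (le_trans (by positivity) hgrowth_y)
  obtain ⟨M, hM⟩ := hsol.exists_forall_value_le hF hmin ha hg hint
  obtain ⟨K', hK', hgrowth'⟩ :=
    exists_quadratic_growth_on_sublevel hconv hK hε @hloc M
  exact ⟨K', hK', fun t ht => hgrowth' (x t) (hM t ht)⟩

theorem tendsto_minimizer (hsol : IsInertialSolution F a g t₀ x x' x'')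
    (hdamp : IsVanishingDamping a b Γ t₀) (hconv : ConvexOn ℝ univ F) (hF : Differentiable ℝ F)
    (hm : 0 < m) (hK : 0 < K) (hg : ContinuousOn g (Ici t₀))
    (hgrowth : ∀ t ∈ Ici t₀, K * ‖x t - z‖ ^ 2 ≤ F (x t) - F z)
    (hint : IntegrableOn (fun t => exp (m * Γ t) * ‖g t‖) (Ici t₀)) :
    Tendsto x atTop (𝓝 z) := by
  have hk : 0 < min m (1 / 2) := lt_min hm one_half_pos
  obtain ⟨C, -, t₁, -, hdecay⟩ := hsol.exists_value_le_mul_exp_neg hdamp hF one_pos hk.le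
    ((min_le_right m (1 / 2)).trans_lt (by norm_num)) hK hg
    (.of_forall fun t => by simpa using sub_le_inner_gradient hconv (hF (x t)) z) hgrowth
    (hdamp.integrableOn_exp_mul_of_le (min_le_left _ _) hg.norm hint)
  refine tendsto_of_quadratic_growth hK ?_ (hdamp.tendsto_mul_exp_neg hk C)
  filter_upwards [eventually_ge_atTop t₀, eventually_ge_atTop t₁] with t ht₀ ht₁
  exact (hgrowth t ht₀).trans (hdecay t ht₁)

end IsInertialSolution

theorem stmt_3_general (hconv : ConvexOn ℝ univ F) (hF : Differentiable ℝ F)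
    (hγ : 0 < γ) (hm : 0 < m) (hmγ : m < 2 * γ / (γ + 2))
    (hdamp : IsVanishingDamping a b Γ t₀) (hg : ContinuousOn g (Ici t₀))
    (hsol : IsInertialSolution F a g t₀ x x' x'')
    (hgrad : ∀ᶠ y in 𝓝 z, F y - F z ≤ 1 / γ * ⟪gradient F y, y - z⟫)
    (hgrowth : ∃ K > 0, ∀ᶠ y in 𝓝 z, K * ‖y - z‖ ^ 2 ≤ F y - F z)
    (hint : IntegrableOn (fun t => exp (m * Γ t) * ‖g t‖) (Ici t₀)) :
    ∃ C > 0, ∃ t₁ ≥ t₀, ∀ t ≥ t₁, F (x t) - F z ≤ C * exp (-(m * Γ t)) := by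
  obtain ⟨K, hK, hgrowth⟩ := hgrowth
  have hint_norm : IntegrableOn (fun t => ‖g t‖) (Ici t₀) := by
    simpa using hdamp.integrableOn_exp_mul_of_le hm.le hg.norm hint
  obtain ⟨K', hK', hgrowth'⟩ := hsol.exists_quadratic_growth_along hconv hF
    (fun t ht => (hdamp.pos t ht).le) hg hint_norm hK hgrowth
  have hlim : Tendsto x atTop (𝓝 z) :=
    hsol.tendsto_minimizer hdamp hconv hF hm hK' hg hgrowth' hint
  exact hsol.exists_value_le_mul_exp_neg hdamp hF hγ hm.le hmγ hK' hg
    (hlim.eventually hgrad) hgrowth' hint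

end InertialDynamics

theorem stmt_3
    {n : ℕ} (hn : 1 ≤ n)
    (F : EuclideanSpace ℝ (Fin n) → ℝ) (Fstar : ℝ)
    (Xstar : Set (EuclideanSpace ℝ (Fin n)))
    (hXstar : Xstar = {z | ∀ y, F z ≤ F y})
    (hne : Xstar.Nonempty)
    (hFstar : ∀ z ∈ Xstar, F z = Fstar)
    (hconv : ConvexOn ℝ Set.univ F)
    (hdiff : Differentiable ℝ F)
    (α t₀ θ γ m : ℝ) (hα : 0 < α) (ht₀ : 0 < t₀) (hθ : 0 < θ) (hθ1 : θ < 1)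
    (hγ : 1 ≤ γ) (hγ2 : γ ≤ 2) (hm : 0 < m) (hm2 : m < 2 * γ / (γ + 2))
    (Γ : ℝ → ℝ) (hΓ : ∀ t, Γ t = (α / (1 - θ)) * (t ^ (1 - θ) - t₀ ^ (1 - θ)))
    (g x x' x'' : ℝ → EuclideanSpace ℝ (Fin n))
    (hg : ContinuousOn g (Set.Ici t₀))
    (hx : ∀ t ∈ Set.Ici t₀, HasDerivAt x (x' t) t)
    (hx'd : ∀ t ∈ Set.Ici t₀, HasDerivAt x' (x'' t) t)
    (hx''c : ContinuousOn x'' (Set.Ici t₀))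
    (hode : ∀ t ∈ Set.Ici t₀, x'' t + (α / t ^ θ) • x' t + gradient F (x t) = g t)
    (hH1 : ∀ z ∈ Xstar, ∃ η > 0, ∀ y : EuclideanSpace ℝ (Fin n),
      ‖y - z‖ < η → F y - Fstar ≤ (1 / γ) * ⟪gradient F y, y - z⟫)
    (hH2 : ∀ z ∈ Xstar, ∃ K > 0, ∃ ε > 0, ∀ y : EuclideanSpace ℝ (Fin n),
      ‖y - z‖ < ε → K * Metric.infDist y Xstar ^ (2 : ℝ) ≤ F y - Fstar)
    (xstar : EuclideanSpace ℝ (Fin n)) (huniq : Xstar = {xstar})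
    (hint : IntegrableOn (fun t : ℝ => Real.exp (m * Γ t) * ‖g t‖) (Set.Ici t₀)) :
    ∃ C > 0, ∃ t₁ ≥ t₀, ∀ t ≥ t₁,
      F (x t) - Fstar ≤ C * Real.exp (-(m * Γ t)) := by
  subst huniq
  obtain rfl := hFstar xstar rfl
  obtain rfl : Γ = _ := funext hΓ
  have hgrad := hH1 xstar rfl
  have hgrowth := hH2 xstar rfl
  simp only [Metric.infDist_singleton, Real.rpow_two, ← dist_eq_norm] at hgrad hgrowth
  exact stmt_3_general hconv hdiff (by linarith) hm hm2
    (isVanishingDamping_const_div_rpow hα ht₀ hθ hθ1) hg ⟨hx, hx'd, hode⟩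
    (Metric.eventually_nhds_iff.2 hgrad)
    (by simpa only [Metric.eventually_nhds_iff, ← dist_eq_norm] using hgrowth) hint
end

section
/- Let θ = 1, t₀ > 0, γ₁ > 2 and γ₂ ≥ γ₁, and suppose α ≥ (γ₁ + 2)/(γ₁ − 2). Let x : [t₀, ∞) → ℝⁿ be a solution of the unperturbed inertial ODE (g ≡ 0) with damping α/t. If F is coercive (F(x) → +∞ as ‖x‖ → ∞) and satisfies hypotheses H1(γ₁) and H2(γ₂), then there exist C > 0 and t₁ ≥ t₀ such that for all t ≥ t₁, F(x(t)) − F* ≤ C · t^{−2γ₂/(γ₂ − 2)}. -/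
open MeasureTheory
open scoped RealInnerProductSpace

/-!
Put `κ = (α - 1) / 2`, so that the assumption on `α` reads `2 ≤ κ (γ₁ - 2)`, and let `W` be the
energy of the trajectory. Adding to `t² W` the virials about the projection of `x t` on `X*` and
about a relative interior point of `X*` gives a Lyapunov function that makes `∫ t W` finite. Hence
`t² W → 0`, the distance of `x t` to each minimizer converges, and `x t` converges to a minimizer
`z`.

Near `z`, hypothesis H1 at `z` alone bounds `t² W + κ t ⟪x - z, x'⟫` by `H t ^ (-2κ)`. For
`h = ‖x - z‖² / 2` this is a differential inequality `t² W + κ t h' ≤ H t ^ (-2κ)`, useful once `h`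
is controlled by `W`. Comparing it with the momenta about the other minimizers shows that, up to
terms of second order, `x - z` makes no acute angle with the directions `y - z`, `y ∈ X*`;
compactness of the unit sphere then gives `‖x - z‖ ≲ dist(x, X*)`, which H2 bounds by a power of
`W`. Young's inequality and Gronwall yield `h = O(t ^ (-4 / (γ₂ - 2)))`, and the mean value theorem
returns this rate to `t² W`.
-/

namespace InertialDynamics

open Filter Topology Set

section Calculus

lemma antitoneOn_Ici_of_hasDerivAt_nonpos {φ φ' : ℝ → ℝ} {T : ℝ}
    (hφ : ∀ t ≥ T, HasDerivAt φ (φ' t) t) (hφ' : ∀ t ≥ T, φ' t ≤ 0) :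
    AntitoneOn φ (Ici T) :=
  antitoneOn_of_hasDerivWithinAt_nonpos (convex_Ici T)
    (fun t ht => (hφ t ht).continuousAt.continuousWithinAt)
    (fun t ht => (hφ t (interior_subset ht)).hasDerivWithinAt)
    (fun t ht => hφ' t (interior_subset ht))

lemma eventually_le_add_of_hasDerivAt_nonpos {φ : ℝ → ℝ} {d s ρ : ℝ}
    (hφ : HasDerivAt φ d s) (hd : d ≤ 0) (hρ : 0 < ρ) :
    ∀ᶠ y in 𝓝[>] s, φ y ≤ φ s + ρ * (y - s) := by
  have h := (hasDerivWithinAt_iff_tendsto_slope' (lt_irrefl s : s ∉ Ioi s)).1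
    (hφ.hasDerivWithinAt (s := Ioi s))
  filter_upwards [h.eventually_lt_const (hd.trans_lt hρ), self_mem_nhdsWithin] with y hy hys
  have hys' : 0 < y - s := sub_pos.2 hys
  rw [slope_def_field, div_lt_iff₀ hys'] at hy
  linarith

lemma antitoneOn_Ici_of_eventually_le {φ : ℝ → ℝ} {T : ℝ} (hφ : ContinuousOn φ (Ici T))
    (h : ∀ s ≥ T, ∀ ρ > 0, ∀ᶠ y in 𝓝[>] s, φ y ≤ φ s + ρ * (y - s)) :
    AntitoneOn φ (Ici T) := by
  intro a ha b _ hab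
  refine image_le_of_liminf_slope_right_le_deriv_boundary (B := fun _ => φ a) (B' := fun _ => 0)
    (hφ.mono fun u hu => le_trans ha hu.1) le_rfl continuousOn_const
    (fun u _ => hasDerivWithinAt_const ..) (fun u hu ρ hρ => Eventually.frequently ?_)
    (right_mem_Icc.2 hab)
  filter_upwards [h u (le_trans ha hu.1) (ρ / 2) (half_pos hρ), self_mem_nhdsWithin] with y hy hyu
  have hyu' : 0 < y - u := sub_pos.2 hyu
  rw [slope_def_field, div_lt_iff₀ hyu']
  nlinarith

lemma exists_primitive_Ici {φ : ℝ → ℝ} {T : ℝ} (hφ : ContinuousOn φ (Ici T)) :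
    ∃ Φ : ℝ → ℝ, Φ T = 0 ∧ ∀ t ≥ T, HasDerivAt Φ (φ t) t := by
  have hc : Continuous fun t => φ (max t T) :=
    hφ.comp_continuous (by fun_prop) fun t => le_max_right t T
  refine ⟨fun t => ∫ s in T..t, φ (max s T), by simp, fun t ht => ?_⟩
  simpa [max_eq_left ht] using intervalIntegral.integral_hasDerivAt_right
    (hc.intervalIntegrable T t) hc.stronglyMeasurable.stronglyMeasurableAtFilter hc.continuousAt

lemma exists_tendsto_of_antitoneOn_Ici {φ : ℝ → ℝ} {T C : ℝ} (hφ : AntitoneOn φ (Ici T))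
    (hC : ∀ᶠ t in atTop, C ≤ φ t) : ∃ l, Tendsto φ atTop (𝓝 l) := by
  have hanti : Antitone fun t => φ (max t T) := fun a b hab =>
    hφ (le_max_right a T) (le_max_right b T) (max_le_max_right T hab)
  have heq : (fun t => φ (max t T)) =ᶠ[atTop] φ := by
    filter_upwards [eventually_ge_atTop T] with t ht
    rw [max_eq_left ht]
  rcases tendsto_atTop_of_antitone hanti with hbot | ⟨l, hl⟩
  · obtain ⟨t, ht₁, ht₂⟩ := (hC.and
      ((tendsto_congr' heq).1 hbot |>.eventually_lt_atBot C)).exists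
    exact absurd ht₁ ht₂.not_ge
  · exact ⟨l, (tendsto_congr' heq).1 hl⟩

lemma exists_tendsto_of_hasDerivAt_nonneg {φ φ' : ℝ → ℝ} {T C : ℝ}
    (hφ : ∀ t ≥ T, HasDerivAt φ (φ' t) t) (hφ' : ∀ t ≥ T, 0 ≤ φ' t)
    (hC : ∀ᶠ t in atTop, φ t ≤ C) : ∃ l, Tendsto φ atTop (𝓝 l) := by
  have hanti := antitoneOn_Ici_of_hasDerivAt_nonpos (fun t ht => (hφ t ht).neg)
    fun t ht => neg_nonpos.2 (hφ' t ht)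
  obtain ⟨l, hl⟩ := exists_tendsto_of_antitoneOn_Ici (C := -C) hanti
    (hC.mono fun t ht => neg_le_neg ht)
  exact ⟨-l, by simpa using hl.neg⟩

lemma mul_sub_le_primitive_sub {w k K Z : ℝ → ℝ} {T s t : ℝ} (hw : AntitoneOn w (Ici T))
    (hK : ∀ u ≥ T, HasDerivAt K (k u) u) (hk : ∀ u ≥ T, 0 ≤ k u)
    (hZ : ∀ u ≥ T, HasDerivAt Z (k u * w u) u) (hs : T ≤ s) (hst : s ≤ t) :
    w t * (K t - K s) ≤ Z t - Z s := by
  have hmono : MonotoneOn (fun u => Z u - w t * K u) (Icc s t) := by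
    refine monotoneOn_of_hasDerivWithinAt_nonneg (convex_Icc s t)
      (f' := fun u => k u * w u - w t * k u) (fun u hu => ?_) (fun u hu => ?_) fun u hu => ?_
    · have hu := hs.trans hu.1
      exact ((hZ u hu).sub ((hK u hu).const_mul _)).continuousAt.continuousWithinAt
    · have hu := hs.trans (interior_subset hu).1
      exact ((hZ u hu).sub ((hK u hu).const_mul _)).hasDerivWithinAt
    · have huT := hs.trans (interior_subset hu).1
      have := mul_le_mul_of_nonneg_left
        (hw huT (hs.trans hst) (interior_subset hu).2) (hk u huT)
      linarith
  have := hmono (left_mem_Icc.2 hst) (right_mem_Icc.2 hst) hst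
  dsimp only at this
  linarith

lemma tendsto_zero_of_primitive_div_le {w Z : ℝ → ℝ} {T C : ℝ} (hT : 0 < T)
    (hw : AntitoneOn w (Ici T)) (hw₀ : ∀ t ≥ T, 0 ≤ w t)
    (hZ : ∀ t ≥ T, HasDerivAt Z (t⁻¹ * w t) t) (hC : ∀ t ≥ T, Z t ≤ C) :
    Tendsto w atTop (𝓝 0) := by
  have hlog : Tendsto (fun t => Real.log t - Real.log T) atTop atTop :=
    tendsto_atTop_add_const_right _ _ Real.tendsto_log_atTop
  refine squeeze_zero' (eventually_ge_atTop T |>.mono hw₀) ?_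
    ((tendsto_const_nhds (x := C - Z T)).div_atTop hlog)
  filter_upwards [eventually_ge_atTop T, hlog.eventually_gt_atTop 0] with t ht hpos
  have := mul_sub_le_primitive_sub hw (fun u hu => Real.hasDerivAt_log (hT.trans_le hu).ne')
    (fun u hu => inv_nonneg.2 (hT.le.trans hu)) hZ le_rfl ht
  rw [le_div_iff₀ hpos]
  linarith [hC t ht]

lemma tendsto_sq_mul_zero_of_primitive_mul_le {w Z : ℝ → ℝ} {T C : ℝ} (hT : 0 < T)
    (hw : AntitoneOn w (Ici T)) (hw₀ : ∀ t ≥ T, 0 ≤ w t)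
    (hZ : ∀ t ≥ T, HasDerivAt Z (t * w t) t) (hC : ∀ t ≥ T, Z t ≤ C) :
    Tendsto (fun t => t ^ 2 * w t) atTop (𝓝 0) := by
  obtain ⟨l, hl⟩ := exists_tendsto_of_hasDerivAt_nonneg hZ
    (fun t ht => mul_nonneg (hT.le.trans ht) (hw₀ t ht)) (eventually_ge_atTop T |>.mono hC)
  have hhalf : Tendsto (fun t : ℝ => t / 2) atTop atTop := tendsto_id.atTop_div_const two_pos
  have hdiff : Tendsto (fun t => 8 / 3 * (Z t - Z (t / 2))) atTop (𝓝 0) := by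
    simpa using (hl.sub (hl.comp hhalf)).const_mul (8 / 3)
  refine squeeze_zero' ?_ ?_ hdiff
  · filter_upwards [eventually_ge_atTop T] with t ht using mul_nonneg (sq_nonneg t) (hw₀ t ht)
  · filter_upwards [hhalf.eventually_ge_atTop T] with t ht
    have hK (u : ℝ) (_ : u ≥ T) : HasDerivAt (fun u : ℝ => u ^ 2 / 2) u u :=
      ((hasDerivAt_pow 2 u).div_const 2).congr_deriv (by norm_num)
    have := mul_sub_le_primitive_sub hw hK (fun u hu => hT.le.trans hu) hZ ht
      (show t / 2 ≤ t by linarith [hT.le])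
    linarith

lemma exists_le_rpow_of_mul_deriv_le {L L' : ℝ → ℝ} {T p m C : ℝ} (hT : 0 < T) (hmp : m < p)
    (hL : ∀ t ≥ T, HasDerivAt L (L' t) t)
    (hL' : ∀ t ≥ T, t * L' t ≤ -p * L t + C * t ^ (-m)) :
    ∃ c, ∀ t ≥ T, L t ≤ C / (p - m) * t ^ (-m) + c * t ^ (-p) := by
  have hpm : 0 < p - m := sub_pos.2 hmp
  have hanti : AntitoneOn (fun t => t ^ p * (L t - C / (p - m) * t ^ (-m))) (Ici T) := by
    refine antitoneOn_Ici_of_hasDerivAt_nonpos (φ' := fun t =>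
      p * t ^ (p - 1) * (L t - C / (p - m) * t ^ (-m))
        + t ^ p * (L' t - C / (p - m) * (-m * t ^ (-m - 1)))) (fun t ht => ?_) fun t ht => ?_
    · exact (Real.hasDerivAt_rpow_const (Or.inl (hT.trans_le ht).ne')).mul ((hL t ht).sub
        ((Real.hasDerivAt_rpow_const (Or.inl (hT.trans_le ht).ne')).const_mul _))
    · have ht₀ : 0 < t := hT.trans_le ht
      have hfactor : p * t ^ (p - 1) * (L t - C / (p - m) * t ^ (-m))
            + t ^ p * (L' t - C / (p - m) * (-m * t ^ (-m - 1)))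
          = t ^ (p - 1) * (t * L' t + p * L t - C * t ^ (-m)) := by
        rw [Real.rpow_sub_one ht₀.ne', Real.rpow_sub_one ht₀.ne']
        field_simp
        ring
      rw [hfactor]
      exact mul_nonpos_of_nonneg_of_nonpos (Real.rpow_nonneg ht₀.le _) (by linarith [hL' t ht])
  refine ⟨T ^ p * (L T - C / (p - m) * T ^ (-m)), fun t ht => ?_⟩
  have ht₀ : 0 < t := hT.trans_le ht
  have hle := mul_le_mul_of_nonneg_right (hanti self_mem_Ici ht ht)
    (Real.rpow_nonneg ht₀.le (-p))
  have hinv : t ^ p * t ^ (-p) = 1 := by rw [← Real.rpow_add ht₀, add_neg_cancel, Real.rpow_zero]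
  dsimp only at hle
  rw [mul_right_comm, hinv, one_mul] at hle
  linarith

lemma exists_le_mul_rpow_of_mul_deriv_le {L L' : ℝ → ℝ} {T p m C : ℝ} (hT : 1 ≤ T) (hmp : m < p)
    (hL : ∀ t ≥ T, HasDerivAt L (L' t) t)
    (hL' : ∀ t ≥ T, t * L' t ≤ -p * L t + C * t ^ (-m)) :
    ∃ C', ∀ t ≥ T, L t ≤ C' * t ^ (-m) := by
  obtain ⟨c, hc⟩ := exists_le_rpow_of_mul_deriv_le (by linarith) hmp hL hL'
  refine ⟨|C / (p - m)| + |c|, fun t ht => (hc t ht).trans ?_⟩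
  have hpow : t ^ (-p) ≤ t ^ (-m) := Real.rpow_le_rpow_of_exponent_le (hT.trans ht) (by linarith)
  have ht₀ : 0 ≤ t := by linarith
  calc C / (p - m) * t ^ (-m) + c * t ^ (-p)
      ≤ |C / (p - m)| * t ^ (-m) + |c| * t ^ (-p) := by gcongr <;> exact le_abs_self _
    _ ≤ |C / (p - m)| * t ^ (-m) + |c| * t ^ (-m) := by gcongr
    _ = (|C / (p - m)| + |c|) * t ^ (-m) := by ring

lemma tendsto_zero_of_mul_deriv_le {L L' u : ℝ → ℝ} {T p : ℝ} (hp : 0 < p)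
    (hL : ∀ t ≥ T, HasDerivAt L (L' t) t) (hL₀ : ∀ t ≥ T, 0 ≤ L t)
    (hL' : ∀ t ≥ T, t * L' t ≤ -p * L t + u t) (hu : Tendsto u atTop (𝓝 0)) :
    Tendsto L atTop (𝓝 0) := by
  refine tendsto_order.2 ⟨fun a ha => ?_, fun ε hε => ?_⟩
  · filter_upwards [eventually_ge_atTop T] with t ht using ha.trans_le (hL₀ t ht)
  obtain ⟨S, hS⟩ := eventually_atTop.1 (hu.eventually_le_const (show 0 < p * (ε / 2) by positivity))
  obtain ⟨c, hc⟩ := exists_le_rpow_of_mul_deriv_le (L := L) (L' := L') (T := max (max S T) 1)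
    (C := p * (ε / 2)) (by simp) hp (fun t ht => hL t (by grind)) fun t ht => by
      simpa using (hL' t (by grind)).trans (add_le_add_right (hS t (by grind)) _)
  have hlim : Tendsto (fun t : ℝ => ε / 2 + c * t ^ (-p)) atTop (𝓝 (ε / 2)) := by
    simpa using (tendsto_rpow_neg_atTop hp).const_mul c |>.const_add (ε / 2)
  filter_upwards [hlim.eventually_lt_const (half_lt_self hε),
    eventually_ge_atTop (max (max S T) 1)] with t ht ht'
  refine (hc t ht').trans_lt ?_
  simpa [hp.ne'] using ht

end Calculus

section Compactness

variable {ι E : Type*}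

lemma tendsto_nhdsSet_of_isCompact [TopologicalSpace E] {l : Filter ι} {x : ι → E}
    {F : E → ℝ} {m : ℝ} {K X : Set E} (hF : Continuous F) (hK : IsCompact K)
    (hxK : ∀ᶠ i in l, x i ∈ K) (hFx : Tendsto (fun i => F (x i)) l (𝓝 m))
    (hX : ∀ y ∈ K, F y = m → y ∈ X) : Tendsto x l (𝓝ˢ X) := by
  intro U hU
  obtain ⟨V, hV, hXV, hVU⟩ := mem_nhdsSet_iff_exists.1 hU
  have hclosed : IsClosed (F '' (K \ V)) := ((hK.diff hV).image hF).isClosed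
  have hm : m ∉ F '' (K \ V) := fun ⟨y, hy, hym⟩ => hy.2 (hXV (hX y hy.1 hym))
  have hevent := hFx.eventually (hclosed.isOpen_compl.mem_nhds hm)
  refine mem_map.2 ?_
  filter_upwards [hxK, hevent] with i hiK hi
  by_contra hiU
  exact hi ⟨x i, ⟨hiK, fun hiV => hiU (hVU hiV)⟩, rfl⟩

lemma tendsto_of_mapClusterPt_of_tendsto_dist [PseudoMetricSpace E] {l : Filter ι} {x : ι → E}
    {z : E} {d : ℝ} (hz : MapClusterPt z l x) (hd : Tendsto (fun i => dist (x i) z) l (𝓝 d)) :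
    Tendsto x l (𝓝 z) := by
  obtain ⟨𝒰, h𝒰, hx⟩ := mapClusterPt_iff_ultrafilter.1 hz
  have hd₀ : d = 0 := tendsto_nhds_unique (hd.mono_left h𝒰) (tendsto_iff_dist_tendsto_zero.1 hx)
  exact tendsto_iff_dist_tendsto_zero.2 (hd₀ ▸ hd)

lemma isCompact_setOf_le_of_tendsto_comap_norm [NormedAddCommGroup E] [ProperSpace E]
    {F : E → ℝ} (hF : Continuous F) (hcoer : Tendsto F (comap norm atTop) atTop) (c : ℝ) :
    IsCompact {y | F y ≤ c} := by
  rw [comap_norm_atTop, Metric.cobounded_eq_cocompact] at hcoer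
  obtain ⟨K, hK, hKc⟩ := mem_cocompact.1 (hcoer.eventually_gt_atTop c)
  refine hK.of_isClosed_subset (isClosed_le hF continuous_const) fun y hy => ?_
  by_contra hyK
  exact (show c < F y from hKc hyK).not_ge hy

lemma exists_pos_forall_exists_lt_of_isCompact {κ : Type*} [TopologicalSpace E] {K : Set E}
    (hK : IsCompact K) {f : κ → E → ℝ} (hf : ∀ i, Continuous (f i))
    (hpos : ∀ y ∈ K, ∃ i, 0 < f i y) : ∃ c > 0, ∀ y ∈ K, ∃ i, c < f i y := by
  refine hK.induction_on (p := fun S => ∃ c > 0, ∀ y ∈ S, ∃ i, c < f i y)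
    ⟨1, one_pos, by simp⟩ (fun S T hST ⟨c, hc, hT⟩ => ⟨c, hc, fun y hy => hT y (hST hy)⟩) ?_ ?_
  · rintro S T ⟨c, hc, hS⟩ ⟨c', hc', hT⟩
    refine ⟨min c c', lt_min hc hc', fun y hy => ?_⟩
    rcases hy with hy | hy
    · exact (hS y hy).imp fun i hi => (min_le_left c c').trans_lt hi
    · exact (hT y hy).imp fun i hi => (min_le_right c c').trans_lt hi
  · intro y hy
    obtain ⟨i, hi⟩ := hpos y hy
    exact ⟨{w | f i y / 2 < f i w}, mem_nhdsWithin_of_mem_nhds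
      ((hf i).continuousAt.eventually_const_lt (half_lt_self hi)), f i y / 2, half_pos hi,
      fun w hw => ⟨i, hw⟩⟩

end Compactness

section ConvexGeometry

variable {E : Type*} [NormedAddCommGroup E] [InnerProductSpace ℝ E]

lemma exists_forall_add_smul_sub_mem_of_convex [FiniteDimensional ℝ E] {X : Set E}
    (hX : Convex ℝ X) (hne : X.Nonempty) :
    ∃ a ∈ X, ∃ r > 0, ∀ p ∈ X, ∀ q ∈ X, ∀ c : ℝ, ‖c • (p - q)‖ ≤ r → a + c • (p - q) ∈ X := by
  obtain ⟨-, a, ha, rfl⟩ := hne.intrinsicInterior hX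
  have hsub : interior ((↑) ⁻¹' X : Set (affineSpan ℝ X)) ⊆ (↑) ⁻¹' X := interior_subset
  obtain ⟨r, hr, hball⟩ := Metric.mem_nhds_iff.1 (mem_interior_iff_mem_nhds.1 ha)
  refine ⟨a, hsub ha, r / 2, half_pos hr, fun p hp q hq c hc => ?_⟩
  have hspan : (a : E) + c • (p - q) ∈ affineSpan ℝ X := by
    rw [add_comm]
    exact AffineSubspace.vadd_mem_of_mem_direction (Submodule.smul_mem _ c
      (AffineSubspace.vsub_mem_direction (subset_affineSpan ℝ X hp) (subset_affineSpan ℝ X hq)))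
      a.2
  refine hball (show (⟨_, hspan⟩ : affineSpan ℝ X) ∈ Metric.ball a r from ?_)
  rw [Metric.mem_ball, Subtype.dist_eq, dist_eq_norm, add_sub_cancel_left]
  linarith

/-- `P` maps every point `y` to its metric projection on the convex set `X`, expressed by the
obtuse-angle characterisation. -/
structure IsConvexProjection (X : Set E) (P : E → E) : Prop where
  mem (y : E) : P y ∈ X
  inner_nonpos (y : E) {w : E} (hw : w ∈ X) : ⟪y - P y, w - P y⟫ ≤ 0

lemma exists_isConvexProjection {X : Set E} (hne : X.Nonempty) (hcomplete : IsComplete X)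
    (hX : Convex ℝ X) : ∃ P, IsConvexProjection X P := by
  choose P hPX hP using exists_norm_eq_iInf_of_complete_convex hne hcomplete hX
  exact ⟨P, hPX, fun y _ hw => (norm_eq_iInf_iff_real_inner_le_zero hX (hPX y)).1 (hP y) _ hw⟩

namespace IsConvexProjection

variable {X : Set E} {P : E → E}

lemma sq_norm_sub_le_inner (hP : IsConvexProjection X P) (y w : E) :
    ‖P y - P w‖ ^ 2 ≤ ⟪y - w, P y - P w⟫ := by
  have hy := hP.inner_nonpos y (hP.mem w)
  have hw := hP.inner_nonpos w (hP.mem y)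
  have hsplit : ⟪y - w, P y - P w⟫ - ‖P y - P w‖ ^ 2
      = -⟪y - P y, P w - P y⟫ - ⟪w - P w, P y - P w⟫ := by
    rw [← real_inner_self_eq_norm_sq]
    simp only [inner_sub_left, inner_sub_right]
    ring
  linarith

lemma norm_sub_le (hP : IsConvexProjection X P) (y w : E) : ‖P y - P w‖ ≤ ‖y - w‖ := by
  have hsq := (hP.sq_norm_sub_le_inner y w).trans (real_inner_le_norm _ _)
  rcases (norm_nonneg (P y - P w)).eq_or_lt with h₀ | hpos
  · exact h₀ ▸ norm_nonneg _
  · exact le_of_mul_le_mul_right (by linarith) hpos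

lemma norm_sub_apply_le (hP : IsConvexProjection X P) (y : E) {w : E} (hw : w ∈ X) :
    ‖y - P y‖ ≤ ‖y - w‖ := by
  have hsq : ‖y - w‖ ^ 2 = ‖y - P y‖ ^ 2 - 2 * ⟪y - P y, w - P y⟫ + ‖w - P y‖ ^ 2 := by
    rw [← norm_sub_sq_real, sub_sub_sub_cancel_right]
  refine le_of_sq_le_sq ?_ (norm_nonneg _)
  linarith [hP.inner_nonpos y hw, sq_nonneg ‖w - P y‖]

lemma continuous (hP : IsConvexProjection X P) : Continuous P :=
  (LipschitzWith.of_dist_le_mul (K := 1) fun y w => by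
    simpa [dist_eq_norm] using hP.norm_sub_le y w).continuous

lemma apply_of_mem (hP : IsConvexProjection X P) {z : E} (hz : z ∈ X) : P z = z := by
  have := hP.inner_nonpos z hz
  rw [real_inner_self_eq_norm_sq] at this
  exact (sub_eq_zero.1 (norm_eq_zero.1 (by nlinarith [norm_nonneg (z - P z)]))).symm

end IsConvexProjection

/-- The cone `ℝ₊ (X - z)` of directions pointing from `z` into `X`, without taking its closure. -/
def feasibleCone (X : Set E) (z : E) : Set E := {d | ∃ s : ℝ, 0 ≤ s ∧ ∃ y ∈ X, s • (y - z) = d}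

lemma exists_pos_infDist_feasibleCone_add_inner {X : Set E} {z d : E} (hz : z ∈ X) (hd : d ≠ 0) :
    ∃ y ∈ X, 0 < Metric.infDist d (feasibleCone X z) + ⟪d, y - z⟫ := by
  by_contra! hle
  have hdist : Metric.infDist d (feasibleCone X z) = 0 :=
    (by simpa using hle z hz : Metric.infDist d _ ≤ 0).antisymm Metric.infDist_nonneg
  have hpolar : feasibleCone X z ⊆ {w | ⟪d, w⟫ ≤ 0} := by
    rintro _ ⟨s, hs, y, hy, rfl⟩
    have := hle y hy
    rw [hdist, zero_add] at this
    exact (real_inner_smul_right d (y - z) s).trans_le (mul_nonpos_of_nonneg_of_nonpos hs this)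
  have hclosed : IsClosed {w | ⟪d, w⟫ ≤ 0} := isClosed_le (by fun_prop) continuous_const
  have hne : (feasibleCone X z).Nonempty := ⟨_, 0, le_rfl, z, hz, rfl⟩
  exact hd (real_inner_self_nonpos.1
    (closure_minimal hpolar hclosed ((Metric.mem_closure_iff_infDist_zero hne).2 hdist)))

lemma mul_infDist_feasibleCone_le_infDist {X : Set E} {z u : E} (hz : z ∈ X) (hu : u ≠ z) :
    ‖u - z‖ * Metric.infDist (‖u - z‖⁻¹ • (u - z)) (feasibleCone X z) ≤ Metric.infDist u X := by
  refine (Metric.le_infDist ⟨z, hz⟩).2 fun w hw => ?_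
  have hpos : 0 < ‖u - z‖ := norm_pos_iff.2 (sub_ne_zero.2 hu)
  have hmem : ‖u - z‖⁻¹ • (w - z) ∈ feasibleCone X z := ⟨_, by positivity, w, hw, rfl⟩
  calc ‖u - z‖ * Metric.infDist (‖u - z‖⁻¹ • (u - z)) (feasibleCone X z)
      ≤ ‖u - z‖ * dist (‖u - z‖⁻¹ • (u - z)) (‖u - z‖⁻¹ • (w - z)) := by
        gcongr
        exact Metric.infDist_le_dist_of_mem hmem
    _ = dist u w := by
        rw [dist_smul₀, norm_inv, norm_norm, mul_inv_cancel_left₀ hpos.ne', dist_sub_right]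

/- The closure of the feasible cone at `z` meets the polar cone only in `0`, so by compactness a
unit vector is never simultaneously close to both. -/
lemma exists_pos_mul_norm_sub_le_infDist_add_inner [FiniteDimensional ℝ E] {X : Set E} {z : E}
    (hz : z ∈ X) :
    ∃ c > 0, ∀ u : E, ∃ y ∈ X, c * ‖u - z‖ ≤ Metric.infDist u X + ⟪u - z, y - z⟫ := by
  obtain ⟨c, hc, hsphere⟩ := exists_pos_forall_exists_lt_of_isCompact (isCompact_sphere (0 : E) 1)
    (f := fun (y : X) d => Metric.infDist d (feasibleCone X z) + ⟪d, (y : E) - z⟫)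
    (fun y => by fun_prop) fun d hd => by
      simpa using exists_pos_infDist_feasibleCone_add_inner hz (ne_zero_of_mem_unit_sphere ⟨d, hd⟩)
  refine ⟨c, hc, fun u => ?_⟩
  rcases eq_or_ne u z with rfl | hu
  · exact ⟨u, hz, by simp [Metric.infDist_nonneg]⟩
  have hpos : 0 < ‖u - z‖ := norm_pos_iff.2 (sub_ne_zero.2 hu)
  obtain ⟨⟨y, hy⟩, hlt⟩ := hsphere (‖u - z‖⁻¹ • (u - z)) (by simp [norm_smul, hpos.ne'])
  rw [real_inner_smul_left] at hlt
  refine ⟨y, hy, ?_⟩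
  calc c * ‖u - z‖ ≤ ‖u - z‖ * (Metric.infDist (‖u - z‖⁻¹ • (u - z)) (feasibleCone X z)
        + ‖u - z‖⁻¹ * ⟪u - z, y - z⟫) := by rw [mul_comm]; gcongr
    _ = ‖u - z‖ * Metric.infDist (‖u - z‖⁻¹ • (u - z)) (feasibleCone X z) + ⟪u - z, y - z⟫ := by
        rw [mul_add, mul_inv_cancel_left₀ hpos.ne']
    _ ≤ Metric.infDist u X + ⟪u - z, y - z⟫ := by
        gcongr
        exact mul_infDist_feasibleCone_le_infDist hz hu

end ConvexGeometry

section Potential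

variable {E : Type*} [NormedAddCommGroup E] [InnerProductSpace ℝ E]

/-- `F` is a differentiable convex function with minimum value `m`, attained exactly on `X`. -/
structure IsConvexPotential (F : E → ℝ) (m : ℝ) (X : Set E) : Prop where
  differentiable : Differentiable ℝ F
  convexOn : ConvexOn ℝ univ F
  le (y : E) : m ≤ F y
  mem_iff (y : E) : y ∈ X ↔ F y = m

namespace IsConvexPotential

variable {F : E → ℝ} {m : ℝ} {X : Set E}

lemma of_forall_le (hX : X = {z | ∀ y, F z ≤ F y}) (hne : X.Nonempty) (hm : ∀ z ∈ X, F z = m)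
    (hconv : ConvexOn ℝ univ F) (hdiff : Differentiable ℝ F) : IsConvexPotential F m X := by
  obtain ⟨z, hz⟩ := hne
  have hle (y : E) : m ≤ F y := hm z hz ▸ (hX ▸ hz : z ∈ {z | ∀ y, F z ≤ F y}) y
  exact ⟨hdiff, hconv, hle, fun y => ⟨hm y, fun hy => hX ▸ fun w => hy ▸ hle w⟩⟩

lemma convex (hF : IsConvexPotential F m X) : Convex ℝ X := by
  have hX : X = {y ∈ univ | F y ≤ m} := by
    ext y
    simp [hF.mem_iff, le_antisymm_iff, hF.le y]
  exact hX ▸ hF.convexOn.convex_le m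

lemma isClosed (hF : IsConvexPotential F m X) : IsClosed X := by
  have hX : X = {y | F y = m} := ext hF.mem_iff
  exact hX ▸ isClosed_eq hF.differentiable.continuous continuous_const

lemma sub_le_inner_gradient [CompleteSpace E] (hF : IsConvexPotential F m X) {a : E}
    (ha : a ∈ X) (y : E) :
    F y - m ≤ ⟪gradient F y, y - a⟫ := by
  have hline : HasDerivAt (F ∘ AffineMap.lineMap y a) ⟪gradient F y, a - y⟫ (0 : ℝ) := by
    have hFy := (hF.differentiable (AffineMap.lineMap y a (0 : ℝ))).hasFDerivAt
    refine (hFy.comp_hasDerivAt (0 : ℝ) AffineMap.hasDerivAt_lineMap).congr_deriv ?_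
    rw [AffineMap.lineMap_apply_zero, inner_gradient_left]
  have hslope := (hF.convexOn.comp_affineMap (AffineMap.lineMap y a)).le_slope_of_hasDerivAt
    (mem_univ 0) (mem_univ 1) zero_lt_one hline
  rw [slope_def_field] at hslope
  simp only [Function.comp_apply, AffineMap.lineMap_apply_one, AffineMap.lineMap_apply_zero,
    sub_zero, div_one] at hslope
  rw [(hF.mem_iff a).1 ha, ← neg_sub y a, inner_neg_right] at hslope
  linarith

end IsConvexPotential

end Potential

section Energy

variable {E : Type*} [NormedAddCommGroup E]

/-- The total energy of a trajectory `x` with velocity `v`, the potential energy being measured from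
the minimum value `m`. -/
noncomputable def energy (F : E → ℝ) (m : ℝ) (x v : ℝ → E) (t : ℝ) : ℝ :=
  F (x t) - m + ‖v t‖ ^ 2 / 2

lemma sub_le_energy (F : E → ℝ) (m : ℝ) (x v : ℝ → E) (t : ℝ) : F (x t) - m ≤ energy F m x v t :=
  le_add_of_nonneg_right (by positivity)

variable [InnerProductSpace ℝ E] {F : E → ℝ} {m : ℝ} {X : Set E}

lemma IsConvexPotential.sq_norm_le_energy (hF : IsConvexPotential F m X) (x v : ℝ → E) (t : ℝ) :
    ‖v t‖ ^ 2 / 2 ≤ energy F m x v t :=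
  le_add_of_nonneg_left (sub_nonneg.2 (hF.le _))

lemma IsConvexPotential.energy_nonneg (hF : IsConvexPotential F m X) (x v : ℝ → E) (t : ℝ) :
    0 ≤ energy F m x v t :=
  (by positivity : 0 ≤ ‖v t‖ ^ 2 / 2).trans (hF.sq_norm_le_energy x v t)

/-- The virial of a trajectory about the point `a`: up to the factor `t ^ (1 - 2 * κ)`, the
derivative of `t ^ (2 * κ) * ‖x t - a‖ ^ 2 / 2`. -/
noncomputable def virial (κ : ℝ) (x v : ℝ → E) (a : E) (t : ℝ) : ℝ :=
  t * ⟪x t - a, v t⟫ + κ * ‖x t - a‖ ^ 2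

end Energy

section Trajectory

variable {E : Type*} [NormedAddCommGroup E] [InnerProductSpace ℝ E] [CompleteSpace E]

/-- A trajectory `x` with velocity `v` of the inertial gradient system
`x'' + ((2κ + 1) / t) x' + ∇F(x) = 0` on `[T, ∞)`. In terms of the damping coefficient `α` this is
`κ = (α - 1) / 2`, the parameter for which the derivative of `virial` has no term in
`⟪x - a, v⟫`. -/
structure InertialTrajectory (F : E → ℝ) (κ T : ℝ) (x v : ℝ → E) : Prop where
  pos : 0 < T
  hasDerivAt : ∀ t ≥ T, HasDerivAt x (v t) t
  hasDerivAt_velocity : ∀ t ≥ T, HasDerivAt v (-((2 * κ + 1) / t) • v t - gradient F (x t)) t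

namespace InertialTrajectory

variable {F : E → ℝ} {κ T m t : ℝ} {x v : ℝ → E} {X : Set E} {a : E}

lemma of_ode {α : ℝ} {x'' : ℝ → E} (hT : 0 < T) (hx : ∀ t ≥ T, HasDerivAt x (v t) t)
    (hv : ∀ t ≥ T, HasDerivAt v (x'' t) t)
    (hode : ∀ t ≥ T, x'' t + (α / t) • v t + gradient F (x t) = 0) :
    InertialTrajectory F ((α - 1) / 2) T x v where
  pos := hT
  hasDerivAt := hx
  hasDerivAt_velocity t ht := (hv t ht).congr_deriv <| by
    rw [mul_div_cancel₀ _ two_ne_zero, sub_add_cancel, neg_smul, ← neg_add']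
    exact eq_neg_of_add_eq_zero_left ((add_assoc _ _ _).symm.trans (hode t ht))

lemma pos_of_le (h : InertialTrajectory F κ T x v) (ht : T ≤ t) : 0 < t := h.pos.trans_le ht

lemma mono (h : InertialTrajectory F κ T x v) {T' : ℝ} (hT : T ≤ T') :
    InertialTrajectory F κ T' x v where
  pos := h.pos_of_le hT
  hasDerivAt t ht := h.hasDerivAt t (hT.trans ht)
  hasDerivAt_velocity t ht := h.hasDerivAt_velocity t (hT.trans ht)

lemma hasDerivAt_norm_sub_sq (h : InertialTrajectory F κ T x v) (a : E) (ht : T ≤ t) :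
    HasDerivAt (fun s => ‖x s - a‖ ^ 2) (2 * ⟪x t - a, v t⟫) t :=
  ((h.hasDerivAt t ht).sub_const a).norm_sq

lemma hasDerivAt_mul_inner (h : InertialTrajectory F κ T x v) (a : E) (ht : T ≤ t) :
    HasDerivAt (fun s => s * ⟪x s - a, v s⟫)
      (t * ‖v t‖ ^ 2 - 2 * κ * ⟪x t - a, v t⟫ - t * ⟪gradient F (x t), x t - a⟫) t := by
  refine ((hasDerivAt_id t).mul (((h.hasDerivAt t ht).sub_const a).inner ℝ
    (h.hasDerivAt_velocity t ht))).congr_deriv ?_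
  have ht₀ : t ≠ 0 := (h.pos_of_le ht).ne'
  rw [inner_sub_right, inner_smul_right, real_inner_self_eq_norm_sq,
    real_inner_comm (gradient F (x t))]
  simp only [id, one_mul]
  field_simp
  ring

lemma hasDerivAt_virial (h : InertialTrajectory F κ T x v) (a : E) (ht : T ≤ t) :
    HasDerivAt (virial κ x v a) (t * (‖v t‖ ^ 2 - ⟪gradient F (x t), x t - a⟫)) t :=
  ((h.hasDerivAt_mul_inner a ht).add ((h.hasDerivAt_norm_sub_sq a ht).const_mul κ)).congr_deriv
    (by ring)

lemma hasDerivAt_energy (h : InertialTrajectory F κ T x v) (hF : Differentiable ℝ F) (m : ℝ)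
    (ht : T ≤ t) : HasDerivAt (energy F m x v) (-((2 * κ + 1) / t) * ‖v t‖ ^ 2) t := by
  have hFx := (hF (x t)).hasFDerivAt.comp_hasDerivAt t (h.hasDerivAt t ht)
  refine ((hFx.sub_const m).add ((h.hasDerivAt_velocity t ht).norm_sq.div_const 2)).congr_deriv ?_
  rw [← inner_gradient_left, inner_sub_right, inner_smul_right, real_inner_self_eq_norm_sq,
    real_inner_comm (v t) (gradient F (x t))]
  ring

lemma hasDerivAt_sq_mul_energy (h : InertialTrajectory F κ T x v) (hF : Differentiable ℝ F) (m : ℝ)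
    (ht : T ≤ t) : HasDerivAt (fun s => s ^ 2 * energy F m x v s)
      (2 * t * (F (x t) - m) - 2 * κ * t * ‖v t‖ ^ 2) t := by
  refine ((hasDerivAt_pow 2 t).mul (h.hasDerivAt_energy hF m ht)).congr_deriv ?_
  have ht₀ : t ≠ 0 := (h.pos_of_le ht).ne'
  unfold energy
  push_cast
  field_simp
  ring

lemma continuousOn_energy (h : InertialTrajectory F κ T x v) (hF : Differentiable ℝ F) (m : ℝ) :
    ContinuousOn (energy F m x v) (Ici T) := fun _ ht =>
  (h.hasDerivAt_energy hF m ht).continuousAt.continuousWithinAt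

lemma antitoneOn_energy (h : InertialTrajectory F κ T x v) (hF : Differentiable ℝ F) (m : ℝ)
    (hκ : 0 ≤ κ) : AntitoneOn (energy F m x v) (Ici T) :=
  antitoneOn_Ici_of_hasDerivAt_nonpos (fun _ ht => h.hasDerivAt_energy hF m ht) fun t ht => by
    have ht₀ := h.pos_of_le ht
    rw [neg_mul, neg_nonpos]
    positivity

lemma neg_energy_le_virial_add_div_sq (h : InertialTrajectory F κ T x v)
    (hF : IsConvexPotential F m X) (hκ : 0 ≤ κ) {M : ℝ} (hM : ‖x t - a‖ ≤ M) (ht : T ≤ t) :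
    -energy F m x v t ≤ (virial κ x v a t + M ^ 2 / 2) / t ^ 2 := by
  have ht₀ := h.pos_of_le ht
  have hinner := (abs_le.1 (abs_real_inner_le_norm (x t - a) (v t))).1
  have hmul : ‖x t - a‖ * ‖v t‖ ≤ M * ‖v t‖ := by gcongr
  have hlower : -(t * (M * ‖v t‖)) ≤ virial κ x v a t := by
    have := mul_nonneg hκ (sq_nonneg ‖x t - a‖)
    have := mul_le_mul_of_nonneg_left (show -(M * ‖v t‖) ≤ ⟪x t - a, v t⟫ by linarith) ht₀.le
    unfold virial
    linarith
  calc -energy F m x v t ≤ -(‖v t‖ ^ 2 / 2) := neg_le_neg (hF.sq_norm_le_energy x v t)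
    _ ≤ (virial κ x v a t + M ^ 2 / 2) / t ^ 2 := by
        rw [le_div_iff₀ (by positivity)]
        linarith [sq_nonneg (t * ‖v t‖ - M)]

lemma hasDerivAt_virial_add_div_sq_add_energy (h : InertialTrajectory F κ T x v)
    (hF : Differentiable ℝ F) (m : ℝ) (a : E) (c : ℝ) (hκ : 2 * κ + 1 ≠ 0) (ht : T ≤ t) :
    HasDerivAt (fun s => (virial κ x v a s + c) / s ^ 2
        + 5 / (2 * (2 * κ + 1)) * energy F m x v s)
      ((t ^ 2 * (F (x t) - m - ⟪gradient F (x t), x t - a⟫ - ‖v t‖ ^ 2)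
        - 2 * t * ⟪x t - a, v t⟫ - 2 * κ * ‖x t - a‖ ^ 2 - 2 * c) / t ^ 3
        - t⁻¹ * energy F m x v t) t := by
  have ht₀ := h.pos_of_le ht
  refine ((((h.hasDerivAt_virial a ht).add_const c).div (hasDerivAt_pow 2 t) (by positivity)).add
    ((h.hasDerivAt_energy hF m ht).const_mul _)).congr_deriv ?_
  have hdamping : 5 / (2 * (2 * κ + 1)) * (-((2 * κ + 1) / t) * ‖v t‖ ^ 2)
      = -(5 / 2) * (‖v t‖ ^ 2 / t) := by
    field_simp
  rw [hdamping]
  unfold energy virial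
  push_cast
  field_simp
  ring

/- The virial trades the integrable kinetic energy `‖v t‖ ^ 2 / t` for the potential energy, so the
integral of `energy / t` converges. -/
lemma tendsto_energy_zero (h : InertialTrajectory F κ T x v) (hF : IsConvexPotential F m X)
    (hκ : 0 ≤ κ) (ha : a ∈ X) {M : ℝ} (hM : ∀ t ≥ T, ‖x t - a‖ ≤ M) :
    Tendsto (energy F m x v) atTop (𝓝 0) := by
  obtain ⟨Z, -, hZ⟩ := exists_primitive_Ici (φ := fun t => t⁻¹ * energy F m x v t) (T := T)
    ((continuousOn_inv₀.mono fun t ht => (h.pos_of_le ht).ne').mul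
      (h.continuousOn_energy hF.differentiable m))
  have hW := h.antitoneOn_energy hF.differentiable m hκ
  set Λ := fun t => (virial κ x v a t + M ^ 2 / 2) / t ^ 2
    + 5 / (2 * (2 * κ + 1)) * energy F m x v t + Z t with hΛ
  have hanti : AntitoneOn Λ (Ici T) := by
    refine antitoneOn_Ici_of_hasDerivAt_nonpos (fun t ht =>
      (h.hasDerivAt_virial_add_div_sq_add_energy hF.differentiable m a (M ^ 2 / 2)
        (by positivity) ht).add (hZ t ht)) fun t ht => ?_
    rw [sub_add_cancel]
    have ht₀ := h.pos_of_le ht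
    refine div_nonpos_of_nonpos_of_nonneg ?_ (by positivity)
    have hpotential := mul_le_mul_of_nonneg_left (hF.sub_le_inner_gradient ha (x t)) (sq_nonneg t)
    have hinner := (abs_le.1 (abs_real_inner_le_norm (x t - a) (v t))).1
    have hmul : ‖x t - a‖ * ‖v t‖ ≤ M * ‖v t‖ := by gcongr; exact hM t ht
    have hcross := mul_le_mul_of_nonneg_left
      (show -(M * ‖v t‖) ≤ ⟪x t - a, v t⟫ by linarith) ht₀.le
    linarith [sq_nonneg (t * ‖v t‖ - M), mul_nonneg hκ (sq_nonneg ‖x t - a‖)]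
  have hbound (t : ℝ) (ht : t ≥ T) : Z t ≤ Λ T + energy F m x v T := by
    have hlower := h.neg_energy_le_virial_add_div_sq hF hκ (hM t ht) ht
    have hΛt := hanti self_mem_Ici ht ht
    have hpos := mul_nonneg (by positivity : 0 ≤ 5 / (2 * (2 * κ + 1))) (hF.energy_nonneg x v t)
    simp only [hΛ] at hΛt ⊢
    linarith [hW self_mem_Ici ht ht]
  exact tendsto_zero_of_primitive_div_le h.pos hW (fun t _ => hF.energy_nonneg x v t) hZ hbound

lemma tendsto_nhdsSet (h : InertialTrajectory F κ T x v) (hF : IsConvexPotential F m X)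
    (hκ : 0 ≤ κ) (hne : X.Nonempty) {K : Set E} (hK : IsCompact K) (hxK : ∀ t ≥ T, x t ∈ K) :
    Tendsto x atTop (𝓝ˢ X) := by
  obtain ⟨a, ha⟩ := hne
  obtain ⟨M, hM⟩ := hK.exists_bound_of_continuousOn (f := fun y => y - a) (by fun_prop)
  have hFx : Tendsto (fun t => F (x t) - m) atTop (𝓝 0) :=
    squeeze_zero (fun t => sub_nonneg.2 (hF.le _)) (sub_le_energy F m x v)
      (h.tendsto_energy_zero hF hκ ha fun t ht => hM _ (hxK t ht))
  refine tendsto_nhdsSet_of_isCompact hF.differentiable.continuous hK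
    (eventually_ge_atTop T |>.mono hxK) ?_ fun y _ hy => (hF.mem_iff y).2 hy
  simpa using hFx.add_const m

end InertialTrajectory

end Trajectory

section Convergence

variable {E : Type*} [NormedAddCommGroup E] [InnerProductSpace ℝ E]
  {F : E → ℝ} {κ T m s t γ : ℝ} {x v : ℝ → E} {X : Set E} {P : E → E} {a : E}

/-- The Lyapunov function combining the energy with the virials about two points: `p`, to be taken
as the projection of the current position on `X`, and the fixed anchor `a`. -/
noncomputable def anchoredLyapunov (F : E → ℝ) (m κ : ℝ) (x v : ℝ → E) (p a : E) (t : ℝ) : ℝ :=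
  t ^ 2 * energy F m x v t + κ * virial κ x v p t + κ / 2 * virial κ x v a t

lemma IsConvexPotential.anchoredLyapunov_nonneg (hF : IsConvexPotential F m X) (κ : ℝ)
    (x v : ℝ → E) (p a : E) (t : ℝ) : 0 ≤ anchoredLyapunov F m κ x v p a t := by
  have hsquares (V y w : E) : ‖V‖ ^ 2 / 2 + κ * (⟪y, V⟫ + κ * ‖y‖ ^ 2)
        + κ / 2 * (⟪w, V⟫ + κ * ‖w‖ ^ 2)
      = ‖V + κ • (y + (1 / 2 : ℝ) • w)‖ ^ 2 / 2
        + κ ^ 2 * (‖y - (1 / 2 : ℝ) • w‖ ^ 2 / 2 + ‖w‖ ^ 2 / 4) := by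
    rw [norm_add_sq_real, norm_smul, mul_pow, norm_add_sq_real, norm_sub_sq_real, norm_smul,
      Real.norm_eq_abs κ, sq_abs, inner_smul_right, inner_add_right, inner_smul_right,
      inner_smul_right, real_inner_comm V y, real_inner_comm V w]
    norm_num
    ring
  have hkinetic := mul_le_mul_of_nonneg_left (hF.sq_norm_le_energy x v t) (sq_nonneg t)
  have hidentity := hsquares (t • v t) (x t - p) (x t - a)
  rw [norm_smul, mul_pow, Real.norm_eq_abs t, sq_abs, inner_smul_right, inner_smul_right]
    at hidentity
  unfold anchoredLyapunov virial
  have hpos : 0 ≤ ‖t • v t + κ • (x t - p + (1 / 2 : ℝ) • (x t - a))‖ ^ 2 / 2 + κ ^ 2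
      * (‖x t - p - (1 / 2 : ℝ) • (x t - a)‖ ^ 2 / 2 + ‖x t - a‖ ^ 2 / 4) := by positivity
  linarith

lemma IsConvexPotential.tendsto_mul_inner_zero (hF : IsConvexPotential F m X)
    (hW : Tendsto (fun t => t ^ 2 * energy F m x v t) atTop (𝓝 0)) {M : ℝ}
    (hM : ∀ᶠ t in atTop, ‖x t - a‖ ≤ M) :
    Tendsto (fun t => t * ⟪x t - a, v t⟫) atTop (𝓝 0) := by
  have hsqrt : Tendsto (fun t => M * √(2 * (t ^ 2 * energy F m x v t))) atTop (𝓝 0) := by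
    simpa using (hW.const_mul 2).sqrt.const_mul M
  refine squeeze_zero_norm' ?_ hsqrt
  filter_upwards [hM, eventually_ge_atTop 0] with t ht ht₀
  have hspeed : t * ‖v t‖ ≤ √(2 * (t ^ 2 * energy F m x v t)) := by
    refine Real.le_sqrt_of_sq_le ?_
    linarith [mul_le_mul_of_nonneg_left (hF.sq_norm_le_energy x v t) (sq_nonneg t)]
  calc ‖t * ⟪x t - a, v t⟫‖ ≤ t * (‖x t - a‖ * ‖v t‖) := by
        rw [norm_mul, Real.norm_of_nonneg ht₀]
        gcongr
        exact norm_inner_le_norm _ _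
    _ ≤ t * (M * ‖v t‖) := by gcongr
    _ = M * (t * ‖v t‖) := by ring
    _ ≤ M * √(2 * (t ^ 2 * energy F m x v t)) := by
        have := (norm_nonneg _).trans ht
        gcongr

variable [CompleteSpace E]

/- Moving the point `z` to the projection of `y` costs a translate of the anchor `a` by
`2 (P y - z)`, which is still a minimizer when `a` lies in the relative interior of `X`. -/
lemma IsConvexPotential.mul_sub_le_inner_gradient_add (hF : IsConvexPotential F m X)
    (hP : IsConvexProjection X P) {r : ℝ} {y z : E}
    (ha : ∀ p ∈ X, ∀ q ∈ X, ∀ c : ℝ, ‖c • (p - q)‖ ≤ r → a + c • (p - q) ∈ X)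
    (hz : z ∈ X) (hyz : ‖y - z‖ ≤ r / 2) (hγ : γ * (F y - m) ≤ ⟪gradient F y, y - z⟫) :
    γ * (F y - m) ≤ ⟪gradient F y, y - P y⟫ + ⟪gradient F y, y - a⟫ / 2 := by
  have hshift : a + (2 : ℝ) • (P y - z) ∈ X := by
    refine ha _ (hP.mem y) _ hz _ ?_
    rw [norm_smul, Real.norm_ofNat]
    nth_rewrite 1 [← hP.apply_of_mem hz]
    linarith [hP.norm_sub_le y z]
  have hnonneg := (sub_nonneg.2 (hF.le y)).trans (hF.sub_le_inner_gradient hshift y)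
  have hsplit : y - z = y - P y + (1 / 2 : ℝ) • (y - a)
      - (1 / 2 : ℝ) • (y - (a + (2 : ℝ) • (P y - z))) := by module
  rw [hsplit, inner_sub_right, inner_add_right, real_inner_smul_right,
    real_inner_smul_right] at hγ
  linarith

lemma IsConvexPotential.eventually_nhdsSet_mul_sub_le (hF : IsConvexPotential F m X)
    (hP : IsConvexProjection X P) {r : ℝ} (hr : 0 < r)
    (ha : ∀ p ∈ X, ∀ q ∈ X, ∀ c : ℝ, ‖c • (p - q)‖ ≤ r → a + c • (p - q) ∈ X)
    (hγ : ∀ z ∈ X, ∀ᶠ y in 𝓝 z, γ * (F y - m) ≤ ⟪gradient F y, y - z⟫) :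
    ∀ᶠ y in 𝓝ˢ X, γ * (F y - m) ≤ ⟪gradient F y, y - P y⟫ + ⟪gradient F y, y - a⟫ / 2 := by
  refine eventually_nhdsSet_iff_forall.2 fun z hz => ?_
  filter_upwards [hγ z hz, Metric.closedBall_mem_nhds z (half_pos hr)] with y hy hyz
  exact hF.mul_sub_le_inner_gradient_add hP ha hz (dist_eq_norm y z ▸ hyz) hy

namespace InertialTrajectory

lemma hasDerivAt_anchoredLyapunov (h : InertialTrajectory F κ T x v) (hF : Differentiable ℝ F)
    (m : ℝ) (p a : E) (ht : T ≤ t) :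
    HasDerivAt (anchoredLyapunov F m κ x v p a)
      (t * (2 * (F (x t) - m) - κ / 2 * ‖v t‖ ^ 2
        - κ * (⟪gradient F (x t), x t - p⟫ + ⟪gradient F (x t), x t - a⟫ / 2))) t :=
  (((h.hasDerivAt_sq_mul_energy hF m ht).add ((h.hasDerivAt_virial p ht).const_mul κ)).add
    ((h.hasDerivAt_virial a ht).const_mul (κ / 2))).congr_deriv (by ring)

lemma continuousOn (h : InertialTrajectory F κ T x v) : ContinuousOn x (Ici T) :=
  fun _ ht => (h.hasDerivAt _ ht).continuousAt.continuousWithinAt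

lemma continuousOn_anchoredLyapunov_projection (h : InertialTrajectory F κ T x v)
    (hF : Differentiable ℝ F) (hP : IsConvexProjection X P) (m : ℝ) (a : E) :
    ContinuousOn (fun t => anchoredLyapunov F m κ x v (P (x t)) a t) (Ici T) := by
  have hx := h.continuousOn
  have hv : ContinuousOn v (Ici T) :=
    fun t ht => (h.hasDerivAt_velocity t ht).continuousAt.continuousWithinAt
  have hvirial {p : ℝ → E} (hp : ContinuousOn p (Ici T)) :
      ContinuousOn (fun t => virial κ x v (p t) t) (Ici T) :=
    (continuousOn_id.mul ((hx.sub hp).inner hv)).add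
      (continuousOn_const.mul ((hx.sub hp).norm.pow 2))
  exact (((continuousOn_id.pow 2).mul (h.continuousOn_energy hF m)).add (continuousOn_const.mul
    (hvirial (hP.continuous.comp_continuousOn hx)))).add
      (continuousOn_const.mul (hvirial continuousOn_const))

/- The projection moves in the direction of the position: `⟪P (x t) - P (x s), x t - x s⟫ ≥ 0`. -/
lemma eventually_virial_projection_le (h : InertialTrajectory F κ T x v) (hκ : 0 ≤ κ)
    (hP : IsConvexProjection X P) (hs : T ≤ s) {ρ : ℝ} (hρ : 0 < ρ) :
    ∀ᶠ t in 𝓝[>] s, virial κ x v (P (x t)) t ≤ virial κ x v (P (x s)) t + ρ * (t - s) := by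
  have hslope : Tendsto (slope x s) (𝓝[>] s) (𝓝 (v s)) :=
    (hasDerivAt_iff_tendsto_slope.1 (h.hasDerivAt s hs)).mono_left
      (nhdsWithin_mono s fun t ht => ne_of_gt ht)
  have hv : Tendsto v (𝓝[>] s) (𝓝 (v s)) :=
    (h.hasDerivAt_velocity s hs).continuousAt.tendsto.mono_left nhdsWithin_le_nhds
  have hid : Tendsto (fun t : ℝ => t) (𝓝[>] s) (𝓝 s) := nhdsWithin_le_nhds
  have hsmall : Tendsto (fun t => t * (‖slope x s t‖ * ‖v t - slope x s t‖)) (𝓝[>] s) (𝓝 0) := by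
    simpa using hid.mul (hslope.norm.mul (hv.sub hslope).norm)
  filter_upwards [hsmall.eventually_le_const hρ, self_mem_nhdsWithin] with t ht hst
  have hst₀ : 0 < t - s := sub_pos.2 hst
  have ht₀ : 0 ≤ t := (h.pos_of_le (hs.trans (le_of_lt hst))).le
  have hmove : x t - x s = (t - s) • slope x s t := by simp [slope_def_module, hst₀.ne']
  have hmonotone : 0 ≤ ⟪P (x t) - P (x s), slope x s t⟫ := by
    have := (sq_nonneg _).trans (hP.sq_norm_sub_le_inner (x t) (x s))
    rw [hmove, real_inner_smul_left, real_inner_comm] at this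
    exact nonneg_of_mul_nonneg_right this hst₀
  have hinner : -⟪P (x t) - P (x s), v t⟫
      ≤ (t - s) * (‖slope x s t‖ * ‖v t - slope x s t‖) :=
    calc -⟪P (x t) - P (x s), v t⟫
        ≤ -⟪P (x t) - P (x s), v t - slope x s t⟫ := by rw [inner_sub_right]; linarith
      _ ≤ ‖P (x t) - P (x s)‖ * ‖v t - slope x s t‖ :=
        (neg_le_abs _).trans (abs_real_inner_le_norm _ _)
      _ ≤ ‖x t - x s‖ * ‖v t - slope x s t‖ := by gcongr; exact hP.norm_sub_le _ _
      _ = (t - s) * (‖slope x s t‖ * ‖v t - slope x s t‖) := by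
        rw [hmove, norm_smul, Real.norm_of_nonneg hst₀.le, mul_assoc]
  have hnearest : κ * ‖x t - P (x t)‖ ^ 2 ≤ κ * ‖x t - P (x s)‖ ^ 2 := by
    gcongr
    exact hP.norm_sub_apply_le _ (hP.mem _)
  have hsplit : ⟪x t - P (x t), v t⟫ = ⟪x t - P (x s), v t⟫ - ⟪P (x t) - P (x s), v t⟫ := by
    rw [← inner_sub_left, sub_sub_sub_cancel_right]
  unfold virial
  rw [hsplit]
  linarith [mul_le_mul_of_nonneg_left hinner ht₀, mul_le_mul_of_nonneg_right ht hst₀.le]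

lemma antitoneOn_anchoredLyapunov_projection_add (h : InertialTrajectory F κ T x v)
    (hF : IsConvexPotential F m X) (hP : IsConvexProjection X P) (hκ : 0 ≤ κ)
    (hκγ : 2 ≤ κ * (γ - 2)) {Z : ℝ → ℝ}
    (hZ : ∀ t ≥ T, HasDerivAt Z (t * energy F m x v t) t)
    (hγ : ∀ t ≥ T, γ * (F (x t) - m)
      ≤ ⟪gradient F (x t), x t - P (x t)⟫ + ⟪gradient F (x t), x t - a⟫ / 2) :
    AntitoneOn (fun t => anchoredLyapunov F m κ x v (P (x t)) a t + κ * Z t) (Ici T) := by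
  have hZc : ContinuousOn Z (Ici T) := fun t ht => (hZ t ht).continuousAt.continuousWithinAt
  refine antitoneOn_Ici_of_eventually_le
    ((h.continuousOn_anchoredLyapunov_projection hF.differentiable hP m a).add
      (continuousOn_const.mul hZc)) fun s hs ρ hρ => ?_
  have hderiv := (h.hasDerivAt_anchoredLyapunov hF.differentiable m (P (x s)) a hs).add
    ((hZ s hs).const_mul κ)
  have hnonpos : s * (2 * (F (x s) - m) - κ / 2 * ‖v s‖ ^ 2
        - κ * (⟪gradient F (x s), x s - P (x s)⟫ + ⟪gradient F (x s), x s - a⟫ / 2))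
      + κ * (s * energy F m x v s) ≤ 0 := by
    have hκs := mul_le_mul_of_nonneg_left (hγ s hs) hκ
    have hgap := mul_nonneg (by linarith : 0 ≤ κ * (γ - 2) - 2 + κ) (sub_nonneg.2 (hF.le (x s)))
    have := mul_nonneg (h.pos_of_le hs).le (show 0 ≤ κ * (⟪gradient F (x s), x s - P (x s)⟫
      + ⟪gradient F (x s), x s - a⟫ / 2) - (2 + κ) * (F (x s) - m) by linarith)
    unfold energy
    linarith
  have hκρ : 0 < ρ / (2 * (κ + 1)) := by positivity
  filter_upwards [eventually_le_add_of_hasDerivAt_nonpos hderiv hnonpos (half_pos hρ),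
    h.eventually_virial_projection_le hκ hP hs hκρ, self_mem_nhdsWithin] with t ht₁ ht₂ hst
  have hvirial : κ * virial κ x v (P (x t)) t
      ≤ κ * virial κ x v (P (x s)) t + ρ / 2 * (t - s) := by
    have hst₀ : 0 < t - s := sub_pos.2 hst
    have hscale : κ * (ρ / (2 * (κ + 1))) ≤ ρ / 2 := by
      rw [mul_div_assoc', div_le_div_iff₀ (by positivity) two_pos]
      linarith
    linarith [mul_le_mul_of_nonneg_left ht₂ hκ, mul_le_mul_of_nonneg_right hscale hst₀.le]
  simp only [anchoredLyapunov, Pi.add_apply] at ht₁ ⊢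
  linarith

lemma exists_primitive_mul_energy (h : InertialTrajectory F κ T x v) (hF : Differentiable ℝ F)
    (m : ℝ) : ∃ Z : ℝ → ℝ, ∀ t ≥ T, HasDerivAt Z (t * energy F m x v t) t :=
  (exists_primitive_Ici (continuousOn_id.mul (h.continuousOn_energy hF m))).imp fun _ hZ => hZ.2

lemma exists_forall_primitive_mul_energy_le (h : InertialTrajectory F κ T x v)
    (hF : IsConvexPotential F m X) (hP : IsConvexProjection X P) (hκ : 0 < κ)
    (hκγ : 2 ≤ κ * (γ - 2)) {Z : ℝ → ℝ}
    (hZ : ∀ t ≥ T, HasDerivAt Z (t * energy F m x v t) t)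
    (hγ : ∀ t ≥ T, γ * (F (x t) - m)
      ≤ ⟪gradient F (x t), x t - P (x t)⟫ + ⟪gradient F (x t), x t - a⟫ / 2) :
    ∃ C, ∀ t ≥ T, Z t ≤ C := by
  have hanti := h.antitoneOn_anchoredLyapunov_projection_add hF hP hκ.le hκγ hZ hγ
  refine ⟨(anchoredLyapunov F m κ x v (P (x T)) a T + κ * Z T) / κ, fun t ht => ?_⟩
  rw [le_div_iff₀ hκ, mul_comm]
  exact (le_add_of_nonneg_left (hF.anchoredLyapunov_nonneg ..)).trans (hanti self_mem_Ici ht ht)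

lemma exists_tendsto_dist (h : InertialTrajectory F κ T x v) (hF : IsConvexPotential F m X)
    (hκ : 0 < κ) (ha : a ∈ X) {M C : ℝ} (hM : ∀ t ≥ T, ‖x t - a‖ ≤ M) {Z : ℝ → ℝ}
    (hZ : ∀ t ≥ T, HasDerivAt Z (t * energy F m x v t) t) (hZC : ∀ t ≥ T, Z t ≤ C)
    (hW : Tendsto (fun t => t ^ 2 * energy F m x v t) atTop (𝓝 0)) :
    ∃ d, Tendsto (fun t => dist (x t) a) atTop (𝓝 d) := by
  have hinner := hF.tendsto_mul_inner_zero hW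
    (eventually_ge_atTop T |>.mono hM)
  have hanti : AntitoneOn (fun t => virial κ x v a t - 2 * Z t) (Ici T) :=
    antitoneOn_Ici_of_hasDerivAt_nonpos
      (fun t ht => (h.hasDerivAt_virial a ht).sub ((hZ t ht).const_mul 2)) fun t ht => by
        have hf := hF.le (x t)
        have hgrad := hF.sub_le_inner_gradient ha (x t)
        have := mul_nonneg (h.pos_of_le ht).le
          (show 0 ≤ ⟪gradient F (x t), x t - a⟫ + 2 * (F (x t) - m) by linarith)
        unfold energy
        linarith
  obtain ⟨l, hl⟩ := exists_tendsto_of_antitoneOn_Ici (C := -1 - 2 * C) hanti <| by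
    filter_upwards [hinner.eventually_const_lt neg_one_lt_zero, eventually_ge_atTop T] with t ht₁ ht
    have := mul_nonneg hκ.le (sq_nonneg ‖x t - a‖)
    unfold virial
    linarith [hZC t ht]
  obtain ⟨lZ, hlZ⟩ := exists_tendsto_of_hasDerivAt_nonneg hZ
    (fun t ht => mul_nonneg (h.pos_of_le ht).le (hF.energy_nonneg x v t))
    (eventually_ge_atTop T |>.mono hZC)
  have hdist := ((hl.add (hlZ.const_mul 2)).sub hinner).div_const κ |>.sqrt
  refine ⟨_, hdist.congr fun t => ?_⟩
  simp only [virial, sub_add_cancel, add_sub_cancel_left, mul_div_cancel_left₀ _ hκ.ne',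
    Real.sqrt_sq (norm_nonneg _), dist_eq_norm]

end InertialTrajectory

end Convergence

section FiniteDimensional

variable {E : Type*} [NormedAddCommGroup E] [InnerProductSpace ℝ E] [FiniteDimensional ℝ E]
  {F : E → ℝ} {κ T m γ : ℝ} {x v : ℝ → E} {X : Set E}

namespace InertialTrajectory

/- The energy decreases, so the trajectory stays in a sublevel set of `F`. -/
lemma exists_isCompact_forall_mem (h : InertialTrajectory F κ T x v)
    (hF : Differentiable ℝ F) (hκ : 0 ≤ κ) (hcoer : Tendsto F (comap norm atTop) atTop) :
    ∃ K, IsCompact K ∧ ∀ t ≥ T, x t ∈ K := by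
  refine ⟨_, isCompact_setOf_le_of_tendsto_comap_norm hF.continuous hcoer (energy F 0 x v T),
    fun t ht => ?_⟩
  have hle := (sub_le_energy F 0 x v t).trans (h.antitoneOn_energy hF 0 hκ self_mem_Ici ht ht)
  rwa [sub_zero] at hle

theorem exists_tendsto_minimizer (h : InertialTrajectory F κ T x v)
    (hF : IsConvexPotential F m X) (hne : X.Nonempty) (hκ : 0 < κ) (hκγ : 2 ≤ κ * (γ - 2))
    (hcoer : Tendsto F (comap norm atTop) atTop)
    (hγ : ∀ z ∈ X, ∀ᶠ y in 𝓝 z, γ * (F y - m) ≤ ⟪gradient F y, y - z⟫) :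
    ∃ z ∈ X, Tendsto x atTop (𝓝 z) ∧
      Tendsto (fun t => t ^ 2 * energy F m x v t) atTop (𝓝 0) := by
  obtain ⟨K, hK, hxK⟩ := h.exists_isCompact_forall_mem hF.differentiable hκ.le hcoer
  obtain ⟨a, -, r, hr, ha⟩ := exists_forall_add_smul_sub_mem_of_convex hF.convex hne
  obtain ⟨P, hP⟩ := exists_isConvexProjection hne hF.isClosed.isComplete hF.convex
  have hxX := h.tendsto_nhdsSet hF hκ.le hne hK hxK
  obtain ⟨S, hS⟩ := eventually_atTop.1
    (hxX.eventually (hF.eventually_nhdsSet_mul_sub_le hP hr ha hγ))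
  have hTS := le_max_left T S
  have h' := h.mono hTS
  obtain ⟨Z, hZ⟩ := h'.exists_primitive_mul_energy hF.differentiable m
  obtain ⟨C, hC⟩ := h'.exists_forall_primitive_mul_energy_le hF hP hκ hκγ hZ
    fun t ht => hS t ((le_max_right T S).trans ht)
  have hW := tendsto_sq_mul_zero_of_primitive_mul_le h'.pos
    (h'.antitoneOn_energy hF.differentiable m hκ.le) (fun t _ => hF.energy_nonneg x v t) hZ hC
  obtain ⟨z, -, hz⟩ := hK.exists_mapClusterPt
    (show map x atTop ≤ 𝓟 K from tendsto_principal.2 (eventually_ge_atTop T |>.mono hxK))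
  have hzX : z ∈ X := by
    by_contra hzX
    have hdisj := disjoint_nhds_nhdsSet.2 (hF.isClosed.closure_eq.symm ▸ hzX)
    exact hz.neBot.ne (hdisj.mono_right hxX).eq_bot
  obtain ⟨M, hM⟩ := hK.exists_bound_of_continuousOn (f := fun y => y - z) (by fun_prop)
  obtain ⟨d, hd⟩ := h'.exists_tendsto_dist hF hκ hzX (fun t ht => hM _ (hxK t (hTS.trans ht)))
    hZ hC hW
  exact ⟨z, hzX, tendsto_of_mapClusterPt_of_tendsto_dist hz hd, hW⟩

end InertialTrajectory

end FiniteDimensional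

section Rate

lemma sq_le_mul_rpow_add {D s γ : ℝ} (hD : 0 ≤ D) (hs : 0 < s) (hγ : 2 < γ) :
    D ^ 2 ≤ s * D ^ γ + s ^ (-(2 / (γ - 2))) := by
  have hγ' : 0 < γ - 2 := sub_pos.2 hγ
  rcases le_total D (s ^ (-(1 / (γ - 2)))) with hle | hle
  · have hsq : (s ^ (-(1 / (γ - 2)))) ^ 2 = s ^ (-(2 / (γ - 2))) := by
      rw [← Real.rpow_mul_natCast hs.le]
      congr 1
      push_cast
      ring
    calc D ^ 2 ≤ (s ^ (-(1 / (γ - 2)))) ^ 2 := by gcongr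
      _ = s ^ (-(2 / (γ - 2))) := hsq
      _ ≤ s * D ^ γ + s ^ (-(2 / (γ - 2))) := le_add_of_nonneg_left (by positivity)
  · have hD₀ : 0 < D := (Real.rpow_pos_of_pos hs _).trans_le hle
    have hlarge : 1 ≤ s * D ^ (γ - 2) :=
      calc 1 = s * (s ^ (-(1 / (γ - 2)))) ^ (γ - 2) := by
            rw [← Real.rpow_mul hs.le, neg_mul, one_div_mul_cancel hγ'.ne', Real.rpow_neg_one,
              mul_inv_cancel₀ hs.ne']
        _ ≤ s * D ^ (γ - 2) := by gcongr
    calc D ^ 2 = 1 * D ^ 2 := (one_mul _).symm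
      _ ≤ s * D ^ (γ - 2) * D ^ 2 := by gcongr
      _ = s * D ^ γ := by
        rw [mul_assoc, ← Real.rpow_natCast D 2, ← Real.rpow_add hD₀]
        norm_num
      _ ≤ s * D ^ γ + s ^ (-(2 / (γ - 2))) := le_add_of_nonneg_right (by positivity)

lemma exists_forall_sq_le_of_mul_rpow_le {D f : ℝ → ℝ} {T K γ δ : ℝ} (hT : 0 < T) (hK : 0 < K)
    (hγ : 2 < γ) (hδ : 0 < δ) (hD : ∀ t ≥ T, 0 ≤ D t) (hf : ∀ t ≥ T, K * D t ^ γ ≤ f t) :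
    ∃ C, ∀ t ≥ T, D t ^ 2 ≤ δ * (t ^ 2 * f t) + C * t ^ (-(2 * (2 / (γ - 2)))) := by
  refine ⟨(δ * K) ^ (-(2 / (γ - 2))), fun t ht => ?_⟩
  have ht₀ : 0 < t := hT.trans_le ht
  have hpow : (δ * t ^ 2 * K) ^ (-(2 / (γ - 2)))
      = (δ * K) ^ (-(2 / (γ - 2))) * t ^ (-(2 * (2 / (γ - 2)))) := by
    rw [mul_right_comm, Real.mul_rpow (by positivity) (by positivity),
      ← Real.rpow_natCast_mul ht₀.le]
    norm_num
  calc D t ^ 2 ≤ δ * t ^ 2 * K * D t ^ γ + (δ * t ^ 2 * K) ^ (-(2 / (γ - 2))) :=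
        sq_le_mul_rpow_add (hD t ht) (by positivity) hγ
    _ = δ * t ^ 2 * (K * D t ^ γ) + (δ * K) ^ (-(2 / (γ - 2))) * t ^ (-(2 * (2 / (γ - 2)))) := by
        rw [hpow, mul_assoc]
    _ ≤ δ * t ^ 2 * f t + (δ * K) ^ (-(2 / (γ - 2))) * t ^ (-(2 * (2 / (γ - 2)))) := by
        gcongr
        exact hf t ht
    _ = _ := by rw [mul_assoc]

/- With `A = 3 * b * C₁`, the function `κ * h + A * Q ^ 2` satisfies a Gronwall inequality. -/
lemma exists_le_mul_rpow_of_coupled {h h' Q Q' D ω : ℝ → ℝ} {T b κ H C₁ : ℝ} (hT : 1 ≤ T)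
    (hb : 0 < b) (hbκ : b ≤ κ) (hH : 0 ≤ H) (hC₁ : 0 ≤ C₁)
    (hh : ∀ t ≥ T, HasDerivAt h (h' t) t) (hQ : ∀ t ≥ T, HasDerivAt Q (Q' t) t)
    (hQ₀ : ∀ t ≥ T, 0 ≤ Q t) (hω : ∀ t ≥ T, 0 ≤ ω t) (hQlim : Tendsto Q atTop (𝓝 0))
    (hh' : ∀ t ≥ T, ω t + κ * (t * h' t) ≤ H * t ^ (-(2 * κ)))
    (hQ' : ∀ t ≥ T, t * Q' t ≤ -(2 * κ) * Q t + 2 * ω t)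
    (hhD : ∀ t ≥ T, h t ≤ C₁ * (D t ^ 2 + Q t ^ 2))
    (hD : ∀ δ > 0, ∃ C, ∀ t ≥ T, D t ^ 2 ≤ δ * ω t + C * t ^ (-(2 * b))) :
    ∃ C, ∃ S ≥ T, ∀ t ≥ S, h t ≤ C * t ^ (-(2 * b)) := by
  have hκ : 0 < κ := hb.trans_le hbκ
  set A := 3 * b * C₁
  have hA₀ : 0 ≤ A := by positivity
  obtain ⟨C, hDC⟩ := hD (1 / (2 * (κ * A + 1))) (by positivity)
  obtain ⟨S, hS⟩ := eventually_atTop.1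
    ((hQlim.const_mul (4 * A)).eventually_le_const (by norm_num : 4 * A * 0 < 1 / 2))
  have hTS := le_max_left T S
  have hgronwall (t : ℝ) (ht : t ≥ max T S) : t * (κ * h' t + A * (2 * Q t * Q' t))
      ≤ -(3 * b) * (κ * h t + A * Q t ^ 2) + (H + κ * A * C) * t ^ (-(2 * b)) := by
    have htT := hTS.trans ht
    have hpow : H * t ^ (-(2 * κ)) ≤ H * t ^ (-(2 * b)) := by
      gcongr
      exact hT.trans htT
    have hQt := mul_le_mul_of_nonneg_left (hQ' t htT) (mul_nonneg hA₀ (hQ₀ t htT))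
    have hsmall := mul_le_mul_of_nonneg_right (hS t ((le_max_right T S).trans ht)) (hω t htT)
    have hhb := mul_le_mul_of_nonneg_left (hhD t htT) (by positivity : 0 ≤ 3 * b * κ)
    have hDA := mul_le_mul_of_nonneg_left (hDC t htT) (mul_nonneg hκ.le hA₀)
    have hδ : κ * A * (1 / (2 * (κ * A + 1)) * ω t) ≤ ω t / 2 := by
      rw [div_mul_eq_mul_div, one_mul, mul_div_assoc', div_le_iff₀ (by positivity)]
      linarith [hω t htT]
    have hbQ := mul_le_mul_of_nonneg_right hbκ (mul_nonneg hA₀ (sq_nonneg (Q t)))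
    linarith [hh' t htT]
  obtain ⟨C', hL⟩ := exists_le_mul_rpow_of_mul_deriv_le (hT.trans hTS)
    (by linarith : 2 * b < 3 * b) (fun t ht => ((hh t (hTS.trans ht)).const_mul κ).add
      (((hQ t (hTS.trans ht)).pow 2).const_mul A)) fun t ht => by
        simpa using hgronwall t ht
  refine ⟨C' / κ, max T S, hTS, fun t ht => ?_⟩
  rw [div_mul_eq_mul_div, le_div_iff₀ hκ, mul_comm]
  exact (le_add_of_nonneg_right (mul_nonneg hA₀ (sq_nonneg _))).trans (hL t ht)

lemma exists_neg_mul_deriv_le_two_mul {h h' : ℝ → ℝ} {s : ℝ} (hs : 0 < s)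
    (hh : ∀ t ≥ s, HasDerivAt h (h' t) t) (hh₀ : ∀ t ≥ s, 0 ≤ h t) :
    ∃ τ ∈ Ioo s (2 * s), -(τ * h' τ) ≤ 2 * h s := by
  have hs₂ : s < 2 * s := by linarith
  obtain ⟨τ, hτ, hslope⟩ := exists_hasDerivAt_eq_slope h h' hs₂
    (fun t ht => (hh t ht.1).continuousAt.continuousWithinAt) fun t ht => hh t ht.1.le
  have hτ₀ : 0 < τ := hs.trans hτ.1
  refine ⟨τ, hτ, ?_⟩
  calc -(τ * h' τ) = τ * (h s - h (2 * s)) / s := by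
        rw [hslope, two_mul, add_sub_cancel_right]
        ring
    _ ≤ τ * h s / s := by
        gcongr
        exact sub_le_self _ (hh₀ _ hs₂.le)
    _ ≤ 2 * s * h s / s := by
        gcongr
        · exact hh₀ s le_rfl
        · exact hτ.2.le
    _ = 2 * h s := by field_simp

/- The mean value theorem on `[s, 2 * s]` turns the differential inequality into a bound at one
intermediate time, which monotonicity of `w` transports to `2 * s`. -/
lemma exists_le_mul_rpow_of_antitoneOn {h h' w : ℝ → ℝ} {T κ b H C : ℝ} (hT : 1 ≤ T) (hb : 0 < b)
    (hbκ : b ≤ κ) (hH : 0 ≤ H) (hh : ∀ t ≥ T, HasDerivAt h (h' t) t)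
    (hh₀ : ∀ t ≥ T, 0 ≤ h t) (hw₀ : ∀ t ≥ T, 0 ≤ w t) (hw : AntitoneOn w (Ici T))
    (hh' : ∀ t ≥ T, t ^ 2 * w t + κ * (t * h' t) ≤ H * t ^ (-(2 * κ)))
    (hhC : ∀ t ≥ T, h t ≤ C * t ^ (-(2 * b))) :
    ∃ C', ∀ t ≥ 2 * T, w t ≤ C' * t ^ (-(2 + 2 * b)) := by
  refine ⟨(H + 2 * κ * C) * 2 ^ (2 + 2 * b), fun t ht => ?_⟩
  obtain ⟨s, rfl⟩ : ∃ s, t = 2 * s := ⟨t / 2, by ring⟩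
  have hs : T ≤ s := by linarith
  have hs₀ : 0 < s := by linarith
  obtain ⟨τ, hτ, hτh⟩ := exists_neg_mul_deriv_le_two_mul hs₀ (fun t ht => hh t (hs.trans ht))
    fun t ht => hh₀ t (hs.trans ht)
  have hτT : T ≤ τ := hs.trans hτ.1.le
  have hpow : τ ^ (-(2 * κ)) ≤ s ^ (-(2 * b)) :=
    calc τ ^ (-(2 * κ)) ≤ τ ^ (-(2 * b)) := by
          gcongr
          exact hT.trans hτT
      _ ≤ s ^ (-(2 * b)) := Real.rpow_le_rpow_of_nonpos hs₀ hτ.1.le (by linarith)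
  have hw₂ : s ^ 2 * w (2 * s) ≤ τ ^ 2 * w τ := by
    gcongr
    · exact hw₀ _ (by linarith)
    · exact hτ.1.le
    · exact hw hτT (by simp only [mem_Ici]; linarith) hτ.2.le
  have hbound : s ^ 2 * w (2 * s) ≤ (H + 2 * κ * C) * s ^ (-(2 * b)) := by
    have hHs := mul_le_mul_of_nonneg_left hpow hH
    have hτκ := mul_le_mul_of_nonneg_left (hτh.trans (mul_le_mul_of_nonneg_left (hhC s hs)
      zero_le_two)) (hb.le.trans hbκ)
    linarith [hh' τ hτT]
  calc w (2 * s) ≤ (H + 2 * κ * C) * s ^ (-(2 * b)) / s ^ 2 := by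
        rwa [le_div_iff₀' (by positivity)]
    _ = (H + 2 * κ * C) * 2 ^ (2 + 2 * b) * (2 * s) ^ (-(2 + 2 * b)) := by
        rw [Real.mul_rpow zero_le_two hs₀.le, Real.rpow_neg zero_le_two, neg_add_rev,
          Real.rpow_add hs₀, Real.rpow_neg hs₀.le 2, Real.rpow_two]
        field_simp

end Rate

section RateOfConvergence

variable {E : Type*} [NormedAddCommGroup E] [InnerProductSpace ℝ E]

/-- A uniform upper bound `Q` on the radial momenta `t * ⟪x t - y, v t⟫` about the points `y ∈ X`,
with margin `c * t ^ (-2κ)`, driven only by the kinetic energy: `t Q' = -2κ Q + t² ‖v‖²`. -/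
structure IsRadialMajorant (κ T c : ℝ) (x v : ℝ → E) (X : Set E) (Q : ℝ → ℝ) : Prop where
  hasDerivAt : ∀ t ≥ T, HasDerivAt Q ((t ^ 2 * ‖v t‖ ^ 2 - 2 * κ * Q t) / t) t
  nonneg : ∀ t ≥ T, 0 ≤ Q t
  le : ∀ t ≥ T, ∀ y ∈ X, t * ⟪x t - y, v t⟫ + c * t ^ (-(2 * κ)) ≤ Q t

variable {F : E → ℝ} {κ T m t c γ : ℝ} {x v : ℝ → E} {X : Set E} {Q : ℝ → ℝ} {a z : E}

lemma IsRadialMajorant.mono (hQ : IsRadialMajorant κ T c x v X Q) {T' : ℝ} (hT : T ≤ T') :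
    IsRadialMajorant κ T' c x v X Q where
  hasDerivAt t ht := hQ.hasDerivAt t (hT.trans ht)
  nonneg t ht := hQ.nonneg t (hT.trans ht)
  le t ht := hQ.le t (hT.trans ht)

lemma IsConvexPotential.mul_radialMajorant_deriv_le (hF : IsConvexPotential F m X) (ht : t ≠ 0) :
    t * ((t ^ 2 * ‖v t‖ ^ 2 - 2 * κ * Q t) / t)
      ≤ -(2 * κ) * Q t + 2 * (t ^ 2 * energy F m x v t) := by
  rw [mul_div_cancel₀ _ ht]
  linarith [mul_le_mul_of_nonneg_left (hF.sq_norm_le_energy x v t) (sq_nonneg t)]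

lemma IsRadialMajorant.tendsto_zero (hQ : IsRadialMajorant κ T c x v X Q) (hT : 0 < T)
    (hF : IsConvexPotential F m X) (hκ : 0 < κ)
    (hW : Tendsto (fun t => t ^ 2 * energy F m x v t) atTop (𝓝 0)) : Tendsto Q atTop (𝓝 0) :=
  tendsto_zero_of_mul_deriv_le (by positivity) hQ.hasDerivAt hQ.nonneg
    (fun t ht => hF.mul_radialMajorant_deriv_le (hT.trans_le ht).ne')
    (by simpa using hW.const_mul 2)

lemma exists_nonneg_forall_mul_inner_sub_le (hX : Bornology.IsBounded X) {s : ℝ} (hs : 0 ≤ s)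
    (p w : E) : ∃ C, 0 ≤ C ∧ ∀ y ∈ X, s * ⟪p - y, w⟫ ≤ C := by
  obtain ⟨R, hR, hXR⟩ := hX.exists_pos_norm_le
  refine ⟨s * ((‖p‖ + R) * ‖w‖), by positivity, fun y hy => ?_⟩
  gcongr
  refine (real_inner_le_norm _ _).trans ?_
  gcongr
  exact (norm_sub_le _ _).trans (by gcongr; exact hXR y hy)

variable [CompleteSpace E]

namespace InertialTrajectory

lemma exists_sq_mul_energy_add_mul_inner_le (h : InertialTrajectory F κ T x v)
    (hF : IsConvexPotential F m X) (hκ : 0 ≤ κ) (hκγ : 2 ≤ κ * (γ - 2))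
    (hγ : ∀ t ≥ T, γ * (F (x t) - m) ≤ ⟪gradient F (x t), x t - z⟫) :
    ∃ H, 0 ≤ H ∧ ∀ t ≥ T,
      t ^ 2 * energy F m x v t + κ * (t * ⟪x t - z, v t⟫) ≤ H * t ^ (-(2 * κ)) := by
  obtain ⟨c, hc⟩ := exists_le_rpow_of_mul_deriv_le (C := 0) h.pos (sub_one_lt (2 * κ))
    (fun t ht => (h.hasDerivAt_sq_mul_energy hF.differentiable m ht).add
      ((h.hasDerivAt_mul_inner z ht).const_mul κ)) fun t ht => by
    have hgrad := mul_le_mul_of_nonneg_left (hγ t ht) hκ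
    have hgap := mul_le_mul_of_nonneg_right hκγ (sub_nonneg.2 (hF.le (x t)))
    have := mul_nonneg (sq_nonneg t) (show 0 ≤ κ * ⟪gradient F (x t), x t - z⟫
      - (2 + 2 * κ) * (F (x t) - m) by linarith)
    simp only [energy, Pi.add_apply]
    linarith
  refine ⟨|c|, abs_nonneg c, fun t ht => ?_⟩
  have ht₀ := h.pos_of_le ht
  calc t ^ 2 * energy F m x v t + κ * (t * ⟪x t - z, v t⟫) ≤ c * t ^ (-(2 * κ)) := by
        simpa using hc t ht
    _ ≤ |c| * t ^ (-(2 * κ)) := by gcongr; exact le_abs_self c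

lemma hasDerivAt_rpow_mul_inner (h : InertialTrajectory F κ T x v) (a : E) (ht : T ≤ t) :
    HasDerivAt (fun s => s ^ (2 * κ) * (s * ⟪x s - a, v s⟫))
      (t ^ (2 * κ + 1) * (‖v t‖ ^ 2 - ⟪gradient F (x t), x t - a⟫)) t := by
  have ht₀ := h.pos_of_le ht
  refine ((Real.hasDerivAt_rpow_const (Or.inl ht₀.ne')).mul
    (h.hasDerivAt_mul_inner a ht)).congr_deriv ?_
  rw [Real.rpow_sub_one ht₀.ne', Real.rpow_add_one ht₀.ne']
  field_simp
  ring

lemma rpow_mul_inner_sub_le (h : InertialTrajectory F κ T x v) (hF : IsConvexPotential F m X)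
    (ha : a ∈ X) {Φ : ℝ → ℝ} (hΦT : Φ T = 0)
    (hΦ : ∀ t ≥ T, HasDerivAt Φ (t ^ (2 * κ + 1) * ‖v t‖ ^ 2) t) (ht : T ≤ t) :
    t ^ (2 * κ) * (t * ⟪x t - a, v t⟫) - Φ t ≤ T ^ (2 * κ) * (T * ⟪x T - a, v T⟫) := by
  have hanti := antitoneOn_Ici_of_hasDerivAt_nonpos
    (fun t ht => (h.hasDerivAt_rpow_mul_inner a ht).sub (hΦ t ht)) fun t ht => by
      have ht₀ := h.pos_of_le ht
      have hgrad := (sub_nonneg.2 (hF.le _)).trans (hF.sub_le_inner_gradient ha (x t))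
      rw [← mul_sub, sub_sub_cancel_left]
      exact mul_nonpos_of_nonneg_of_nonpos (by positivity) (neg_nonpos.2 hgrad)
  simpa [hΦT] using hanti self_mem_Ici ht ht

lemma exists_isRadialMajorant (h : InertialTrajectory F κ T x v) (hF : IsConvexPotential F m X)
    (hX : Bornology.IsBounded X) (hc : 0 ≤ c) : ∃ Q, IsRadialMajorant κ T c x v X Q := by
  obtain ⟨Φ, hΦT, hΦ⟩ := exists_primitive_Ici (φ := fun t => t ^ (2 * κ + 1) * ‖v t‖ ^ 2) (T := T)
    fun t ht => ((Real.continuousAt_rpow_const _ _ (Or.inl (h.pos_of_le ht).ne')).mul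
      ((h.hasDerivAt_velocity t ht).continuousAt.norm.pow 2)).continuousWithinAt
  have hΦ₀ (t : ℝ) (ht : t ≥ T) : 0 ≤ Φ t := by
    have := antitoneOn_Ici_of_hasDerivAt_nonpos (fun t ht => (hΦ t ht).neg) (fun t ht => by
      have := h.pos_of_le ht
      rw [neg_nonpos]
      positivity) self_mem_Ici ht ht
    simpa [hΦT] using this
  have hT := h.pos
  obtain ⟨C, hC₀, hC⟩ := exists_nonneg_forall_mul_inner_sub_le hX
    (by positivity : 0 ≤ T ^ (2 * κ) * T) (x T) (v T)
  refine ⟨fun t => t ^ (-(2 * κ)) * (c + C + Φ t), fun t ht => ?_, fun t ht => ?_,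
    fun t ht y hy => ?_⟩
  all_goals have ht₀ := h.pos_of_le ht
  · refine ((Real.hasDerivAt_rpow_const (Or.inl ht₀.ne')).mul
      ((hΦ t ht).const_add (c + C))).congr_deriv ?_
    rw [Real.rpow_sub_one ht₀.ne', Real.rpow_add_one ht₀.ne', Real.rpow_neg ht₀.le]
    field_simp
    ring
  · have := hΦ₀ t ht
    positivity
  · have hle : t ^ (2 * κ) * (t * ⟪x t - y, v t⟫) ≤ C + Φ t := by
      have := h.rpow_mul_inner_sub_le hF hy hΦT hΦ ht
      linarith [hC y hy]
    calc t * ⟪x t - y, v t⟫ + c * t ^ (-(2 * κ))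
        = t ^ (-(2 * κ)) * (c + t ^ (2 * κ) * (t * ⟪x t - y, v t⟫)) := by
          rw [Real.rpow_neg ht₀.le]
          field_simp
          ring
      _ ≤ t ^ (-(2 * κ)) * (c + (C + Φ t)) := by gcongr
      _ = t ^ (-(2 * κ)) * (c + C + Φ t) := by rw [add_assoc]

/- The difference of the two sides is nonincreasing and tends to `0`. -/
lemma inner_sub_le_sq_norm_add (h : InertialTrajectory F κ T x v) (hF : IsConvexPotential F m X)
    (hκ : 0 < κ) {H : ℝ} (hH : ∀ t ≥ T,
      t ^ 2 * energy F m x v t + κ * (t * ⟪x t - z, v t⟫) ≤ H * t ^ (-(2 * κ)))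
    (hQ : IsRadialMajorant κ T (H / κ) x v X Q) (hx : Tendsto x atTop (𝓝 z))
    (hQ₀ : Tendsto Q atTop (𝓝 0)) {y : E} (hy : y ∈ X) (ht : T ≤ t) :
    ⟪x t - z, y - z⟫ ≤ ‖x t - z‖ ^ 2 + Q t / (2 * κ) := by
  have hanti := antitoneOn_Ici_of_hasDerivAt_nonpos (fun t ht =>
    ((h.hasDerivAt_norm_sub_sq z ht).add ((hQ.hasDerivAt t ht).div_const (2 * κ))).sub
      (((h.hasDerivAt t ht).sub_const z).inner ℝ (hasDerivAt_const t (y - z)))) fun t ht => by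
    have ht₀ := h.pos_of_le ht
    have hradial : κ * (t * ⟪x t - y, v t⟫) + H * t ^ (-(2 * κ)) ≤ κ * Q t := by
      have := mul_le_mul_of_nonneg_left (hQ.le t ht y hy) hκ.le
      rwa [mul_add, ← mul_assoc κ (H / κ), mul_div_cancel₀ _ hκ.ne'] at this
    have hkinetic := mul_le_mul_of_nonneg_left (hF.sq_norm_le_energy x v t) (sq_nonneg t)
    have hsplit : ⟪x t - y, v t⟫ = ⟪x t - z, v t⟫ - ⟪v t, y - z⟫ := by
      rw [real_inner_comm (y - z), ← inner_sub_left, sub_sub_sub_cancel_right]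
    rw [hsplit] at hradial
    rw [inner_zero_right, zero_add]
    calc 2 * ⟪x t - z, v t⟫ + (t ^ 2 * ‖v t‖ ^ 2 - 2 * κ * Q t) / t / (2 * κ) - ⟪v t, y - z⟫
        = (2 * κ * (t * ⟪x t - z, v t⟫) + t ^ 2 * ‖v t‖ ^ 2 / 2 - κ * Q t
          - κ * (t * ⟪v t, y - z⟫)) / (κ * t) := by
          field_simp
          ring
      _ ≤ 0 := div_nonpos_of_nonpos_of_nonneg (by linarith [hH t ht]) (by positivity)
  have hlim : Tendsto (fun t => ‖x t - z‖ ^ 2 + Q t / (2 * κ) - ⟪x t - z, y - z⟫) atTop (𝓝 0) := by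
    have hxz := tendsto_sub_nhds_zero_iff.2 hx
    simpa using ((hxz.norm.pow 2).add (hQ₀.div_const (2 * κ))).sub (hxz.inner tendsto_const_nhds)
  refine sub_nonneg.1 (le_of_tendsto hlim ?_)
  filter_upwards [eventually_ge_atTop t] with s hs
  exact hanti ht (ht.trans hs) hs

end InertialTrajectory

end RateOfConvergence

section FiniteDimensionalRate

variable {E : Type*} [NormedAddCommGroup E] [InnerProductSpace ℝ E] [FiniteDimensional ℝ E]
  {F : E → ℝ} {κ T m γ γ₂ K : ℝ} {x v : ℝ → E} {X : Set E} {z : E}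

lemma IsConvexPotential.isBounded (hF : IsConvexPotential F m X)
    (hcoer : Tendsto F (comap norm atTop) atTop) : Bornology.IsBounded X :=
  (isCompact_setOf_le_of_tendsto_comap_norm hF.differentiable.continuous hcoer m).isBounded.subset
    fun y hy => ((hF.mem_iff y).1 hy).le

lemma exists_sq_norm_sub_le_infDist_sq_add_sq (hz : z ∈ X) {κ : ℝ} (hκ : 0 < κ) :
    ∃ C, 0 ≤ C ∧ ∃ r > 0, ∀ u : E, ∀ q : ℝ, ‖u - z‖ ≤ r →
      (∀ y ∈ X, ⟪u - z, y - z⟫ ≤ ‖u - z‖ ^ 2 + q / (2 * κ)) →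
      ‖u - z‖ ^ 2 / 2 ≤ C * (Metric.infDist u X ^ 2 + q ^ 2) := by
  obtain ⟨c, hc, hX⟩ := exists_pos_mul_norm_sub_le_infDist_add_inner hz
  refine ⟨4 / c ^ 2 * (1 + 1 / (2 * κ) ^ 2), by positivity, c / 2, by positivity,
    fun u q hu hq => ?_⟩
  obtain ⟨y, hy, hle⟩ := hX u
  have hquadratic := mul_le_mul_of_nonneg_right hu (norm_nonneg (u - z))
  have hlinear : ‖u - z‖ ≤ 2 / c * (Metric.infDist u X + q / (2 * κ)) := by
    rw [div_mul_eq_mul_div, le_div_iff₀ hc]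
    linarith [hq y hy]
  set D := Metric.infDist u X
  calc ‖u - z‖ ^ 2 / 2 ≤ (2 / c * (D + q / (2 * κ))) ^ 2 / 2 := by gcongr
    _ = 2 / c ^ 2 * (D + q / (2 * κ)) ^ 2 := by ring
    _ ≤ 2 / c ^ 2 * (2 * (D ^ 2 + (q / (2 * κ)) ^ 2)) := by gcongr; exact add_sq_le
    _ = 4 / c ^ 2 * (1 * D ^ 2 + 1 / (2 * κ) ^ 2 * q ^ 2) := by ring
    _ ≤ 4 / c ^ 2 * ((1 + 1 / (2 * κ) ^ 2) * D ^ 2 + (1 + 1 / (2 * κ) ^ 2) * q ^ 2) := by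
        gcongr
        · exact le_add_of_nonneg_right (by positivity)
        · exact le_add_of_nonneg_left zero_le_one
    _ = 4 / c ^ 2 * (1 + 1 / (2 * κ) ^ 2) * (D ^ 2 + q ^ 2) := by ring

namespace InertialTrajectory

lemma exists_half_sq_norm_sub_le_mul_rpow (h : InertialTrajectory F κ T x v)
    (hF : IsConvexPotential F m X) (hX : Bornology.IsBounded X) (hT : 1 ≤ T) (hκ : 0 < κ)
    (hγ : 2 < γ) (hκγ : 2 ≤ κ * (γ - 2)) (hz : z ∈ X) (hx : Tendsto x atTop (𝓝 z))
    (hW : Tendsto (fun t => t ^ 2 * energy F m x v t) atTop (𝓝 0)) {H : ℝ} (hH₀ : 0 ≤ H)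
    (hH : ∀ t ≥ T, t ^ 2 * energy F m x v t + κ * (t * ⟪x t - z, v t⟫) ≤ H * t ^ (-(2 * κ)))
    (hK : 0 < K) (hXK : ∀ t ≥ T, K * Metric.infDist (x t) X ^ γ ≤ F (x t) - m) :
    ∃ C, ∃ S ≥ T, ∀ t ≥ S, ‖x t - z‖ ^ 2 / 2 ≤ C * t ^ (-(2 * (2 / (γ - 2)))) := by
  obtain ⟨Q, hQ⟩ := h.exists_isRadialMajorant hF hX (by positivity : 0 ≤ H / κ)
  have hQ₀ := hQ.tendsto_zero h.pos hF hκ hW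
  obtain ⟨C, hC, r, hr, hnear⟩ := exists_sq_norm_sub_le_infDist_sq_add_sq hz hκ
  obtain ⟨S, hS⟩ := eventually_atTop.1
    ((tendsto_iff_norm_sub_tendsto_zero.1 hx).eventually_le_const hr)
  have hTS := le_max_left T S
  obtain ⟨C', S', hS', hle⟩ := exists_le_mul_rpow_of_coupled (b := 2 / (γ - 2))
    (D := fun t => Metric.infDist (x t) X) (hT.trans hTS) (div_pos two_pos (sub_pos.2 hγ))
    ((div_le_iff₀ (sub_pos.2 hγ)).2 hκγ) hH₀ hC
    (fun t ht => (h.hasDerivAt_norm_sub_sq z (hTS.trans ht)).div_const 2)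
    (hQ.mono hTS).hasDerivAt (hQ.mono hTS).nonneg
    (fun t _ => mul_nonneg (sq_nonneg t) (hF.energy_nonneg x v t)) hQ₀
    (fun t ht => by simpa using hH t (hTS.trans ht))
    (fun t ht => hF.mul_radialMajorant_deriv_le (h.pos_of_le (hTS.trans ht)).ne')
    (fun t ht => hnear _ _ (hS t ((le_max_right T S).trans ht)) fun y hy =>
      h.inner_sub_le_sq_norm_add hF hκ hH hQ hx hQ₀ hy (hTS.trans ht))
    fun δ hδ => exists_forall_sq_le_of_mul_rpow_le (h.pos_of_le hTS) hK hγ hδ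
      (fun t _ => Metric.infDist_nonneg) fun t ht =>
        (hXK t (hTS.trans ht)).trans (sub_le_energy F m x v t)
  exact ⟨C', S', hTS.trans hS', hle⟩

theorem exists_sub_le_mul_rpow (h : InertialTrajectory F κ T x v)
    (hF : IsConvexPotential F m X) (hX : Bornology.IsBounded X) (hT : 1 ≤ T) (hκ : 0 < κ)
    (hκγ : 2 ≤ κ * (γ - 2)) (hγγ₂ : γ ≤ γ₂) (hγ₂ : 2 < γ₂) (hz : z ∈ X)
    (hx : Tendsto x atTop (𝓝 z))
    (hW : Tendsto (fun t => t ^ 2 * energy F m x v t) atTop (𝓝 0)) (hK : 0 < K)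
    (hγ : ∀ t ≥ T, γ * (F (x t) - m) ≤ ⟪gradient F (x t), x t - z⟫)
    (hXK : ∀ t ≥ T, K * Metric.infDist (x t) X ^ γ₂ ≤ F (x t) - m) :
    ∃ C, ∃ S ≥ T, ∀ t ≥ S, F (x t) - m ≤ C * t ^ (-(2 * γ₂ / (γ₂ - 2))) := by
  have hγ₂' : 0 < γ₂ - 2 := sub_pos.2 hγ₂
  have hκγ₂ : 2 ≤ κ * (γ₂ - 2) := hκγ.trans (by gcongr)
  obtain ⟨H, hH₀, hH⟩ := h.exists_sq_mul_energy_add_mul_inner_le hF hκ.le hκγ hγ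
  obtain ⟨C, S, hTS, hC⟩ := h.exists_half_sq_norm_sub_le_mul_rpow hF hX hT hκ hγ₂ hκγ₂ hz hx hW
    hH₀ hH hK hXK
  obtain ⟨C', hC'⟩ := exists_le_mul_rpow_of_antitoneOn (hT.trans hTS)
    (div_pos two_pos hγ₂') ((div_le_iff₀ hγ₂').2 hκγ₂) hH₀
    (fun t ht => (h.hasDerivAt_norm_sub_sq z (hTS.trans ht)).div_const 2)
    (fun t _ => by positivity) (fun t _ => hF.energy_nonneg x v t)
    ((h.mono hTS).antitoneOn_energy hF.differentiable m hκ.le)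
    (fun t ht => by simpa using hH t (hTS.trans ht)) hC
  have hexponent : 2 * γ₂ / (γ₂ - 2) = 2 + 2 * (2 / (γ₂ - 2)) := by
    field_simp
    ring
  refine ⟨C', 2 * S, by linarith, fun t ht => ?_⟩
  rw [hexponent]
  exact (sub_le_energy F m x v t).trans (hC' t ht)

theorem exists_pos_sub_le_mul_rpow_of_coercive (h : InertialTrajectory F κ T x v)
    (hF : IsConvexPotential F m X) (hne : X.Nonempty) (hκ : 0 < κ) (hκγ : 2 ≤ κ * (γ - 2))
    (hγγ₂ : γ ≤ γ₂) (hγ₂ : 2 < γ₂) (hcoer : Tendsto F (comap norm atTop) atTop)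
    (hγ : ∀ z ∈ X, ∀ᶠ y in 𝓝 z, γ * (F y - m) ≤ ⟪gradient F y, y - z⟫)
    (hX : ∀ z ∈ X, ∃ K > 0, ∀ᶠ y in 𝓝 z, K * Metric.infDist y X ^ γ₂ ≤ F y - m) :
    ∃ C > 0, ∃ S ≥ T, ∀ t ≥ S, F (x t) - m ≤ C * t ^ (-(2 * γ₂ / (γ₂ - 2))) := by
  obtain ⟨z, hz, hx, hW⟩ := h.exists_tendsto_minimizer hF hne hκ hκγ hcoer hγ
  obtain ⟨K, hK, hXK⟩ := hX z hz
  obtain ⟨T', hT'⟩ := eventually_atTop.1 ((hx.eventually ((hγ z hz).and hXK)).and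
    ((eventually_ge_atTop T).and (eventually_ge_atTop 1)))
  obtain ⟨-, hTT', hT'₁⟩ := hT' T' le_rfl
  obtain ⟨C, S, hT'S, hC⟩ := (h.mono hTT').exists_sub_le_mul_rpow hF (hF.isBounded hcoer) hT'₁ hκ
    hκγ hγγ₂ hγ₂ hz hx hW hK (fun t ht => (hT' t ht).1.1) fun t ht => (hT' t ht).1.2
  refine ⟨|C| + 1, by positivity, S, hTT'.trans hT'S, fun t ht => (hC t ht).trans ?_⟩
  have ht₀ := h.pos_of_le (hTT'.trans (hT'S.trans ht))
  gcongr
  linarith [le_abs_self C]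

end InertialTrajectory

end FiniteDimensionalRate

end InertialDynamics

open InertialDynamics in
theorem stmt_6_general
    {E : Type*} [NormedAddCommGroup E] [InnerProductSpace ℝ E] [FiniteDimensional ℝ E]
    (F : E → ℝ) (Fstar : ℝ)
    (Xstar : Set E)
    (hXstar : Xstar = {z | ∀ y, F z ≤ F y})
    (hne : Xstar.Nonempty)
    (hFstar : ∀ z ∈ Xstar, F z = Fstar)
    (hconv : ConvexOn ℝ Set.univ F)
    (hdiff : Differentiable ℝ F)
    (α t₀ γ₁ γ₂ : ℝ) (ht₀ : 0 < t₀) (hγ₁ : 2 < γ₁) (hγ₁₂ : γ₁ ≤ γ₂)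
    (hαge : (γ₁ + 2) / (γ₁ - 2) ≤ α)
    (x x' x'' : ℝ → E)
    (hx : ∀ t ∈ Set.Ici t₀, HasDerivAt x (x' t) t)
    (hx'd : ∀ t ∈ Set.Ici t₀, HasDerivAt x' (x'' t) t)
    (hode : ∀ t ∈ Set.Ici t₀, x'' t + (α / t) • x' t + gradient F (x t) = 0)
    (hcoer : Filter.Tendsto F (Filter.comap norm Filter.atTop) Filter.atTop)
    (hH1 : ∀ z ∈ Xstar, ∃ η > 0, ∀ y : E,
      ‖y - z‖ < η → F y - Fstar ≤ (1 / γ₁) * ⟪gradient F y, y - z⟫)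
    (hH2 : ∀ z ∈ Xstar, ∃ K > 0, ∃ ε > 0, ∀ y : E,
      ‖y - z‖ < ε → K * Metric.infDist y Xstar ^ γ₂ ≤ F y - Fstar) :
    ∃ C > 0, ∃ t₁ ≥ t₀, ∀ t ≥ t₁,
      F (x t) - Fstar ≤ C * t ^ (-(2 * γ₂ / (γ₂ - 2))) := by
  have hγ₁' : 0 < γ₁ - 2 := sub_pos.2 hγ₁
  have hκγ : 2 ≤ (α - 1) / 2 * (γ₁ - 2) := by
    linarith [(div_le_iff₀ hγ₁').1 hαge]
  have hκ : 0 < (α - 1) / 2 := pos_of_mul_pos_left (two_pos.trans_le hκγ) hγ₁'.le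
  have hF : IsConvexPotential F Fstar Xstar := .of_forall_le hXstar hne hFstar hconv hdiff
  have h : InertialTrajectory F ((α - 1) / 2) t₀ x x' := .of_ode ht₀ hx hx'd hode
  refine h.exists_pos_sub_le_mul_rpow_of_coercive hF hne hκ hκγ hγ₁₂ (hγ₁.trans_le hγ₁₂) hcoer
    (fun z hz => ?_) fun z hz => ?_
  · obtain ⟨η, hη, hH1z⟩ := hH1 z hz
    filter_upwards [eventually_norm_sub_lt z hη] with y hy
    have hγ₁₀ : 0 < γ₁ := two_pos.trans hγ₁
    simpa [hγ₁₀.ne'] using mul_le_mul_of_nonneg_left (hH1z y hy) hγ₁₀.le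
  · obtain ⟨K, hK, ε, hε, hH2z⟩ := hH2 z hz
    exact ⟨K, hK, (eventually_norm_sub_lt z hε).mono hH2z⟩

theorem stmt_6
    {n : ℕ} (hn : 1 ≤ n)
    (F : EuclideanSpace ℝ (Fin n) → ℝ) (Fstar : ℝ)
    (Xstar : Set (EuclideanSpace ℝ (Fin n)))
    (hXstar : Xstar = {z | ∀ y, F z ≤ F y})
    (hne : Xstar.Nonempty)
    (hFstar : ∀ z ∈ Xstar, F z = Fstar)
    (hconv : ConvexOn ℝ Set.univ F)
    (hdiff : Differentiable ℝ F)
    (α t₀ γ₁ γ₂ : ℝ) (ht₀ : 0 < t₀) (hγ₁ : 2 < γ₁) (hγ₁₂ : γ₁ ≤ γ₂)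
    (hαge : (γ₁ + 2) / (γ₁ - 2) ≤ α)
    (x x' x'' : ℝ → EuclideanSpace ℝ (Fin n))
    (hx : ∀ t ∈ Set.Ici t₀, HasDerivAt x (x' t) t)
    (hx'd : ∀ t ∈ Set.Ici t₀, HasDerivAt x' (x'' t) t)
    (hx''c : ContinuousOn x'' (Set.Ici t₀))
    (hode : ∀ t ∈ Set.Ici t₀, x'' t + (α / t) • x' t + gradient F (x t) = 0)
    (hcoer : Filter.Tendsto F (Filter.comap norm Filter.atTop) Filter.atTop)
    (hH1 : ∀ z ∈ Xstar, ∃ η > 0, ∀ y : EuclideanSpace ℝ (Fin n),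
      ‖y - z‖ < η → F y - Fstar ≤ (1 / γ₁) * ⟪gradient F y, y - z⟫)
    (hH2 : ∀ z ∈ Xstar, ∃ K > 0, ∃ ε > 0, ∀ y : EuclideanSpace ℝ (Fin n),
      ‖y - z‖ < ε → K * Metric.infDist y Xstar ^ (γ₂ : ℝ) ≤ F y - Fstar)
    :
    ∃ C > 0, ∃ t₁ ≥ t₀, ∀ t ≥ t₁,
      F (x t) - Fstar ≤ C * t ^ (-(2 * γ₂ / (γ₂ - 2))) :=
  stmt_6_general F Fstar Xstar hXstar hne hFstar hconv hdiff α t₀ γ₁ γ₂ ht₀ hγ₁ hγ₁₂ hαge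
    x x' x'' hx hx'd hode hcoer hH1 hH2
end
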